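/- For every real number λ and every ε > 0 there exists an integer A such that for every odd integer a ≥ A, the dimension over ℚ of the ℚ-vector subspace of ℝ spanned by the numbers 1, λ, ζ(3)+6λζ(5), ζ(5)+15λζ(7), …, ζ(a)+(a(a+1)/2)·λ·ζ(a+2) — that is, by 1, λ and the numbers ζ(i)+(i(i+1)/2)·λ·ζ(i+2) for all odd i with 3 ≤ i ≤ a — is at least (1−ε)·(log a)/(1+log 2). -/

import Mathlib

/-
Let `R` be the very-well-poised rational function `wellPoised a r n`, with poles of order `a` at
`0, -1, ..., -n`. For `a` odd and `n` even, `R (-n - t) = -R t`, so that the partial fraction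
expansion turns `∑ 2 R k + λ R'' k` into a linear form in `1`, `λ` and the numbers
`ζ(i) + i(i+1)/2 · λ · ζ(i+2)` with `i` odd only. Multiplying by `lcm(1, ..., n) ^ (a + 2)` makes
its coefficients integers, of size controlled by the prime number theorem in the form
`lcm(1, ..., n) = exp (n + o(n))`.

The forms do not vanish because `R'' / R = (R' / R)² + (R' / R)'`, and the terms `R k`, all
nonnegative, concentrate around their maximum, where `R' / R` is small: the contribution of `R''`
is negligible against that of `R`. Nesterenko's criterion then bounds the dimension below by the
ratio of the decay rate of the forms to the growth rate of their coefficients, which is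
`(1 - o(1)) log a / (1 + log 2)` for `r` close to `a ^ (1 - δ)`.
-/

/-- The Riemann zeta value ζ(s) = Σ_{m ≥ 1} m^{-s}, as a real number. -/
noncomputable def zeta (s : ℕ) : ℝ := ∑' m : ℕ, 1 / ((m : ℝ) + 1) ^ s

section FejerKernel

open MeasureTheory Filter Topology Set

/-- The Fejér kernel `4 sin² (v / 2) / v²` on the line, not normalised to have integral one. It is
the Fourier transform of the triangle function and serves as the mollifier in the Tauberian
theorem. Division by zero gives it the value `0` at the origin, which no integral sees. -/
noncomputable def fejerKernel (v : ℝ) : ℝ := 2 * (1 - Real.cos v) / v ^ 2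

lemma fejerKernel_nonneg (v : ℝ) : 0 ≤ fejerKernel v :=
  div_nonneg (by linarith [Real.cos_le_one v]) (sq_nonneg v)

lemma integrable_fejerKernel : Integrable fejerKernel := by
  refine Integrable.mono' (integrable_inv_one_add_sq.const_mul 8)
    (Measurable.aestronglyMeasurable (by unfold fejerKernel; fun_prop))
    (Eventually.of_forall fun v => ?_)
  rw [Real.norm_of_nonneg (fejerKernel_nonneg v), fejerKernel]
  rcases eq_or_ne v 0 with rfl | hv
  · simp
  rw [div_le_iff₀ (by positivity), ← div_eq_mul_inv, div_mul_eq_mul_div,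
    le_div_iff₀ (by positivity)]
  nlinarith [Real.one_sub_sq_div_two_le_cos (x := v), Real.neg_one_le_cos v, Real.cos_le_one v]

lemma integral_fejerKernel_pos : 0 < ∫ v, fejerKernel v := by
  have hpos : 0 < ∫ v in (1 : ℝ)..2, fejerKernel v := by
    refine intervalIntegral.intervalIntegral_pos_of_pos_on
      integrable_fejerKernel.intervalIntegrable (fun v hv => ?_) (by norm_num)
    have hcos : Real.cos v < Real.cos 0 := Real.cos_lt_cos_of_nonneg_of_le_pi le_rfl
      (by linarith [hv.2, Real.pi_gt_three]) (by linarith [hv.1])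
    rw [Real.cos_zero] at hcos
    exact div_pos (by linarith) (pow_pos (by linarith [hv.1]) 2)
  refine hpos.trans_le ?_
  rw [intervalIntegral.integral_of_le (by norm_num)]
  exact setIntegral_le_integral integrable_fejerKernel (Eventually.of_forall fejerKernel_nonneg)

lemma integral_one_sub_div_mul_cos {T v : ℝ} (hT : T ≠ 0) (hv : v ≠ 0) :
    ∫ t in (0 : ℝ)..T, (1 - t / T) * (2 * Real.cos (t * v)) = T * fejerKernel (T * v) := by
  have hderiv : ∀ t ∈ uIcc 0 T, HasDerivAt (fun t : ℝ => 2 * ((1 - t / T) * Real.sin (t * v) / v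
      - Real.cos (t * v) / (T * v ^ 2))) ((1 - t / T) * (2 * Real.cos (t * v))) t := by
    intro t _
    have hmul : HasDerivAt (fun t : ℝ => t * v) v t := by simpa using (hasDerivAt_id t).mul_const v
    have hlin : HasDerivAt (fun t : ℝ => 1 - t / T) (-(1 / T)) t := by
      simpa using ((hasDerivAt_id t).div_const T).const_sub 1
    convert! (((hlin.mul hmul.sin).div_const v).sub
      (hmul.cos.div_const (T * v ^ 2))).const_mul 2 using 1
    field_simp
    ring
  rw [intervalIntegral.integral_eq_sub_of_hasDerivAt hderiv
    (Continuous.intervalIntegrable (by fun_prop) _ _), fejerKernel]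
  simp only [ne_eq, hT, not_false_eq_true, div_self, sub_self, zero_mul, zero_div, Real.sin_zero,
    mul_zero, Real.cos_zero, sub_zero]
  field_simp
  ring

lemma integral_triangle_mul_exp {T v : ℝ} (hT : 0 < T) (hv : v ≠ 0) :
    ∫ t in (-T)..T, ((1 - |t| / T : ℝ) : ℂ) * Complex.exp (t * v * Complex.I)
      = ((T * fejerKernel (T * v) : ℝ) : ℂ) := by
  set f : ℝ → ℂ := fun t => ((1 - |t| / T : ℝ) : ℂ) * Complex.exp (t * v * Complex.I) with hf
  have hcont : Continuous f := by fun_prop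
  have hfold : ∀ t ∈ uIcc 0 T, f (-t) + f t = ((1 - t / T) * (2 * Real.cos (t * v)) : ℝ) := by
    intro t ht
    rw [uIcc_of_le hT.le] at ht
    simp only [hf, abs_neg, abs_of_nonneg ht.1]
    push_cast
    rw [Complex.two_cos, show -(t : ℂ) * v * Complex.I = -(t * v) * Complex.I by ring]
    ring
  calc ∫ t in (-T)..T, f t = (∫ t in (-T)..0, f t) + ∫ t in (0 : ℝ)..T, f t :=
        (intervalIntegral.integral_add_adjacent_intervals (hcont.intervalIntegrable _ _)
          (hcont.intervalIntegrable _ _)).symm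
    _ = (∫ t in (0 : ℝ)..T, f (-t)) + ∫ t in (0 : ℝ)..T, f t := by
        rw [intervalIntegral.integral_comp_neg f, neg_zero]
    _ = ∫ t in (0 : ℝ)..T, (((1 - t / T) * (2 * Real.cos (t * v)) : ℝ) : ℂ) := by
        have hneg : Continuous fun t => f (-t) := hcont.comp continuous_neg
        rw [← intervalIntegral.integral_add (hneg.intervalIntegrable _ _)
          (hcont.intervalIntegrable _ _)]
        exact intervalIntegral.integral_congr hfold
    _ = _ := by
        rw [intervalIntegral.integral_ofReal, integral_one_sub_div_mul_cos hT.ne' hv]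

variable {T : ℝ}

lemma integrable_mul_fejerKernel_comp (hT : T ≠ 0) (y : ℝ) :
    Integrable fun u => T * fejerKernel (T * (y - u)) :=
  ((integrable_fejerKernel.comp_mul_left' hT).comp_sub_left y).const_mul T

lemma integral_mul_fejerKernel_comp (hT : 0 < T) (y : ℝ) :
    ∫ u, T * fejerKernel (T * (y - u)) = ∫ v, fejerKernel v := by
  rw [integral_const_mul, integral_sub_left_eq_self (fun u => fejerKernel (T * u)) volume y,
    Measure.integral_comp_mul_left, abs_of_pos (by positivity), smul_eq_mul,
    mul_inv_cancel_left₀ hT.ne']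

lemma setIntegral_mul_fejerKernel_comp (hT : T ≠ 0) (y : ℝ) {δ : ℝ} (hδ : 0 ≤ δ) :
    ∫ u in Ioc (y - δ) (y + δ), T * fejerKernel (T * (y - u))
      = ∫ v in (-(T * δ))..(T * δ), fejerKernel v := by
  rw [← intervalIntegral.integral_of_le (by linarith), intervalIntegral.integral_const_mul,
    intervalIntegral.integral_comp_sub_left (fun u => fejerKernel (T * u)) y,
    intervalIntegral.integral_comp_mul_left fejerKernel hT, smul_eq_mul, mul_inv_cancel_left₀ hT]
  congr 1 <;> ring

end FejerKernel

section WienerIkehara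

open MeasureTheory Filter Topology Set

/-- The class of functions to which the Tauberian theorem applies: `0 ≤ B ≤ C`, and `B u * exp u`
is monotone, so that `B` cannot drop by more than a factor `exp (-δ)` over a length `δ`. The main
example is `B u = ψ (exp u) * exp (-u)`. -/
structure IsSlowlyDecreasing (B : ℝ → ℝ) (C : ℝ) : Prop where
  nonneg : ∀ u, 0 ≤ B u
  le : ∀ u, B u ≤ C
  monotone_mul_exp : Monotone fun u => B u * Real.exp u

namespace IsSlowlyDecreasing

variable {B : ℝ → ℝ} {C : ℝ}

lemma measurable (hB : IsSlowlyDecreasing B C) : Measurable B := by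
  have hB_eq : B = fun u => B u * Real.exp u * Real.exp (-u) := by
    simp [mul_assoc, ← Real.exp_add]
  rw [hB_eq]
  exact hB.monotone_mul_exp.measurable.mul (by fun_prop)

lemma mul_exp_sub_le (hB : IsSlowlyDecreasing B C) {u v : ℝ} (h : u ≤ v) :
    B u * Real.exp (u - v) ≤ B v := by
  rw [Real.exp_sub, ← mul_div_assoc, div_le_iff₀ (Real.exp_pos v)]
  exact hB.monotone_mul_exp h

lemma norm_sub_one_le (hB : IsSlowlyDecreasing B C) (u : ℝ) : ‖B u - 1‖ ≤ C + 1 := by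
  rw [Real.norm_eq_abs, abs_le]
  constructor <;> linarith [hB.nonneg u, hB.le u]

lemma integrableOn_sub_one_mul_exp (hB : IsSlowlyDecreasing B C) {z : ℂ} (hz : 0 < z.re) :
    IntegrableOn (fun u : ℝ => ((B u - 1 : ℝ) : ℂ) * Complex.exp (-z * u)) (Ioi 0) := by
  refine (integrableOn_exp_mul_complex_Ioi (by simpa using hz) 0).bdd_mul (c := C + 1)
    (Complex.measurable_ofReal.comp (hB.measurable.sub_const 1)).aestronglyMeasurable
    (Eventually.of_forall fun u => ?_)
  rw [Complex.norm_real]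
  exact hB.norm_sub_one_le u

variable {G : ℂ → ℂ} (hG : ∀ z : ℂ, 0 < z.re →
  ∫ u in Ioi (0 : ℝ), ((B u - 1 : ℝ) : ℂ) * Complex.exp (-z * u) = G z)
include hG

-- The triangle is the Fourier transform of the kernel, so this is Fubini's theorem.
lemma integral_triangle_mul_exp_mul_laplace (hB : IsSlowlyDecreasing B C) {T η : ℝ} (hT : 0 < T)
    (hη : 0 < η) (y : ℝ) :
    ∫ t in (-T)..T, ((1 - |t| / T : ℝ) : ℂ) * Complex.exp (t * y * Complex.I)
        * G (η + t * Complex.I)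
      = ((∫ u in Ioi (0 : ℝ), (B u - 1) * Real.exp (-η * u) *
          (T * fejerKernel (T * (y - u))) : ℝ) : ℂ) := by
  have hinner : ∀ t : ℝ, ((1 - |t| / T : ℝ) : ℂ) * Complex.exp (t * y * Complex.I)
        * G (η + t * Complex.I) = ∫ u in Ioi (0 : ℝ),
        (((1 - |t| / T : ℝ) : ℂ) * Complex.exp (t * (y - u) * Complex.I)) *
          (((B u - 1) * Real.exp (-η * u) : ℝ) : ℂ) := by
    intro t
    rw [← hG _ (by simpa using hη), ← integral_const_mul]
    refine integral_congr_ae (Eventually.of_forall fun u => ?_)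
    simp only
    push_cast
    rw [show (t : ℂ) * (y - u) * Complex.I = t * y * Complex.I + (-(t * Complex.I) * u) by ring,
      show (-((η : ℂ) + t * Complex.I) * u) = -η * u + (-(t * Complex.I) * u) by ring,
      Complex.exp_add, Complex.exp_add]
    ring
  simp_rw [hinner]
  rw [intervalIntegral_integral_swap, ← integral_complex_ofReal]
  · have hne : ∀ᵐ u ∂volume.restrict (Ioi (0 : ℝ)), u ≠ y :=
      ae_restrict_of_ae (by simp [ae_iff, measure_singleton])
    refine integral_congr_ae ?_
    filter_upwards [hne] with u hu
    have hfourier := integral_triangle_mul_exp hT (sub_ne_zero.mpr hu.symm)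
    rw [intervalIntegral.integral_mul_const]
    push_cast at hfourier ⊢
    rw [hfourier]
    ring
  · have hB_int : Integrable (fun u : ℝ => (((B u - 1) * Real.exp (-η * u) : ℝ) : ℂ))
        (volume.restrict (Ioi 0)) :=
      (hB.integrableOn_sub_one_mul_exp (z := η) (by simpa using hη)).congr
        (Eventually.of_forall fun u => by push_cast; rfl)
    have htri : Continuous fun t : ℝ => ((1 - |t| / T : ℝ) : ℂ) := by fun_prop
    refine (((intervalIntegrable_iff.mp (htri.intervalIntegrable (-T) T)).mul_prod hB_int).bdd_mul
      (c := 1) (f := fun z : ℝ × ℝ => Complex.exp (z.1 * (y - z.2) * Complex.I))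
      (Continuous.aestronglyMeasurable (by fun_prop)) (Eventually.of_forall fun z => ?_)).congr
      (Eventually.of_forall fun z => ?_)
    · exact_mod_cast (Complex.norm_exp_ofReal_mul_I (z.1 * (y - z.2))).le
    · simp only [Function.uncurry]
      ring

omit hG in
lemma mul_integral_fejerKernel_le_setIntegral (hB : IsSlowlyDecreasing B C) {T η δ y : ℝ}
    (hT : 0 < T) (hη : 0 ≤ η) (hδ : 0 ≤ δ) (hy : δ ≤ y)
    (hintegrable : IntegrableOn
      (fun u => B u * (Real.exp (-η * u) * (T * fejerKernel (T * (y - u))))) (Ioi 0)) :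
    B (y - δ) * Real.exp (-2 * δ) * Real.exp (-η * (y + δ)) *
        (∫ v in (-(T * δ))..(T * δ), fejerKernel v)
      ≤ ∫ u in Ioi (0 : ℝ), B u * (Real.exp (-η * u) * (T * fejerKernel (T * (y - u)))) := by
  have hkernel : ∀ u, 0 ≤ T * fejerKernel (T * (y - u)) := fun u =>
    mul_nonneg hT.le (fejerKernel_nonneg _)
  have hsub : Ioc (y - δ) (y + δ) ⊆ Ioi (0 : ℝ) := fun u hu =>
    (sub_nonneg.mpr hy).trans_lt hu.1
  rw [← setIntegral_mul_fejerKernel_comp hT.ne' y hδ, ← integral_const_mul]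
  calc _ ≤ ∫ u in Ioc (y - δ) (y + δ),
          B u * (Real.exp (-η * u) * (T * fejerKernel (T * (y - u)))) := by
        refine setIntegral_mono_on
          ((integrable_mul_fejerKernel_comp hT.ne' y).integrableOn.const_mul _)
          (hintegrable.mono_set hsub) measurableSet_Ioc fun u hu => ?_
        have hdrop : B (y - δ) * Real.exp (-2 * δ) ≤ B u := by
          refine le_trans ?_ (hB.mul_exp_sub_le hu.1.le)
          gcongr
          exacts [hB.nonneg _, by linarith [hu.2]]
        have hexp : Real.exp (-η * (y + δ)) ≤ Real.exp (-η * u) := by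
          rw [Real.exp_le_exp]
          nlinarith [hu.2]
        rw [← mul_assoc (B u)]
        exact mul_le_mul_of_nonneg_right
          (mul_le_mul hdrop hexp (Real.exp_pos _).le (hB.nonneg _)) (hkernel u)
    _ ≤ _ := setIntegral_mono_set hintegrable (Eventually.of_forall fun u =>
        mul_nonneg (hB.nonneg u) (mul_nonneg (Real.exp_pos _).le (hkernel u))) hsub.eventuallyLE

lemma mul_integral_fejerKernel_le_of_pos (hB : IsSlowlyDecreasing B C) {T η δ y : ℝ}
    (hT : 0 < T) (hη : 0 < η) (hδ : 0 ≤ δ) (hy : δ ≤ y) :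
    B (y - δ) * Real.exp (-2 * δ) * Real.exp (-η * (y + δ)) *
        (∫ v in (-(T * δ))..(T * δ), fejerKernel v)
      ≤ (∫ v, fejerKernel v) + ‖∫ t in (-T)..T, ((1 - |t| / T : ℝ) : ℂ) *
        Complex.exp (t * y * Complex.I) * G (η + t * Complex.I)‖ := by
  set k : ℝ → ℝ := fun u => T * fejerKernel (T * (y - u))
  have hk_nonneg : ∀ u, 0 ≤ k u := fun u => mul_nonneg hT.le (fejerKernel_nonneg _)
  have hk_int : Integrable k := integrable_mul_fejerKernel_comp hT.ne' y
  have hexp : ∀ u ∈ Ioi (0 : ℝ), Real.exp (-η * u) ≤ 1 := fun u hu => by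
    rw [Real.exp_le_one_iff, neg_mul, neg_nonpos]
    exact mul_nonneg hη.le (le_of_lt hu)
  have hintegrable_exp : IntegrableOn (fun u => Real.exp (-η * u) * k u) (Ioi 0) := by
    refine (hk_int.integrableOn (s := Ioi 0)).bdd_mul (c := 1)
      (Continuous.aestronglyMeasurable (by fun_prop))
      ((ae_restrict_iff' measurableSet_Ioi).mpr (Eventually.of_forall fun u hu => ?_))
    rw [Real.norm_of_nonneg (Real.exp_pos _).le]
    exact hexp u hu
  have hintegrable : IntegrableOn (fun u => B u * (Real.exp (-η * u) * k u)) (Ioi 0) := by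
    refine hintegrable_exp.bdd_mul (c := C) hB.measurable.aestronglyMeasurable
      (Eventually.of_forall fun u => ?_)
    rw [Real.norm_of_nonneg (hB.nonneg u)]
    exact hB.le u
  have hsplit : ∫ u in Ioi (0 : ℝ), B u * (Real.exp (-η * u) * k u)
      = (∫ u in Ioi (0 : ℝ), Real.exp (-η * u) * k u)
        + ∫ u in Ioi (0 : ℝ), (B u - 1) * Real.exp (-η * u) * k u := by
    rw [← sub_eq_iff_eq_add', ← integral_sub hintegrable hintegrable_exp]
    exact integral_congr_ae (Eventually.of_forall fun u => by ring)
  have hmain : ∫ u in Ioi (0 : ℝ), Real.exp (-η * u) * k u ≤ ∫ v, fejerKernel v := by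
    rw [← integral_mul_fejerKernel_comp hT y]
    exact (setIntegral_mono_on hintegrable_exp hk_int.integrableOn measurableSet_Ioi fun u hu =>
      mul_le_of_le_one_left (hk_nonneg u) (hexp u hu)).trans
      (setIntegral_le_integral hk_int (Eventually.of_forall hk_nonneg))
  have herror := hB.integral_triangle_mul_exp_mul_laplace hG hT hη y
  refine (hB.mul_integral_fejerKernel_le_setIntegral hT hη.le hδ hy hintegrable).trans ?_
  rw [hsplit, herror, Complex.norm_real]
  exact add_le_add hmain (le_abs_self _)

lemma mul_integral_fejerKernel_le (hB : IsSlowlyDecreasing B C)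
    (hGc : ContinuousOn G {z | 0 ≤ z.re}) {T δ y : ℝ} (hT : 0 < T) (hδ : 0 ≤ δ) (hy : δ ≤ y) :
    B (y - δ) * Real.exp (-2 * δ) * (∫ v in (-(T * δ))..(T * δ), fejerKernel v)
      ≤ (∫ v, fejerKernel v) + ‖∫ t in (-T)..T, ((1 - |t| / T : ℝ) : ℂ) *
        Complex.exp (t * y * Complex.I) * G (t * Complex.I)‖ := by
  have hcont : Continuous (Function.uncurry fun (η t : ℝ) => ((1 - |t| / T : ℝ) : ℂ) *
      Complex.exp (t * y * Complex.I) * G ((|η| : ℝ) + t * Complex.I)) := by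
    have : Continuous fun z : ℝ × ℝ => G ((|z.1| : ℝ) + z.2 * Complex.I) :=
      hGc.comp_continuous (by fun_prop) fun z => by simp
    simp only [Function.uncurry_def]
    exact Continuous.mul (by fun_prop) this
  have hright := ((intervalIntegral.continuous_parametric_intervalIntegral_of_continuous
    (μ := volume) (a₀ := -T) hcont (continuous_const (y := T))).norm.const_add
      (∫ v, fejerKernel v)).tendsto 0
  have hleft : Continuous fun η : ℝ => B (y - δ) * Real.exp (-2 * δ) * Real.exp (-η * (y + δ)) *
      (∫ v in (-(T * δ))..(T * δ), fejerKernel v) := by fun_prop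
  have hlimit := le_of_tendsto_of_tendsto
    ((hleft.tendsto 0).mono_left (nhdsWithin_le_nhds (s := Ioi 0)))
    (hright.mono_left (nhdsWithin_le_nhds (s := Ioi 0))) ?_
  · simpa using hlimit
  · filter_upwards [self_mem_nhdsWithin] with η (hη : 0 < η)
    rw [abs_of_pos hη]
    exact hB.mul_integral_fejerKernel_le_of_pos hG hT hη hδ hy

end IsSlowlyDecreasing

lemma tendsto_norm_integral_triangle_mul_exp_mul (G : ℂ → ℂ) {T : ℝ} (hT : 0 ≤ T) :
    Tendsto (fun y : ℝ => ‖∫ t in (-T)..T, ((1 - |t| / T : ℝ) : ℂ) *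
      Complex.exp (t * y * Complex.I) * G (t * Complex.I)‖) atTop (𝓝 0) := by
  set f : ℝ → ℂ := (Ioc (-T) T).indicator fun t =>
    ((1 - |t| / T : ℝ) : ℂ) * G (t * Complex.I) with hf
  have hfreq : Tendsto (fun y : ℝ => -y / (2 * Real.pi)) atTop (cocompact ℝ) :=
    (tendsto_neg_atTop_atBot.atBot_div_const (by positivity)).mono_right atBot_le_cocompact
  have hRL := ((Real.tendsto_integral_exp_smul_cocompact f).comp hfreq).norm
  rw [norm_zero] at hRL
  refine hRL.congr fun y => congrArg norm ?_
  simp only [Function.comp_apply]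
  rw [intervalIntegral.integral_of_le (by linarith), ← integral_indicator measurableSet_Ioc]
  refine integral_congr_ae (Eventually.of_forall fun t => ?_)
  simp only [hf, indicator]
  split_ifs
  · have hphase : 2 * Real.pi * -(t * (-y / (2 * Real.pi))) = t * y := by
      field_simp
    rw [Circle.smul_def, Real.fourierChar_apply, smul_eq_mul, hphase]
    push_cast
    ring
  · simp

lemma exists_pos_exp_two_mul_lt {x : ℝ} (hx : 1 < x) : ∃ δ : ℝ, 0 < δ ∧ Real.exp (2 * δ) < x :=
  ⟨Real.log x / 4, by linarith [Real.log_pos hx], by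
    rw [← Real.lt_log_iff_exp_lt (by linarith)]
    linarith [Real.log_pos hx]⟩

lemma exists_mul_integral_fejerKernel_lt {a b δ : ℝ} (hab : a < b) (hδ : 0 < δ) :
    ∃ T : ℝ, 0 < T ∧
      a * (∫ v, fejerKernel v) < b * ∫ v in (-(T * δ))..(T * δ), fejerKernel v := by
  have hTδ : Tendsto (fun T : ℝ => T * δ) atTop atTop := tendsto_id.atTop_mul_const hδ
  have hlim := (intervalIntegral_tendsto_integral integrable_fejerKernel
    (tendsto_neg_atTop_atBot.comp hTδ) hTδ).const_mul b
  obtain ⟨T, hlt, hT⟩ := ((hlim.eventually (lt_mem_nhds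
    (mul_lt_mul_of_pos_right hab integral_fejerKernel_pos))).and (eventually_gt_atTop 0)).exists
  exact ⟨T, hT, hlt⟩

theorem IsSlowlyDecreasing.eventually_le {B : ℝ → ℝ} {C : ℝ} (hB : IsSlowlyDecreasing B C)
    {G : ℂ → ℂ} (hGc : ContinuousOn G {z | 0 ≤ z.re}) (hG : ∀ z : ℂ, 0 < z.re →
      ∫ u in Ioi (0 : ℝ), ((B u - 1 : ℝ) : ℂ) * Complex.exp (-z * u) = G z)
    {ε : ℝ} (hε : 0 < ε) : ∀ᶠ y in atTop, B y ≤ 1 + ε := by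
  set κ := ∫ v, fejerKernel v
  have hκ : 0 < κ := integral_fejerKernel_pos
  obtain ⟨δ, hδ, hδε⟩ := exists_pos_exp_two_mul_lt (x := 1 + ε) (by linarith)
  obtain ⟨T, hT, hκT⟩ := exists_mul_integral_fejerKernel_lt hδε hδ
  set κT := ∫ v in (-(T * δ))..(T * δ), fejerKernel v
  have hκT_pos : 0 < κT := by
    have : 0 < (1 + ε) * κT := (mul_pos (Real.exp_pos _) hκ).trans hκT
    exact pos_of_mul_pos_right this (by linarith)
  have hexp : Real.exp (2 * δ) * Real.exp (-2 * δ) = 1 := by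
    rw [← Real.exp_add]
    simp
  have hgap : 0 < (1 + ε) * κT * Real.exp (-2 * δ) - κ := by
    have := mul_lt_mul_of_pos_right hκT (Real.exp_pos (-2 * δ))
    rw [mul_right_comm, hexp, one_mul] at this
    linarith
  have hshift : Tendsto (fun y : ℝ => y + δ) atTop atTop :=
    tendsto_atTop_add_const_right _ _ tendsto_id
  filter_upwards [hshift.eventually ((tendsto_norm_integral_triangle_mul_exp_mul G hT.le).eventually
    (gt_mem_nhds hgap)), eventually_ge_atTop 0] with y herror hy
  have hkey := hB.mul_integral_fejerKernel_le hG hGc hT hδ.le (y := y + δ) (by linarith)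
  rw [add_sub_cancel_right] at hkey
  have : B y * (Real.exp (-2 * δ) * κT) ≤ (1 + ε) * (Real.exp (-2 * δ) * κT) := by
    linarith
  exact le_of_mul_le_mul_right this (by positivity)

end WienerIkehara

section PrimeNumberTheorem

open MeasureTheory Filter Topology Set
open scoped ArithmeticFunction.vonMangoldt

/-- The Chebyshev function on a logarithmic scale and divided by its expected size,
`u ↦ ψ (exp u) / exp u`, to which the Tauberian theorem is applied. -/
noncomputable def psiExp (u : ℝ) : ℝ := Chebyshev.psi (Real.exp u) * Real.exp (-u)

lemma isSlowlyDecreasing_psiExp : IsSlowlyDecreasing psiExp (Real.log 4 + 4) where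
  nonneg u := mul_nonneg (Chebyshev.psi_nonneg _) (Real.exp_pos _).le
  le u := by
    rw [psiExp, Real.exp_neg, ← div_eq_mul_inv, div_le_iff₀ (Real.exp_pos u)]
    exact Chebyshev.psi_le_const_mul_self (Real.exp_pos u).le
  monotone_mul_exp := by
    have : (fun u => psiExp u * Real.exp u) = Chebyshev.psi ∘ Real.exp := by
      funext u
      simp [psiExp, mul_assoc, ← Real.exp_add]
    rw [this]
    exact Chebyshev.psi_mono.comp Real.exp_monotone

lemma LSeries_vonMangoldt_eq_mul_integral {s : ℂ} (hs : 1 < s.re) :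
    LSeries (fun n => (Λ n : ℂ)) s
      = s * ∫ u in Ioi (0 : ℝ), (psiExp u : ℂ) * Complex.exp (-(s - 1) * u) := by
  have hO : (fun n : ℕ => ∑ k ∈ Finset.Icc 1 n, Λ k) =O[atTop] fun n : ℕ => (n : ℝ) ^ (1 : ℝ) := by
    refine Asymptotics.IsBigO.of_bound (Real.log 4 + 4) (Eventually.of_forall fun n => ?_)
    have h := Chebyshev.psi_le_const_mul_self (x := n) (by positivity)
    rw [Real.norm_of_nonneg (Finset.sum_nonneg fun _ _ => ArithmeticFunction.vonMangoldt_nonneg),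
      Real.rpow_one, Real.norm_of_nonneg (by positivity)]
    rwa [Chebyshev.psi, Nat.floor_natCast] at h
  rw [LSeries_eq_mul_integral_of_nonneg (fun n => Λ n) zero_le_one hs hO
    fun _ => ArithmeticFunction.vonMangoldt_nonneg]
  have hsubst := integral_comp_exp_Ioi (fun t : ℝ => (∑ k ∈ Finset.Icc 1 ⌊t⌋₊,
    ((Λ k : ℝ) : ℂ)) * (t : ℂ) ^ (-(s + 1))) 0
  rw [Real.exp_zero] at hsubst
  rw [← hsubst]
  refine congrArg _ (setIntegral_congr_fun measurableSet_Ioi fun u _ => ?_)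
  have hpsi : ∑ k ∈ Finset.Icc 1 ⌊Real.exp u⌋₊, ((Λ k : ℝ) : ℂ) = Chebyshev.psi (Real.exp u) := by
    rw [Chebyshev.psi]
    push_cast
    rfl
  simp only [hpsi, psiExp]
  rw [Complex.cpow_def_of_ne_zero (by exact_mod_cast (Real.exp_pos u).ne'),
    ← Complex.ofReal_log (Real.exp_pos u).le, Real.log_exp, Complex.real_smul]
  push_cast
  rw [mul_left_comm, ← Complex.exp_add, mul_assoc, ← Complex.exp_add]
  congr 2
  ring

lemma integral_psiExp_sub_one_mul_exp {z : ℂ} (hz : 0 < z.re) :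
    ∫ u in Ioi (0 : ℝ), ((psiExp u - 1 : ℝ) : ℂ) * Complex.exp (-z * u)
      = LSeries (fun n => (Λ n : ℂ)) (1 + z) / (1 + z) - 1 / z := by
  have hs_ne : 1 + z ≠ 0 := by
    intro h
    have := congrArg Complex.re h
    simp only [Complex.add_re, Complex.one_re, Complex.zero_re] at this
    linarith
  have hexp_int : IntegrableOn (fun u : ℝ => Complex.exp (-z * u)) (Ioi 0) :=
    integrableOn_exp_mul_complex_Ioi (by simpa using hz) 0
  have hexp : ∫ u in Ioi (0 : ℝ), Complex.exp (-z * u) = 1 / z := by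
    rw [integral_exp_mul_complex_Ioi (by simpa using hz), Complex.ofReal_zero, mul_zero,
      Complex.exp_zero, neg_div_neg_eq]
  rw [LSeries_vonMangoldt_eq_mul_integral (by simpa using hz), mul_div_cancel_left₀ _ hs_ne,
    add_sub_cancel_left, eq_sub_iff_add_eq, ← hexp, ← integral_add
      (isSlowlyDecreasing_psiExp.integrableOn_sub_one_mul_exp hz) hexp_int]
  refine integral_congr_ae (Eventually.of_forall fun u => ?_)
  push_cast
  ring

-- The continuous extension to the closed half-plane rests on the non-vanishing of `ζ` on the line
-- `re s = 1`.
lemma exists_continuousOn_eq_integral_psiExp_sub_one :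
    ∃ G : ℂ → ℂ, ContinuousOn G {z | 0 ≤ z.re} ∧ ∀ z : ℂ, 0 < z.re →
      ∫ u in Ioi (0 : ℝ), ((psiExp u - 1 : ℝ) : ℂ) * Complex.exp (-z * u) = G z := by
  set F := ArithmeticFunction.vonMangoldt.LFunctionResidueClassAux (1 : ZMod 1) with hF
  have hmaps : ∀ z : ℂ, 0 ≤ z.re → 1 ≤ (1 + z).re := fun z hz => by simpa using hz
  have hne : ∀ z : ℂ, 0 ≤ z.re → 1 + z ≠ 0 := fun z hz h => by
    have := hmaps z hz
    rw [h, Complex.zero_re] at this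
    linarith
  refine ⟨fun z => (F (1 + z) - 1) / (1 + z), ?_, fun z hz => ?_⟩
  · exact (((ArithmeticFunction.vonMangoldt.continuousOn_LFunctionResidueClassAux (1 : ZMod 1)).comp
      (by fun_prop) hmaps).sub continuousOn_const).div (by fun_prop) hne
  · have hz_ne : z ≠ 0 := by
      rintro rfl
      simp at hz
    have hres : (fun n : ℕ => (ArithmeticFunction.vonMangoldt.residueClass (1 : ZMod 1) n : ℂ))
        = fun n => (Λ n : ℂ) := by
      funext n
      simp [ArithmeticFunction.vonMangoldt.residueClass, Subsingleton.elim (n : ZMod 1) 1]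
    have hFz := ArithmeticFunction.vonMangoldt.eqOn_LFunctionResidueClassAux (q := 1) (a := 1)
      isUnit_one (show 1 < (1 + z).re by simpa using hz)
    have := hne z hz.le
    beta_reduce
    rw [hF, hFz, hres, integral_psiExp_sub_one_mul_exp hz]
    simp only [Nat.totient_one, Nat.cast_one, inv_one, add_sub_cancel_left]
    field_simp
    ring

theorem eventually_psi_le {ε : ℝ} (hε : 0 < ε) :
    ∀ᶠ x in atTop, Chebyshev.psi x ≤ (1 + ε) * x := by
  obtain ⟨G, hGc, hG⟩ := exists_continuousOn_eq_integral_psiExp_sub_one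
  filter_upwards [Real.tendsto_log_atTop.eventually
    (isSlowlyDecreasing_psiExp.eventually_le hGc hG hε), eventually_gt_atTop 0] with x hx hx0
  rwa [psiExp, Real.exp_neg, Real.exp_log hx0, ← div_eq_mul_inv, div_le_iff₀ hx0] at hx

theorem eventually_lcmUpto_le_exp {ε : ℝ} (hε : 0 < ε) :
    ∀ᶠ n : ℕ in atTop, (Nat.lcmUpto n : ℝ) ≤ Real.exp ((1 + ε) * n) := by
  filter_upwards [tendsto_natCast_atTop_atTop.eventually (eventually_psi_le hε)] with n hn
  rwa [Chebyshev.psi_eq_log_lcmUpto,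
    Real.log_le_iff_le_exp (by exact_mod_cast Nat.lcmUpto_pos n)] at hn

end PrimeNumberTheorem

section LinearIndependenceCriterion

open Filter Topology Finset

variable {ι : Type*} [Fintype ι]

-- Simultaneous Dirichlet approximation, by the pigeonhole principle.
lemma exists_nat_forall_abs_mul_sub_le (x : ι → ℝ) {Q : ℕ} (hQ : 0 < Q) :
    ∃ q : ℕ, 0 < q ∧ q ≤ Q ^ Fintype.card ι ∧
      ∃ z : ι → ℤ, ∀ j, |(q : ℝ) * x j - z j| ≤ 1 / Q := by
  classical
  have hQ' : (0 : ℝ) < Q := by exact_mod_cast hQ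
  have hbox : ∀ (k : ℕ) (j : ι), ⌊(Q : ℝ) * Int.fract (k * x j)⌋₊ < Q := by
    intro k j
    rw [Nat.floor_lt (by positivity)]
    exact mul_lt_of_lt_one_right hQ' (Int.fract_lt_one _)
  let box : Fin (Q ^ Fintype.card ι + 1) → ι → Fin Q := fun k j => ⟨_, hbox k j⟩
  obtain ⟨k, l, hne, hkl⟩ := Fintype.exists_ne_map_eq_of_card_lt box (by simp)
  wlog hlt : k < l generalizing k l
  · exact this l k hne.symm hkl.symm (lt_of_le_of_ne (not_lt.mp hlt) hne.symm)
  have hlt' : (k : ℕ) < l := hlt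
  refine ⟨l - k, by lia, by lia, fun j => ⌊(l : ℕ) * x j⌋ - ⌊(k : ℕ) * x j⌋, fun j => ?_⟩
  have hsame : ⌊(Q : ℝ) * Int.fract ((k : ℕ) * x j)⌋₊ = ⌊(Q : ℝ) * Int.fract ((l : ℕ) * x j)⌋₊ :=
    congrArg Fin.val (congrFun hkl j)
  have hfract : ((l - k : ℕ) : ℝ) * x j - ((⌊(l : ℕ) * x j⌋ - ⌊(k : ℕ) * x j⌋ : ℤ) : ℝ)
      = Int.fract ((l : ℕ) * x j) - Int.fract ((k : ℕ) * x j) := by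
    rw [Nat.cast_sub hlt'.le, Int.fract, Int.fract]
    push_cast
    ring
  have hk := Nat.floor_le (show 0 ≤ (Q : ℝ) * Int.fract ((k : ℕ) * x j) by positivity)
  have hk' := Nat.lt_floor_add_one ((Q : ℝ) * Int.fract ((k : ℕ) * x j))
  have hl := Nat.floor_le (show 0 ≤ (Q : ℝ) * Int.fract ((l : ℕ) * x j) by positivity)
  have hl' := Nat.lt_floor_add_one ((Q : ℝ) * Int.fract ((l : ℕ) * x j))
  rw [hsame] at hk hk'
  rw [hfract, le_div_iff₀ hQ', ← Nat.abs_cast Q, ← abs_mul, abs_le]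
  constructor <;> linarith

-- `q * L` is an integer up to an error at most `H / Q`; since it is less than `1 / 2`, that integer
-- is zero.
lemma mul_abs_form_le {x : ι → ℝ} {q : ℕ} {Q H : ℝ} {z : ι → ℤ}
    (hz : ∀ j, |(q : ℝ) * x j - z j| ≤ 1 / Q) (P₀ : ℤ) (P : ι → ℤ) (hP : ∑ j, |(P j : ℝ)| ≤ H)
    (hQ : 0 < Q) (hsmall : q * |P₀ + ∑ j, P j * x j| < 1 / 2) (hH : H / Q ≤ 1 / 2) :
    q * |P₀ + ∑ j, P j * x j| ≤ H / Q := by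
  set I : ℤ := q * P₀ + ∑ j, P j * z j with hI
  set E : ℝ := ∑ j, (P j : ℝ) * ((q : ℝ) * x j - z j) with hE
  have hsplit : (q : ℝ) * (P₀ + ∑ j, P j * x j) = I + E := by
    rw [hI, hE]
    push_cast
    simp only [mul_sub, sum_sub_distrib]
    rw [mul_add, mul_sum]
    simp only [mul_left_comm]
    ring
  have hE_le : |E| ≤ H / Q :=
    calc |E| ≤ ∑ j, |(P j : ℝ)| * (1 / Q) :=
          (abs_sum_le_sum_abs _ _).trans (sum_le_sum fun j _ => by
            rw [abs_mul]
            exact mul_le_mul_of_nonneg_left (hz j) (abs_nonneg _))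
      _ = (∑ j, |(P j : ℝ)|) / Q := by rw [← sum_mul, mul_one_div]
      _ ≤ H / Q := by gcongr
  have habs : (q : ℝ) * |P₀ + ∑ j, P j * x j| = |I + E| := by
    rw [← hsplit, abs_mul, Nat.abs_cast]
  have hI_zero : I = 0 := by
    have : |(I : ℝ)| < 1 := by
      calc |(I : ℝ)| = |(I + E) - E| := by rw [add_sub_cancel_right]
        _ ≤ |I + E| + |E| := abs_sub _ _
        _ < 1 := by linarith
    exact Int.abs_lt_one_iff.mp (by exact_mod_cast this)
  rwa [habs, hI_zero, Int.cast_zero, zero_add]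

lemma exists_first_mul_lt_half {ℓ : ℕ → ℝ} {N₀ : ℕ} {α c K q : ℝ} (hα : 0 < α) (hq : 1 ≤ q)
    (hpos : ∀ N ≥ N₀, 0 < ℓ N) (hle : ∀ N ≥ N₀, ℓ N ≤ K * Real.exp (-α * N))
    (hratio : ∀ N ≥ N₀, c * ℓ N ≤ ℓ (N + 1)) :
    ∃ N ≥ N₀, q * ℓ N < 1 / 2 ∧ min (ℓ N₀) (c / 2) ≤ q * ℓ N ∧
      Real.exp (α * N) ≤ max (2 * K * Real.exp α) (Real.exp (α * N₀)) * q := by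
  classical
  have hq₀ : 0 < q := by linarith
  have hex : ∃ N, N₀ ≤ N ∧ q * ℓ N < 1 / 2 := by
    have hexp : Tendsto (fun N : ℕ => Real.exp (-α * N)) atTop (𝓝 0) :=
      Real.tendsto_exp_atBot.comp
        (tendsto_natCast_atTop_atTop.const_mul_atTop_of_neg (by linarith))
    have hlim : Tendsto (fun N : ℕ => q * (K * Real.exp (-α * N))) atTop (𝓝 0) := by
      simpa using (hexp.const_mul K).const_mul q
    obtain ⟨N, hlt, hN⟩ := ((hlim.eventually_lt_const (show (0 : ℝ) < 1 / 2 by norm_num)).and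
      (eventually_ge_atTop N₀)).exists
    exact ⟨N, hN, (mul_le_mul_of_nonneg_left (hle N hN) hq₀.le).trans_lt hlt⟩
  obtain ⟨hN, hsmall⟩ := Nat.find_spec hex
  have hmin := fun k => Nat.find_min hex (m := k)
  generalize Nat.find hex = N at hN hsmall hmin
  refine ⟨N, hN, hsmall, ?_⟩
  rcases Nat.eq_or_lt_of_le hN with rfl | hlt
  · exact ⟨(min_le_left _ _).trans (le_mul_of_one_le_left (hpos _ le_rfl).le hq),
      (le_max_right _ _).trans (le_mul_of_one_le_right (by positivity) hq)⟩
  obtain ⟨M, rfl⟩ : ∃ M, N = M + 1 := ⟨N - 1, by lia⟩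
  have hM : N₀ ≤ M := by lia
  have hlarge : 1 / 2 ≤ q * ℓ M := not_lt.mp fun h => hmin M (by lia) ⟨hM, h⟩
  have hc : 0 < c ∨ c ≤ 0 := lt_or_ge 0 c
  refine ⟨(min_le_right _ _).trans ?_, (mul_le_mul_of_nonneg_right (le_max_left _ _) hq₀.le).trans'
    ?_⟩
  · rcases hc with hc | hc
    · nlinarith [mul_le_mul_of_nonneg_left (hratio M hM) hq₀.le]
    · linarith [mul_pos hq₀ (hpos (M + 1) hN)]
  · have hexp : Real.exp (-α * M) * Real.exp (α * (M + 1 : ℕ)) = Real.exp α := by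
      rw [← Real.exp_add]
      congr 1
      push_cast
      ring
    have hbound : 1 / 2 ≤ q * (K * Real.exp (-α * M)) :=
      hlarge.trans (mul_le_mul_of_nonneg_left (hle M hM) hq₀.le)
    calc Real.exp (α * (M + 1 : ℕ)) ≤
          2 * (q * (K * Real.exp (-α * M))) * Real.exp (α * (M + 1 : ℕ)) :=
          le_mul_of_one_le_left (Real.exp_pos _).le (by linarith)
      _ = 2 * K * (Real.exp (-α * M) * Real.exp (α * (M + 1 : ℕ))) * q := by ring
      _ = 2 * K * Real.exp α * q := by rw [hexp]

lemma tendsto_const_mul_rpow_div_atTop_zero (C : ℝ) {γ : ℝ} (hγ : γ < 1) :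
    Tendsto (fun Q : ℕ => C * (Q : ℝ) ^ γ / Q) atTop (𝓝 0) := by
  have hlim : Tendsto (fun Q : ℕ => C * (Q : ℝ) ^ (-(1 - γ))) atTop (𝓝 0) := by
    simpa using ((tendsto_rpow_neg_atTop (sub_pos.mpr hγ)).comp
      tendsto_natCast_atTop_atTop).const_mul C
  refine hlim.congr' ?_
  filter_upwards [eventually_gt_atTop 0] with Q hQ
  rw [neg_sub, Real.rpow_sub_one (by positivity), mul_div_assoc]

lemma exp_mul_le_rpow_of_exp_mul_le {α β u B : ℝ} (hα : 0 < α) (hβ : 0 ≤ β)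
    (h : Real.exp (α * u) ≤ B) : Real.exp (β * u) ≤ B ^ (β / α) :=
  calc Real.exp (β * u) = Real.exp (α * u) ^ (β / α) := by
        rw [← Real.exp_mul]
        congr 1
        field_simp
    _ ≤ B ^ (β / α) := Real.rpow_le_rpow (Real.exp_pos _).le h (by positivity)

lemma le_mul_card_of_forms {x : ι → ℝ} {P₀ : ℕ → ℤ} {P : ℕ → ι → ℤ} {L : ℕ → ℝ} {N₀ : ℕ}
    {α β c C K : ℝ} (hα : 0 < α) (hβ : 0 ≤ β) (hc : 0 < c)
    (hL : ∀ N ≥ N₀, L N = P₀ N + ∑ j, P N j * x j)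
    (hP : ∀ N ≥ N₀, ∑ j, |(P N j : ℝ)| ≤ C * Real.exp (β * N))
    (hne : ∀ N ≥ N₀, L N ≠ 0) (hle : ∀ N ≥ N₀, |L N| ≤ K * Real.exp (-α * N))
    (hratio : ∀ N ≥ N₀, c * |L N| ≤ |L (N + 1)|) :
    α ≤ β * Fintype.card ι := by
  by_contra! hlt
  set d := Fintype.card ι
  set γ := β / α
  set μ := min (|L N₀|) (c / 2)
  have hμ : 0 < μ := lt_min (abs_pos.mpr (hne N₀ le_rfl)) (by positivity)
  set C' := max (2 * K * Real.exp α) (Real.exp (α * N₀))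
  have hC' : 0 < C' := lt_max_of_lt_right (Real.exp_pos _)
  have hC : 0 ≤ C := nonneg_of_mul_nonneg_left
    ((sum_nonneg fun _ _ => abs_nonneg _).trans (hP N₀ le_rfl)) (Real.exp_pos _)
  have hlower : ∀ Q : ℕ, 0 < Q → min μ (1 / 2) ≤ C * C' ^ γ * (Q : ℝ) ^ (d * γ) / Q := by
    intro Q hQ
    have hQ' : (0 : ℝ) < Q := by exact_mod_cast hQ
    obtain ⟨q, hq, hqQ, z, hz⟩ := exists_nat_forall_abs_mul_sub_le x hQ
    obtain ⟨N, hN, hsmall, hμN, hexp⟩ := exists_first_mul_lt_half (q := q) hα (by exact_mod_cast hq)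
      (fun N hN => abs_pos.mpr (hne N hN)) hle hratio
    have hexpβ : Real.exp (β * N) ≤ C' ^ γ * (Q : ℝ) ^ (d * γ) := by
      rw [Real.rpow_mul hQ'.le, Real.rpow_natCast, ← Real.mul_rpow hC'.le (by positivity)]
      refine exp_mul_le_rpow_of_exp_mul_le hα hβ (hexp.trans ?_)
      gcongr
      exact_mod_cast hqQ
    have hmin : min μ (1 / 2) ≤ C * Real.exp (β * N) / Q := by
      rcases le_or_gt (C * Real.exp (β * N) / Q) (1 / 2) with h | h
      · rw [hL N hN] at hsmall hμN
        exact (min_le_left _ _).trans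
          (hμN.trans (mul_abs_form_le hz (P₀ N) (P N) (hP N hN) hQ' hsmall h))
      · exact (min_le_right _ _).trans h.le
    rw [mul_assoc C]
    exact hmin.trans (by gcongr)
  have hγ : d * γ < 1 := by
    rw [← mul_div_assoc, div_lt_one hα, mul_comm]
    exact hlt
  obtain ⟨Q, hQlt, hQ⟩ := (((tendsto_const_mul_rpow_div_atTop_zero (C * C' ^ γ)
    hγ).eventually_lt_const (lt_min hμ (by norm_num : (0 : ℝ) < 1 / 2))).and
    (eventually_gt_atTop 0)).exists
  exact (hlower Q hQ).not_gt hQlt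

lemma exists_int_smul_eq_sum_basis {τ κ V : Type*} [Finite τ] [Fintype κ] [AddCommGroup V]
    [Module ℚ V] (b : Module.Basis κ ℚ V) (θ : τ → V) :
    ∃ D : ℤ, D ≠ 0 ∧ ∃ M : τ → κ → ℤ, ∀ i, (D : ℚ) • θ i = ∑ j, (M i j : ℚ) • b j := by
  obtain ⟨D, hD⟩ := IsLocalization.exist_integer_multiples_of_finite (nonZeroDivisors ℤ)
    fun ij : τ × κ => b.repr (θ ij.1) ij.2
  choose M hM using hD
  refine ⟨D, nonZeroDivisors.ne_zero D.2, fun i j => M (i, j), fun i => ?_⟩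
  rw [← b.sum_repr (θ i), smul_sum]
  refine sum_congr rfl fun j _ => ?_
  have hMij : (M (i, j) : ℚ) = (D : ℤ) * b.repr (θ i) j := by simpa using hM (i, j)
  rw [hMij, mul_smul]

lemma mul_sum_eq_sum_of_forall_mul_eq {R τ κ : Type*} [CommSemiring R] [Fintype τ] [Fintype κ]
    {D : R} {θ : τ → R} {b : κ → R} {M : τ → κ → R} (h : ∀ i, D * θ i = ∑ j, M i j * b j)
    (p : τ → R) : D * ∑ i, p i * θ i = ∑ j, (∑ i, p i * M i j) * b j := by
  simp only [mul_sum, sum_mul, mul_assoc]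
  rw [sum_comm]
  refine sum_congr rfl fun i _ => ?_
  rw [← mul_sum, ← h, mul_left_comm]

/-- Nesterenko's linear independence criterion. -/
theorem le_mul_finrank_sub_one_of_forms (V : Submodule ℚ ℝ) [FiniteDimensional ℚ V] {θ : ι → ℝ}
    (hθ : ∀ i, θ i ∈ V) {p : ℕ → ι → ℤ} {ℓ : ℕ → ℝ} {α β c : ℝ}
    (hα : 0 < α) (hβ : 0 ≤ β) (hc : 0 < c)
    (hℓ : ∀ N, ℓ N = ∑ i, p N i * θ i)
    (hp : ∀ᶠ N : ℕ in atTop, ∀ i, |(p N i : ℝ)| ≤ Real.exp (β * N))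
    (hne : ∀ᶠ N in atTop, ℓ N ≠ 0) (hle : ∀ᶠ N : ℕ in atTop, |ℓ N| ≤ Real.exp (-α * N))
    (hratio : ∀ᶠ N in atTop, c * |ℓ N| ≤ |ℓ (N + 1)|) :
    α ≤ β * (Module.finrank ℚ V - 1) := by
  obtain ⟨N₀, hN₀⟩ := eventually_atTop.mp (hp.and (hne.and (hle.and hratio)))
  obtain ⟨i, -, hi⟩ := exists_ne_zero_of_sum_ne_zero (hℓ N₀ ▸ (hN₀ N₀ le_rfl).2.1)
  have : Nontrivial V := ⟨⟨θ i, hθ i⟩, 0, fun h =>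
    right_ne_zero_of_mul hi (congrArg Subtype.val h)⟩
  obtain ⟨d, hd⟩ := Nat.exists_eq_succ_of_ne_zero (Module.finrank_pos (R := ℚ) (M := V)).ne'
  let b : Module.Basis (Fin (d + 1)) ℚ V := Module.finBasisOfFinrankEq ℚ V hd
  have hb₀ : (b 0 : ℝ) ≠ 0 := by simpa using b.ne_zero 0
  obtain ⟨D, hD, M, hM⟩ := exists_int_smul_eq_sum_basis b fun i => (⟨θ i, hθ i⟩ : V)
  have hM' : ∀ i, (D : ℝ) * θ i = ∑ j, (M i j : ℝ) * b j := fun i => by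
    simpa [Rat.smul_def] using congrArg Subtype.val (hM i)
  have hD' : (D : ℝ) ≠ 0 := by exact_mod_cast hD
  set P : ℕ → Fin (d + 1) → ℤ := fun N j => ∑ i, p N i * M i j
  set κ : ℝ := D / b 0 with hκ
  have hκ_ne : κ ≠ 0 := div_ne_zero hD' hb₀
  have hform : ∀ N, κ * ℓ N = P N 0 + ∑ j : Fin d, P N j.succ * ((b j.succ : ℝ) / b 0) := by
    intro N
    have hDℓ : (D : ℝ) * ℓ N = ∑ j, (P N j : ℝ) * (b j : ℝ) := by
      rw [hℓ, mul_sum_eq_sum_of_forall_mul_eq hM']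
      simp only [P, Int.cast_sum, Int.cast_mul]
    rw [hκ, div_mul_eq_mul_div, hDℓ, Fin.sum_univ_succ, add_div, mul_div_cancel_right₀ _ hb₀,
      sum_div]
    simp only [mul_div_assoc]
  have hcoeff : ∀ N ≥ N₀, ∑ j : Fin d, |(P N j.succ : ℝ)|
      ≤ (∑ j : Fin d, ∑ i, |(M i j.succ : ℝ)|) * Real.exp (β * N) := by
    intro N hN
    simp only [sum_mul, P, Int.cast_sum, Int.cast_mul]
    refine sum_le_sum fun j _ => (abs_sum_le_sum_abs _ _).trans (sum_le_sum fun i _ => ?_)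
    rw [abs_mul, mul_comm]
    exact mul_le_mul_of_nonneg_left ((hN₀ N hN).1 i) (abs_nonneg _)
  rw [hd, Nat.succ_eq_add_one, Nat.cast_add_one, add_sub_cancel_right]
  refine (le_mul_card_of_forms (K := |κ|) hα hβ hc (fun N _ => hform N) hcoeff
    (fun N hN => mul_ne_zero hκ_ne (hN₀ N hN).2.1) (fun N hN => ?_) fun N hN => ?_).trans_eq
    (by rw [Fintype.card_fin])
  · rw [abs_mul]
    exact mul_le_mul_of_nonneg_left (hN₀ N hN).2.2.1 (abs_nonneg κ)
  · rw [abs_mul, abs_mul, mul_left_comm]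
    exact mul_le_mul_of_nonneg_left (hN₀ N hN).2.2.2 (abs_nonneg κ)

end LinearIndependenceCriterion

section PartialFractions

open Finset Polynomial

/-- The subring `ℤ ⊆ ℝ`. -/
abbrev integerSubring : Subring ℝ := (Int.castRingHom ℝ).range

lemma exists_int_eq_of_mem_integerSubring {x : ℝ} (hx : x ∈ integerSubring) : ∃ z : ℤ, x = z := by
  obtain ⟨z, rfl⟩ := hx
  exact ⟨z, rfl⟩

lemma lcmUpto_div_mem_integerSubring {n : ℕ} {k : ℤ} (hk : k ≠ 0) (hkn : |k| ≤ n) :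
    (Nat.lcmUpto n : ℝ) / k ∈ integerSubring := by
  have hmem : k.natAbs ∈ Icc 1 n := by
    rw [abs_le] at hkn
    rw [Finset.mem_Icc]
    lia
  obtain ⟨z, hz⟩ := Int.natAbs_dvd.mp (Int.natCast_dvd_natCast.mpr (dvd_lcm (f := id) hmem))
  have hk' : (k : ℝ) ≠ 0 := by exact_mod_cast hk
  refine ⟨z, ?_⟩
  change (z : ℝ) = _
  rw [eq_div_iff hk', mul_comm]
  exact_mod_cast hz.symm

lemma cast_lcmUpto_ne_zero (n : ℕ) : (Nat.lcmUpto n : ℝ) ≠ 0 :=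
  Nat.cast_ne_zero.mpr (Nat.lcmUpto_ne_zero n)

/-- `c` gives a partial fraction expansion of `F` with poles of order at most `w` at the points
`0, -1, …, -n`, where `c i j` is the coefficient of `1 / (t + j) ^ (i + 1)`. It is bounded by `M`
and its denominator divides the power `w - (i + 1)` of the least common multiple of `1, …, n`. -/
structure IsPartialFractions (n w : ℕ) (M : ℝ) (c : ℕ → ℕ → ℝ) (F : ℝ → ℝ) : Prop where
  abs_le : ∀ i < w, ∀ j ≤ n, |c i j| ≤ M
  integral : ∀ i < w, ∀ j ≤ n,
    c i j * (Nat.lcmUpto n : ℝ) ^ w / (Nat.lcmUpto n : ℝ) ^ (i + 1) ∈ integerSubring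
  eq_sum : ∀ t : ℝ, (∀ j ≤ n, t + (j : ℕ) ≠ 0) →
    F t = ∑ i ∈ range w, ∑ j ∈ range (n + 1), c i j / (t + j) ^ (i + 1)

/-- `F` has a partial fraction expansion in the sense of `IsPartialFractions`. -/
def HasPartialFractions (n w : ℕ) (M : ℝ) (F : ℝ → ℝ) : Prop :=
  ∃ c, IsPartialFractions n w M c F

namespace HasPartialFractions

variable {n w : ℕ} {M M' : ℝ} {F G : ℝ → ℝ}

lemma mono (hF : HasPartialFractions n w M F) (h : M ≤ M') : HasPartialFractions n w M' F := by
  obtain ⟨c, hc⟩ := hF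
  exact ⟨c, fun i hi j hj => (hc.abs_le i hi j hj).trans h, hc.integral, hc.eq_sum⟩

lemma congr (hF : HasPartialFractions n w M F)
    (h : ∀ t : ℝ, (∀ j ≤ n, t + (j : ℕ) ≠ 0) → F t = G t) : HasPartialFractions n w M G := by
  obtain ⟨c, hc⟩ := hF
  exact ⟨c, hc.abs_le, hc.integral, fun t ht => (h t ht).symm.trans (hc.eq_sum t ht)⟩

lemma zero : HasPartialFractions n w 0 (fun _ => 0) :=
  ⟨0, by simp, by simp [zero_mem], by simp⟩

lemma add (hF : HasPartialFractions n w M F) (hG : HasPartialFractions n w M' G) :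
    HasPartialFractions n w (M + M') (fun t => F t + G t) := by
  obtain ⟨c, hc⟩ := hF
  obtain ⟨e, he⟩ := hG
  refine ⟨fun i j => c i j + e i j, fun i hi j hj => ?_, fun i hi j hj => ?_, fun t ht => ?_⟩
  · exact (abs_add_le _ _).trans (add_le_add (hc.abs_le i hi j hj) (he.abs_le i hi j hj))
  · rw [add_mul, add_div]
    exact add_mem (hc.integral i hi j hj) (he.integral i hi j hj)
  · simp only [hc.eq_sum t ht, he.eq_sum t ht, add_div, sum_add_distrib]

lemma sum {ι : Type*} {s : Finset ι} {M : ι → ℝ} {F : ι → ℝ → ℝ}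
    (hF : ∀ i ∈ s, HasPartialFractions n w (M i) (F i)) :
    HasPartialFractions n w (∑ i ∈ s, M i) (fun t => ∑ i ∈ s, F i t) := by
  classical
  induction s using Finset.induction_on with
  | empty => simpa using zero
  | insert i s hi ih =>
    simp only [sum_insert hi]
    exact (hF i (mem_insert_self i s)).add (ih fun j hj => hF j (mem_insert_of_mem hj))

lemma const_mul {v : ℕ} {c : ℝ} (hM : 0 ≤ M) (hF : HasPartialFractions n v M F) (hvw : v ≤ w)
    (hc : c * (Nat.lcmUpto n : ℝ) ^ w / (Nat.lcmUpto n : ℝ) ^ v ∈ integerSubring) :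
    HasPartialFractions n w (|c| * M) (fun t => c * F t) := by
  obtain ⟨e, he⟩ := hF
  have hd := cast_lcmUpto_ne_zero n
  refine ⟨fun i j => if i < v then c * e i j else 0, fun i _ j hj => ?_, fun i _ j hj => ?_,
    fun t ht => ?_⟩
  · split_ifs with h
    · rw [abs_mul]
      exact mul_le_mul_of_nonneg_left (he.abs_le i h j hj) (abs_nonneg c)
    · simpa using mul_nonneg (abs_nonneg c) hM
  · split_ifs with h
    · convert mul_mem hc (he.integral i h j hj) using 1
      field_simp
    · simp only [zero_mul, zero_div, zero_mem]
  · rw [he.eq_sum t ht, mul_sum, ← sum_subset (range_mono hvw)]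
    · refine sum_congr rfl fun i hi => ?_
      simp only [mul_sum, if_pos (mem_range.mp hi), mul_div_assoc]
    · intro i _ hi
      simp only [mem_range] at hi
      simp only [if_neg hi, zero_div, sum_const_zero]

lemma one_div_add_pow (m : ℕ) {j : ℕ} (hj : j ≤ n) :
    HasPartialFractions n (m + 1) 1 (fun t => 1 / (t + j) ^ (m + 1)) := by
  refine ⟨fun i' j' => if i' = m ∧ j' = j then 1 else 0, fun i' _ j' _ => ?_, fun i' _ j' _ => ?_,
    fun t _ => ?_⟩
  · split_ifs <;> simp
  · split_ifs with h
    · rw [h.1, one_mul, div_self (pow_ne_zero _ (cast_lcmUpto_ne_zero n))]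
      exact one_mem _
    · simp only [zero_mul, zero_div, zero_mem]
  · rw [sum_eq_single_of_mem m (by simp) fun i' _ hi' => by simp [hi'],
      sum_eq_single_of_mem j (by simpa [Nat.lt_succ_iff] using hj) fun j' _ hj' => by simp [hj']]
    simp

-- For `j ≠ p` the order of the pole at `-j` is lowered step by step by means of
-- `1 / ((t + j) (t + p)) = (1 / (t + j) - 1 / (t + p)) / (p - j)`.
lemma one_div_add_pow_mul_add (m : ℕ) {j p : ℕ} (hj : j ≤ n) (hp : p ≤ n) :
    HasPartialFractions n (m + 1) (m + 1) (fun t => 1 / ((t + j) ^ m * (t + p))) := by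
  have hd := cast_lcmUpto_ne_zero n
  rcases eq_or_ne j p with rfl | hne
  · simp only [← pow_succ]
    exact (one_div_add_pow m hj).mono (by simp)
  have hpj : (p : ℤ) - j ≠ 0 := by lia
  have hpj' : (p : ℝ) - j ≠ 0 := by exact_mod_cast hpj
  have hinv : (((p : ℝ) - j)⁻¹) * (Nat.lcmUpto n : ℝ) ∈ integerSubring := by
    convert lcmUpto_div_mem_integerSubring hpj (n := n) (by rw [abs_le]; lia) using 1
    push_cast
    ring
  have hinv_le : |((p : ℝ) - j)⁻¹| ≤ 1 := by
    rw [abs_inv]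
    exact inv_le_one_of_one_le₀ (by exact_mod_cast Int.one_le_abs hpj)
  induction m with
  | zero => simpa using one_div_add_pow 0 hp
  | succ m ih =>
    have hneg := ih.const_mul (c := -1) (by positivity) le_rfl
      (by simp [hd])
    have hdiff := ((one_div_add_pow m hj).add hneg).const_mul (c := ((p : ℝ) - j)⁻¹)
      (w := m + 1 + 1) (by positivity) (Nat.le_succ _)
      (by rwa [pow_succ _ (m + 1), ← mul_assoc, mul_right_comm,
        mul_div_cancel_right₀ _ (pow_ne_zero _ hd)])
    refine (hdiff.mono ?_).congr fun t ht => ?_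
    · rw [abs_neg, abs_one, one_mul, Nat.cast_add_one, add_comm 1]
      exact mul_le_of_le_one_left (by positivity) hinv_le
    · have htj := ht j hj
      have htp := ht p hp
      field_simp
      ring

lemma mul (hM : 0 ≤ M) (hF : HasPartialFractions n w M F) (hG : HasPartialFractions n 1 M' G) :
    HasPartialFractions n (w + 1) (((w + 1) ^ 2 * (n + 1) ^ 2) * M * M') (fun t => F t * G t) := by
  obtain ⟨c, hc⟩ := hF
  obtain ⟨b, hb⟩ := hG
  have hM' : 0 ≤ M' := (abs_nonneg _).trans (hb.abs_le 0 zero_lt_one 0 (Nat.zero_le n))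
  have hd := cast_lcmUpto_ne_zero n
  have hrange : ∀ {j}, j ∈ range (n + 1) → j ≤ n := fun h => Nat.lt_succ_iff.mp (mem_range.mp h)
  have hterm : ∀ i ∈ range w, ∀ j ∈ range (n + 1), ∀ p ∈ range (n + 1),
      HasPartialFractions n (w + 1) (M * M' * (w + 1))
        (fun t => c i j * b 0 p * (1 / ((t + j) ^ (i + 1) * (t + p)))) := by
    intro i hi j hj p hp
    have hi' := mem_range.mp hi
    have hcb : c i j * b 0 p * (Nat.lcmUpto n : ℝ) ^ (w + 1) / (Nat.lcmUpto n : ℝ) ^ (i + 1 + 1)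
        ∈ integerSubring := by
      convert mul_mem (hc.integral i hi' j (hrange hj))
        (hb.integral 0 zero_lt_one p (hrange hp)) using 1
      field_simp
      ring
    refine ((one_div_add_pow_mul_add (i + 1) (hrange hj) (hrange hp)).const_mul (by positivity)
      (by lia) hcb).mono ?_
    have hi'' : ((i + 1 : ℕ) : ℝ) ≤ w := by exact_mod_cast hi'
    rw [abs_mul]
    gcongr
    · exact hc.abs_le i hi' j (hrange hj)
    · exact hb.abs_le 0 zero_lt_one p (hrange hp)
  refine ((sum fun i hi => sum fun j hj => sum fun p hp => hterm i hi j hj p hp).mono ?_).congr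
    fun t ht => ?_
  · calc _ = (w : ℝ) * ((w + 1) * (n + 1) ^ 2 * M * M') := by
          simp only [sum_const, card_range, nsmul_eq_mul]
          push_cast
          ring
      _ ≤ (w + 1) * ((w + 1) * (n + 1) ^ 2 * M * M') := by gcongr; linarith
      _ = _ := by ring
  · rw [hc.eq_sum t ht, hb.eq_sum t ht, sum_range_one]
    simp only [sum_mul]
    refine sum_congr rfl fun i _ => sum_congr rfl fun j _ => ?_
    rw [mul_sum]
    refine sum_congr rfl fun p _ => ?_
    rw [zero_add, pow_one, div_mul_div_comm, mul_one_div]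

lemma mul_pow {a : ℕ} (hM : 0 ≤ M) (hM' : 0 ≤ M') (hF : HasPartialFractions n w M F)
    (hG : HasPartialFractions n 1 M' G) {k : ℕ} (hk : w + k ≤ a) :
    HasPartialFractions n (w + k) (M * ((a + 1) ^ 2 * (n + 1) ^ 2 * M') ^ k)
      (fun t => F t * G t ^ k) := by
  induction k with
  | zero => simpa using hF
  | succ k ih =>
    refine (((ih (by lia)).mul (by positivity) hG).mono ?_).congr fun t _ => by ring
    have hwk : ((w + k : ℕ) : ℝ) ≤ a := by exact_mod_cast (by lia : w + k ≤ a)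
    calc _ ≤ (((a : ℝ) + 1) ^ 2 * (n + 1) ^ 2)
          * (M * ((a + 1) ^ 2 * (n + 1) ^ 2 * M') ^ k) * M' := by gcongr
      _ = _ := by ring

end HasPartialFractions

/-- The rising factorial `t (t + 1) ⋯ (t + n)`, with roots `0, -1, …, -n`. -/
def wellPoisedDen (n : ℕ) (t : ℝ) : ℝ := ∏ j ∈ range (n + 1), (t + j)

lemma wellPoisedDen_ne_zero {n : ℕ} {t : ℝ} (ht : ∀ j ≤ n, t + (j : ℕ) ≠ 0) :
    wellPoisedDen n t ≠ 0 :=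
  prod_ne_zero_iff.mpr fun j hj => ht j (Nat.lt_succ_iff.mp (mem_range.mp hj))

lemma prod_erase_natCast_sub {n p : ℕ} (hp : p ≤ n) :
    ∏ j ∈ (range (n + 1)).erase p, ((j : ℝ) - p)
      = (-1) ^ p * (p.factorial * (n - p).factorial) := by
  have hlow : ∏ j ∈ range p, ((j : ℝ) - p) = (-1) ^ p * p.factorial := by
    rw [← prod_range_reflect, ← prod_range_add_one_eq_factorial, Nat.cast_prod,
      show ((-1 : ℝ)) ^ p = ∏ _j ∈ range p, (-1 : ℝ) by simp, ← prod_mul_distrib]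
    refine prod_congr rfl fun j hj => ?_
    have hj := mem_range.mp hj
    rw [show p - 1 - j = p - (j + 1) by lia, Nat.cast_sub (by lia)]
    push_cast
    ring
  have hhigh : ∏ j ∈ Ico (p + 1) (n + 1), ((j : ℝ) - p) = (n - p).factorial := by
    rw [prod_Ico_eq_prod_range, show n + 1 - (p + 1) = n - p by lia,
      ← prod_range_add_one_eq_factorial, Nat.cast_prod]
    refine prod_congr rfl fun j _ => ?_
    push_cast
    ring
  have hsplit : (range (n + 1)).erase p = range p ∪ Ico (p + 1) (n + 1) := by
    ext x
    simp only [mem_erase, mem_range, mem_union, mem_Ico]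
    lia
  rw [hsplit, prod_union (disjoint_left.mpr fun x => by simp only [mem_range, mem_Ico]; lia),
    hlow, hhigh]
  ring

lemma eval_div_wellPoisedDen {n : ℕ} {f : ℝ[X]} (hf : f.degree < (n + 1 : ℕ)) {t : ℝ}
    (ht : ∀ j ≤ n, t + (j : ℕ) ≠ 0) :
    f.eval t / wellPoisedDen n t = ∑ p ∈ range (n + 1),
      ((-1) ^ p * n.choose p * (f.eval (-(p : ℝ)) / n.factorial)) / (t + p) := by
  have hinterp := Lagrange.eval_interpolate_not_at_node (s := range (n + 1))
    (v := fun i : ℕ => -(i : ℝ)) (x := t) (fun i => f.eval (-(i : ℝ)))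
    fun i hi h => ht i (Nat.lt_succ_iff.mp (mem_range.mp hi)) (by rw [h, neg_add_cancel])
  rw [← Lagrange.eq_interpolate (fun x _ y _ h => by simpa using h) (by simpa using hf),
    Lagrange.eval_nodal] at hinterp
  simp only [sub_neg_eq_add] at hinterp
  rw [hinterp, ← wellPoisedDen, mul_div_cancel_left₀ _ (wellPoisedDen_ne_zero ht)]
  refine sum_congr rfl fun p hp => ?_
  have hp' : p ≤ n := Nat.lt_succ_iff.mp (mem_range.mp hp)
  have hweight : Lagrange.nodalWeight (range (n + 1)) (fun i : ℕ => -(i : ℝ)) p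
      = (-1) ^ p * n.choose p / n.factorial := by
    have hprod : ∏ j ∈ (range (n + 1)).erase p, (-(p : ℝ) - -(j : ℝ))
        = (-1) ^ p * (p.factorial * (n - p).factorial) := by
      rw [← prod_erase_natCast_sub hp']
      exact prod_congr rfl fun j _ => by ring
    rw [Lagrange.nodalWeight, prod_inv_distrib, hprod, Nat.cast_choose ℝ hp', mul_inv, ← inv_pow,
      inv_neg_one, mul_div_assoc, div_div_cancel_left' (by positivity)]
  rw [hweight]
  ring

lemma hasPartialFractions_eval_div {n : ℕ} {f : ℝ[X]} (hf : f.degree < (n + 1 : ℕ)) {B : ℝ}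
    (hinteger : ∀ p ≤ n, f.eval (-((p : ℕ) : ℝ)) / n.factorial ∈ integerSubring)
    (hB : ∀ p ≤ n, |f.eval (-((p : ℕ) : ℝ)) / n.factorial| ≤ B) :
    HasPartialFractions n 1 (2 ^ n * B) (fun t => f.eval t / wellPoisedDen n t) := by
  refine ⟨fun _ p => (-1) ^ p * n.choose p * (f.eval (-(p : ℝ)) / n.factorial),
    fun i _ p hp => ?_, fun i hi p hp => ?_, fun t ht => ?_⟩
  · have hchoose : ((n.choose p : ℕ) : ℝ) ≤ 2 ^ n := by exact_mod_cast Nat.choose_le_two_pow n p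
    rw [abs_mul, abs_mul, abs_pow, abs_neg, abs_one, one_pow, one_mul, Nat.abs_cast]
    gcongr
    exact hB p hp
  · obtain rfl : i = 0 := by lia
    rw [zero_add, pow_one, mul_div_cancel_right₀ _ (cast_lcmUpto_ne_zero n)]
    exact mul_mem (mul_mem (pow_mem (neg_mem (one_mem _)) _) (natCast_mem _ _)) (hinteger p hp)
  · rw [eval_div_wellPoisedDen hf ht, sum_range_one]
    simp only [zero_add, pow_one]

lemma hasPartialFractions_factorial_div (n : ℕ) :
    HasPartialFractions n 1 (2 ^ n) (fun t => n.factorial / wellPoisedDen n t) := by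
  have hone : (n.factorial : ℝ) / n.factorial = 1 :=
    div_self (Nat.cast_ne_zero.mpr n.factorial_ne_zero)
  have h := hasPartialFractions_eval_div (n := n) (f := C (n.factorial : ℝ)) (B := 1)
    (degree_C_le.trans_lt (by exact_mod_cast Nat.succ_pos n))
    (fun p _ => by rw [eval_C, hone]; exact one_mem _)
    (fun p _ => by rw [eval_C, hone, abs_one])
  simpa only [eval_C, mul_one] using h

lemma prod_abs_div_factorial_le {n : ℕ} {r : ℝ} (hr : 0 ≤ r) {x : ℕ → ℝ}
    (hx : ∀ s < n, |x s| ≤ r * n) : |(∏ s ∈ range n, x s) / n.factorial| ≤ (3 * r) ^ n := by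
  have hprod : ∏ s ∈ range n, |x s| ≤ (r * n) ^ n := by
    simpa using prod_le_prod (s := range n) (fun s _ => abs_nonneg (x s))
      (fun s hs => hx s (mem_range.mp hs))
  have hexp : Real.exp n ≤ 3 ^ n := by
    rw [← Real.exp_one_pow]
    exact pow_le_pow_left₀ (Real.exp_pos _).le (by linarith [Real.exp_one_lt_d9]) n
  rw [abs_div, abs_prod, Nat.abs_cast]
  calc (∏ s ∈ range n, |x s|) / n.factorial ≤ (r * n) ^ n / n.factorial := by gcongr
    _ = r ^ n * ((n : ℝ) ^ n / n.factorial) := by rw [mul_pow, mul_div_assoc]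
    _ ≤ r ^ n * 3 ^ n := by
        gcongr
        exact (Real.pow_div_factorial_le_exp n (Nat.cast_nonneg n) n).trans hexp
    _ = _ := by rw [← mul_pow, mul_comm r]

lemma hasPartialFractions_prod_div {n : ℕ} {r : ℝ} {u : ℤ} (hr : 0 ≤ r)
    (hu : ∀ p ≤ n, ∀ s < n, |(u : ℝ) - (p : ℕ) + (s : ℕ)| ≤ r * n) :
    HasPartialFractions n 1 ((6 * r) ^ n)
      (fun t => (∏ s ∈ range n, (t + u + s)) / wellPoisedDen n t) := by
  set f : ℝ[X] := ∏ s ∈ range n, (X + C ((u : ℝ) + s))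
  have heval : ∀ x, f.eval x = ∏ s ∈ range n, (x + u + s) := fun x => by
    simp [f, eval_prod, add_assoc]
  have hdegree : f.degree < (n + 1 : ℕ) := by
    refine lt_of_le_of_lt ((degree_prod_le _ _).trans_eq ?_) (Nat.cast_lt.mpr (Nat.lt_succ_self n))
    simp only [degree_X_add_C, sum_const, card_range, nsmul_one]
  have hneg : ∀ p : ℕ, f.eval (-(p : ℝ)) = ∏ s ∈ range n, ((u : ℝ) - p + s) := fun p => by
    rw [heval]
    exact prod_congr rfl fun s _ => by ring
  have h := hasPartialFractions_eval_div hdegree (B := (3 * r) ^ n) (fun p _ => ?_) fun p hp => ?_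
  · simpa only [heval, ← mul_pow, ← mul_assoc, show (2 : ℝ) * 3 = 6 by norm_num] using h
  · obtain ⟨z, hz⟩ := Nat.factorial_coe_dvd_prod n (u - p)
    refine ⟨z, ?_⟩
    change (z : ℝ) = _
    rw [hneg, eq_div_iff (Nat.cast_ne_zero.mpr n.factorial_ne_zero), mul_comm]
    exact_mod_cast hz.symm
  · rw [hneg]
    exact prod_abs_div_factorial_le hr (hu p hp)

/-- The numerator `(t - 1) ⋯ (t - rn) (t + n + 1) ⋯ (t + n + rn)`. -/
def wellPoisedNum (r n : ℕ) (t : ℝ) : ℝ :=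
  (∏ j ∈ range (r * n), (t - 1 - j)) * ∏ j ∈ range (r * n), (t + n + 1 + j)

/-- The rational function whose values and second derivatives are summed over the positive integers
to produce the linear forms. It vanishes to order three at `1, …, rn`. -/
noncomputable def wellPoised (a r n : ℕ) (t : ℝ) : ℝ :=
  (n.factorial : ℝ) ^ (a - 6 * r) * wellPoisedNum r n t ^ 3 / wellPoisedDen n t ^ a

lemma wellPoisedNum_succ (r n : ℕ) (t : ℝ) :
    wellPoisedNum (r + 1) n t = wellPoisedNum r n t
      * ((∏ s ∈ range n, (t + (-((r + 1) * n) : ℤ) + s))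
        * ∏ s ∈ range n, (t + ((r + 1) * n + 1 : ℤ) + s)) := by
  have hleft : ∏ x ∈ range n, (t - 1 - ((r * n + x : ℕ) : ℝ))
      = ∏ s ∈ range n, (t + (-((r + 1) * n) : ℤ) + s) := by
    rw [← prod_range_reflect]
    refine prod_congr rfl fun j hj => ?_
    have hj := mem_range.mp hj
    rw [show r * n + (n - 1 - j) = (r + 1) * n - (j + 1) by rw [add_mul]; lia,
      Nat.cast_sub (by nlinarith)]
    push_cast
    ring
  have hright : ∏ x ∈ range n, (t + n + 1 + ((r * n + x : ℕ) : ℝ))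
      = ∏ s ∈ range n, (t + ((r + 1) * n + 1 : ℤ) + s) :=
    prod_congr rfl fun j _ => by push_cast; ring
  rw [wellPoisedNum, wellPoisedNum, add_mul, one_mul, prod_range_add, prod_range_add, hleft, hright]
  ring

lemma hasPartialFractions_factorial_div_pow {a m : ℕ} (n : ℕ) (hm : 0 < m) (hma : m ≤ a) :
    HasPartialFractions n m (((a + 1) ^ 2 * (n + 1) ^ 2 * 2 ^ n) ^ m)
      (fun t => (n.factorial / wellPoisedDen n t) ^ m) := by
  obtain ⟨k, rfl⟩ := Nat.exists_eq_succ_of_ne_zero hm.ne'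
  have h := (hasPartialFractions_factorial_div n).mul_pow (a := a) (by positivity) (by positivity)
    (hasPartialFractions_factorial_div n) (k := k) (by lia)
  rw [add_comm 1 k] at h
  refine (h.mono ?_).congr fun t _ => (pow_succ' _ _).symm
  rw [Nat.succ_eq_add_one, pow_succ' _ k]
  gcongr
  exact le_mul_of_one_le_left (by positivity) (one_le_mul_of_one_le_of_one_le
    (one_le_pow₀ (by linarith [Nat.cast_nonneg (α := ℝ) a]))
    (one_le_pow₀ (by linarith [Nat.cast_nonneg (α := ℝ) n])))

lemma hasPartialFractions_mul_wellPoisedNum_pow {a m r n : ℕ} (hm : 0 < m) (ha : m + 6 * r ≤ a)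
    {q : ℕ} (hq : q ≤ r) :
    HasPartialFractions n (m + 6 * q)
      (((a + 1) ^ 2 * (n + 1) ^ 2 * 2 ^ n) ^ m
        * ((a + 1) ^ 2 * (n + 1) ^ 2 * (6 * (r + 1)) ^ n) ^ (6 * q))
      (fun t => (n.factorial / wellPoisedDen n t) ^ m
        * wellPoisedNum q n t ^ 3 / wellPoisedDen n t ^ (6 * q)) := by
  induction q with
  | zero =>
    simpa [wellPoisedNum] using hasPartialFractions_factorial_div_pow n hm (by lia : m ≤ a)
  | succ q ih =>
    have hbound : ∀ p ≤ n, ∀ s < n, -((q : ℝ) + 1) * n - p + s ≥ -((r + 1) * n)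
        ∧ ((q : ℝ) + 1) * n + 1 - p + s ≤ (r + 1) * n := by
      intro p hp s hs
      have hqn : ((q : ℝ) + 1) * n ≤ r * n := by gcongr; exact_mod_cast hq
      have hp' : (p : ℝ) ≤ n := by exact_mod_cast hp
      have hs' : (s : ℝ) + 1 ≤ n := by exact_mod_cast hs
      constructor <;> linarith [Nat.cast_nonneg (α := ℝ) p, Nat.cast_nonneg (α := ℝ) s]
    have hqn : (n : ℝ) ≤ (q + 1) * n := le_mul_of_one_le_left (by positivity) (by simp)
    have hleft := hasPartialFractions_prod_div (n := n) (r := r + 1) (u := -((q + 1) * n))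
      (by positivity) fun p hp s hs => by
        have hs' : (s : ℝ) + 1 ≤ n := by exact_mod_cast hs
        push_cast
        rw [abs_le]
        constructor <;> linarith [(hbound p hp s hs).1, Nat.cast_nonneg (α := ℝ) p,
          mul_nonneg (Nat.cast_nonneg (α := ℝ) r) (Nat.cast_nonneg (α := ℝ) n)]
    have hright := hasPartialFractions_prod_div (n := n) (r := r + 1) (u := (q + 1) * n + 1)
      (by positivity) fun p hp s hs => by
        have hp' : (p : ℝ) ≤ n := by exact_mod_cast hp
        push_cast
        rw [abs_le]
        constructor <;> linarith [(hbound p hp s hs).2, Nat.cast_nonneg (α := ℝ) s,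
          mul_nonneg (Nat.cast_nonneg (α := ℝ) r) (Nat.cast_nonneg (α := ℝ) n)]
    have h := ((ih (by lia)).mul_pow (a := a) (k := 3) (by positivity) (by positivity) hleft
      (by lia)).mul_pow (a := a) (k := 3) (by positivity) (by positivity) hright (by lia)
    rw [show m + 6 * q + 3 + 3 = m + 6 * (q + 1) by ring] at h
    refine (h.mono (le_of_eq (by ring))).congr fun t _ => ?_
    rw [wellPoisedNum_succ, show 6 * (q + 1) = 6 * q + 3 + 3 by ring]
    push_cast
    ring

theorem hasPartialFractions_wellPoised {a r : ℕ} (n : ℕ) (ha : 6 * r + 1 ≤ a) :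
    HasPartialFractions n a
      ((((a : ℝ) + 1) ^ 2 * (n + 1) ^ 2) ^ a
        * ((2 ^ n) ^ (a - 6 * r) * ((6 * (r + 1)) ^ n) ^ (6 * r)))
      (wellPoised a r n) := by
  have h := hasPartialFractions_mul_wellPoisedNum_pow (a := a) (m := a - 6 * r) (r := r) (n := n)
    (by lia) (by lia) le_rfl
  have hsplit : a - 6 * r + 6 * r = a := by lia
  rw [hsplit] at h
  refine (h.mono (le_of_eq ?_)).congr fun t _ => ?_
  · rw [mul_pow _ ((2 : ℝ) ^ n), mul_pow _ ((6 * ((r : ℝ) + 1)) ^ n), mul_mul_mul_comm, ← pow_add,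
      hsplit]
  · rw [wellPoised, div_pow, ← congrArg (wellPoisedDen n t ^ ·) hsplit, pow_add]
    ring

end PartialFractions

section LinearForms

open Finset Filter Topology

lemma hasSum_sub_add_of_antitone {f : ℕ → ℝ} (hf : Antitone f) (h0 : Tendsto f atTop (𝓝 0))
    (j : ℕ) : HasSum (fun k => f k - f (k + j)) (∑ k ∈ range j, f k) := by
  rw [hasSum_iff_tendsto_nat_of_nonneg fun k => sub_nonneg.mpr (hf (Nat.le_add_right k j))]
  have hpartial : ∀ N, ∑ k ∈ range N, (f k - f (k + j))
      = ∑ k ∈ range j, f k - ∑ k ∈ range j, f (N + k) := by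
    intro N
    have hNj := sum_range_add f N j
    rw [add_comm N, sum_range_add] at hNj
    rw [sum_sub_distrib]
    simp only [add_comm _ j]
    linarith
  simp only [hpartial]
  simpa using (tendsto_const_nhds (x := ∑ k ∈ range j, f k)).sub
    (tendsto_finsetSum (range j) fun k _ => h0.comp (tendsto_add_atTop_nat k))

/-- The generalized harmonic number `1 + 2⁻ˢ + ⋯ + j⁻ˢ`. -/
noncomputable def genHarmonic (s j : ℕ) : ℝ := ∑ k ∈ range j, 1 / ((k : ℝ) + 1) ^ s

lemma abs_genHarmonic_le (s j : ℕ) : |genHarmonic s j| ≤ j := by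
  rw [genHarmonic, abs_of_nonneg (by positivity)]
  calc ∑ k ∈ range j, 1 / ((k : ℝ) + 1) ^ s ≤ ∑ _k ∈ range j, (1 : ℝ) := by
        refine sum_le_sum fun k _ => (div_le_one (by positivity)).mpr (one_le_pow₀ (by simp))
    _ = j := by simp

lemma pow_lcmUpto_mul_genHarmonic_mem_integerSubring {n j : ℕ} (s : ℕ) (hj : j ≤ n) :
    (Nat.lcmUpto n : ℝ) ^ s * genHarmonic s j ∈ integerSubring := by
  rw [genHarmonic, mul_sum]
  refine sum_mem fun k hk => ?_
  have hk := mem_range.mp hk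
  have h := lcmUpto_div_mem_integerSubring (n := n) (k := k + 1) (by lia) (by rw [abs_le]; lia)
  push_cast at h
  rw [mul_one_div, ← div_pow]
  exact pow_mem h s

lemma hasSum_zeta {s : ℕ} (hs : 2 ≤ s) : HasSum (fun k : ℕ => 1 / ((k : ℝ) + 1) ^ s) (zeta s) := by
  refine Summable.hasSum ?_
  simpa using (summable_nat_add_iff 1).mpr (Real.summable_one_div_nat_pow.mpr (by lia : 1 < s))

lemma hasSum_one_div_pow_sub_one_div_add_pow {s : ℕ} (hs : 1 ≤ s) (j : ℕ) :
    HasSum (fun k : ℕ => 1 / ((k : ℝ) + 1) ^ s - 1 / ((k : ℝ) + 1 + j) ^ s) (genHarmonic s j) := by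
  have hanti : Antitone fun k : ℕ => 1 / ((k : ℝ) + 1) ^ s := by
    intro k l hkl
    exact one_div_le_one_div_of_le (by positivity) (by gcongr)
  have hlim : Tendsto (fun k : ℕ => 1 / ((k : ℝ) + 1) ^ s) atTop (𝓝 0) := by
    simpa [Nat.one_le_iff_ne_zero.mp hs] using
      (tendsto_one_div_add_atTop_nhds_zero_nat (𝕜 := ℝ)).pow s
  refine (hasSum_sub_add_of_antitone hanti hlim j).congr_fun fun k => ?_
  push_cast
  rw [add_right_comm]

lemma hasSum_sum_div_add_pow {n s : ℕ} {e : ℕ → ℝ} (hs : 1 ≤ s)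
    (h : 2 ≤ s ∨ ∑ j ∈ range (n + 1), e j = 0) :
    HasSum (fun k : ℕ => ∑ j ∈ range (n + 1), e j / ((k : ℝ) + 1 + j) ^ s)
      ((∑ j ∈ range (n + 1), e j) * zeta s - ∑ j ∈ range (n + 1), e j * genHarmonic s j) := by
  have hzeta : HasSum (fun k : ℕ => (∑ j ∈ range (n + 1), e j) * (1 / ((k : ℝ) + 1) ^ s))
      ((∑ j ∈ range (n + 1), e j) * zeta s) := by
    rcases h with h | h
    · exact (hasSum_zeta h).mul_left _
    · simp [h, hasSum_zero]
  refine (hzeta.sub (hasSum_sum fun j _ =>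
    (hasSum_one_div_pow_sub_one_div_add_pow hs j).mul_left (e j))).congr_fun fun k => ?_
  rw [sum_mul, ← sum_sub_distrib]
  exact sum_congr rfl fun j _ => by ring

lemma hasDerivAt_sum_div_add_pow {n w : ℕ} (e : ℕ → ℕ → ℝ) (m : ℕ) {t : ℝ} (ht : 0 < t) :
    HasDerivAt (fun t : ℝ => ∑ i ∈ range w, ∑ j ∈ range (n + 1), e i j / (t + j) ^ (i + m))
      (∑ i ∈ range w, ∑ j ∈ range (n + 1), -((i + m : ℕ) * e i j) / (t + j) ^ (i + (m + 1))) t := by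
  refine HasDerivAt.fun_sum fun i _ => HasDerivAt.fun_sum fun j _ => ?_
  have htj : t + (j : ℝ) ≠ 0 := by positivity
  have hpow : HasDerivAt (fun t : ℝ => (t + j) ^ (i + m)) _ t :=
    ((hasDerivAt_id' t).add_const (j : ℝ)).fun_pow (i + m)
  convert! (hpow.fun_inv (pow_ne_zero _ htj)).const_mul (e i j) using 1
  rw [← add_assoc]
  rcases i + m with _ | l
  · simp
  · rw [Nat.add_sub_cancel]
    field_simp
    ring

/-- The number `ζ(i) + i(i+1)/2 · lam · ζ(i+2)` for odd `i ≥ 3`, and `0` for the other `i`,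
whose coefficient in the linear forms below vanishes. -/
noncomputable def oddZetaPair (lam : ℝ) (i : ℕ) : ℝ :=
  if Odd i ∧ 3 ≤ i then zeta i + ((i : ℝ) * (i + 1) / 2) * lam * zeta (i + 2) else 0

/-- The numbers `1`, `lam` and `oddZetaPair lam i` for `1 ≤ i ≤ w`, between which the linear forms
are constructed. -/
noncomputable def zetaPairFamily (lam : ℝ) (w : ℕ) : Fin 2 ⊕ Fin w → ℝ :=
  Sum.elim ![1, lam] fun i => oddZetaPair lam (i + 1)

namespace IsPartialFractions

variable {n w : ℕ} {M : ℝ} {c : ℕ → ℕ → ℝ} {F : ℝ → ℝ}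

lemma symmetrize (hc : IsPartialFractions n w M c F) (hF : ∀ t, F (-n - t) = -F t) :
    IsPartialFractions n w (2 * M) (fun i j => c i j + (-1) ^ i * c i (n - j))
      (fun t => 2 * F t) := by
  refine ⟨fun i hi j hj => ?_, fun i hi j hj => ?_, fun t ht => ?_⟩
  · refine (abs_add_le _ _).trans ?_
    rw [abs_mul, abs_pow, abs_neg, abs_one, one_pow, one_mul]
    linarith [hc.abs_le i hi j hj, hc.abs_le i hi (n - j) (Nat.sub_le n j)]
  · rw [add_mul, add_div, mul_assoc, mul_div_assoc (_ ^ i)]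
    exact add_mem (hc.integral i hi j hj) (mul_mem (pow_mem (neg_mem (one_mem _)) i)
      (hc.integral i hi (n - j) (Nat.sub_le n j)))
  · have hneg : ∀ j ≤ n, -(n : ℝ) - t + (j : ℕ) ≠ 0 := by
      intro j hj h
      refine ht (n - j) (Nat.sub_le n j) ?_
      rw [Nat.cast_sub hj]
      linarith
    have hreflect : ∀ i, ∑ j ∈ range (n + 1), c i j / (-n - t + j) ^ (i + 1)
        = -∑ j ∈ range (n + 1), (-1) ^ i * c i (n - j) / (t + j) ^ (i + 1) := by
      intro i
      rw [← sum_range_reflect, ← sum_neg_distrib]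
      refine sum_congr rfl fun j hj => ?_
      have hj := mem_range.mp hj
      rw [Nat.add_sub_cancel, Nat.cast_sub (Nat.lt_succ_iff.mp hj),
        show -(n : ℝ) - t + (n - j) = -1 * (t + j) by ring, mul_pow, pow_succ (-1 : ℝ)]
      rcases neg_one_pow_eq_or ℝ i with h | h <;>
        simp only [h, one_mul, neg_mul, neg_neg, div_neg, neg_div]
    have hsum := hc.eq_sum _ hneg
    simp only [hF, hreflect, sum_neg_distrib, neg_inj] at hsum
    simp only [add_div, sum_add_distrib, ← hsum, ← hc.eq_sum t ht]
    ring

lemma deriv_deriv (hc : IsPartialFractions n w M c F) {t : ℝ} (ht : 0 < t) :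
    deriv (deriv F) t = ∑ i ∈ range w, ∑ j ∈ range (n + 1),
      2 * ((i + 2).choose 2 * c i j) / (t + j) ^ (i + 3) := by
  have hF : ∀ x : ℝ, 0 < x → F x = ∑ i ∈ range w, ∑ j ∈ range (n + 1), c i j / (x + j) ^ (i + 1) :=
    fun x hx => hc.eq_sum x fun j _ => by positivity
  have hF' : ∀ x : ℝ, 0 < x → deriv F x = _ := fun x hx =>
    ((hasDerivAt_sum_div_add_pow c 1 hx).congr_of_eventuallyEq
      (by filter_upwards [lt_mem_nhds hx] with y hy using hF y hy)).deriv
  rw [((hasDerivAt_sum_div_add_pow _ 2 ht).congr_of_eventuallyEq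
    (by filter_upwards [lt_mem_nhds ht] with y hy using hF' y hy)).deriv]
  refine sum_congr rfl fun i _ => sum_congr rfl fun j _ => ?_
  rw [Nat.cast_choose_two]
  push_cast
  ring

lemma sum_eq_zero_of_tendsto (hc : IsPartialFractions n w M c F) (hw : 0 < w)
    (h0 : Tendsto (fun k : ℕ => (k : ℝ) * F k) atTop (𝓝 0)) :
    ∑ j ∈ range (n + 1), c 0 j = 0 := by
  have hterm : ∀ i j : ℕ, Tendsto (fun k : ℕ => (k : ℝ) / ((k : ℝ) + j) ^ (i + 1)) atTop
      (𝓝 (if i = 0 then 1 else 0)) := by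
    intro i j
    have hinv : Tendsto (fun k : ℕ => ((k : ℝ) + j)⁻¹) atTop (𝓝 0) :=
      (tendsto_atTop_add_const_right _ _ tendsto_natCast_atTop_atTop).inv_tendsto_atTop
    have h := (tendsto_natCast_div_add_atTop (j : ℝ)).mul (hinv.pow i)
    rw [one_mul, zero_pow_eq] at h
    exact h.congr fun k => by rw [inv_pow, ← div_eq_mul_inv, div_div, pow_succ']
  have hlim := tendsto_finsetSum (range w) fun i _ => tendsto_finsetSum (range (n + 1))
    fun j _ => (hterm i j).const_mul (c i j)
  have hsum : ∑ i ∈ range w, ∑ j ∈ range (n + 1), c i j * (if i = 0 then 1 else 0) = 0 := by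
    refine tendsto_nhds_unique hlim (h0.congr' ?_)
    filter_upwards [eventually_gt_atTop 0] with k hk
    have : (0 : ℝ) < k := by exact_mod_cast hk
    rw [hc.eq_sum k fun j _ => by positivity]
    simp only [mul_sum]
    exact sum_congr rfl fun i _ => sum_congr rfl fun j _ => by ring
  rwa [sum_eq_single_of_mem 0 (mem_range.mpr hw) fun i _ hi => by simp [hi], if_pos rfl,
    ← sum_mul, mul_one] at hsum

lemma hasSum (hc : IsPartialFractions n w M c F) (h0 : ∑ j ∈ range (n + 1), c 0 j = 0) :
    HasSum (fun k : ℕ => F (k + 1))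
      (∑ i ∈ range w, (∑ j ∈ range (n + 1), c i j) * zeta (i + 1)
        - ∑ i ∈ range w, ∑ j ∈ range (n + 1), c i j * genHarmonic (i + 1) j) := by
  rw [← sum_sub_distrib]
  refine (hasSum_sum fun i _ => hasSum_sum_div_add_pow (n := n) (Nat.le_add_left 1 i) ?_).congr_fun
    fun k => hc.eq_sum _ fun j _ => by positivity
  rcases Nat.eq_zero_or_pos i with rfl | hi
  · exact Or.inr h0
  · exact Or.inl (by lia)

lemma hasSum_deriv_deriv (hc : IsPartialFractions n w M c F) :
    HasSum (fun k : ℕ => deriv (deriv F) (k + 1) / 2)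
      (∑ i ∈ range w, (i + 2).choose 2 * (∑ j ∈ range (n + 1), c i j) * zeta (i + 3)
        - ∑ i ∈ range w, ∑ j ∈ range (n + 1),
          (i + 2).choose 2 * c i j * genHarmonic (i + 3) j) := by
  rw [← sum_sub_distrib]
  simp only [mul_sum]
  refine (hasSum_sum fun i _ => hasSum_sum_div_add_pow (n := n) (s := i + 3) (by lia)
    (Or.inl (by lia))).congr_fun fun k => ?_
  rw [hc.deriv_deriv (by positivity)]
  simp only [sum_div]
  exact sum_congr rfl fun i _ => sum_congr rfl fun j _ => by ring

lemma pow_mul_sum_mem_integerSubring (hc : IsPartialFractions n w M c F) {i : ℕ} (hi : i < w)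
    (m : ℕ) : (Nat.lcmUpto n : ℝ) ^ (w + m) * ∑ j ∈ range (n + 1), c i j ∈ integerSubring := by
  rw [mul_sum]
  refine sum_mem fun j hj => ?_
  convert mul_mem (hc.integral i hi j (Nat.lt_succ_iff.mp (mem_range.mp hj)))
    (pow_mem (natCast_mem integerSubring (Nat.lcmUpto n)) (i + 1 + m)) using 1
  have hd := cast_lcmUpto_ne_zero n
  field_simp
  ring

lemma pow_mul_sum_genHarmonic_mem_integerSubring (hc : IsPartialFractions n w M c F) {q m : ℕ}
    (hqm : q ≤ m) (x : ℕ → ℕ) :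
    (Nat.lcmUpto n : ℝ) ^ (w + m) * ∑ i ∈ range w, ∑ j ∈ range (n + 1),
      x i * c i j * genHarmonic (i + 1 + q) j ∈ integerSubring := by
  simp only [mul_sum]
  refine sum_mem fun i hi => sum_mem fun j hj => ?_
  have hj' := Nat.lt_succ_iff.mp (mem_range.mp hj)
  have hd := cast_lcmUpto_ne_zero n
  convert mul_mem (mul_mem (mul_mem (natCast_mem integerSubring (x i))
    (hc.integral i (mem_range.mp hi) j hj'))
    (pow_lcmUpto_mul_genHarmonic_mem_integerSubring (i + 1 + q) hj'))
    (pow_mem (natCast_mem integerSubring (Nat.lcmUpto n)) (m - q)) using 1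
  obtain ⟨l, rfl⟩ := Nat.exists_eq_add_of_le hqm
  rw [Nat.add_sub_cancel_left]
  field_simp
  ring

lemma abs_sum_le (hc : IsPartialFractions n w M c F) {i : ℕ} (hi : i < w) :
    |∑ j ∈ range (n + 1), c i j| ≤ (n + 1) * M := by
  refine (abs_sum_le_sum_abs _ _).trans ((sum_le_sum fun j hj =>
    hc.abs_le i hi j (Nat.lt_succ_iff.mp (mem_range.mp hj))).trans_eq ?_)
  simp

lemma abs_sum_genHarmonic_le (hc : IsPartialFractions n w M c F) (q : ℕ) {x : ℕ → ℕ} {X : ℝ}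
    (hx : ∀ i < w, (x i : ℝ) ≤ X) :
    |∑ i ∈ range w, ∑ j ∈ range (n + 1), x i * c i j * genHarmonic (i + 1 + q) j|
      ≤ w * (n + 1) * (X * M * n) := by
  have hterm : ∀ i ∈ range w, ∀ j ∈ range (n + 1),
      |x i * c i j * genHarmonic (i + 1 + q) j| ≤ X * M * n := by
    intro i hi j hj
    have hj' := Nat.lt_succ_iff.mp (mem_range.mp hj)
    have hX := hx i (mem_range.mp hi)
    have hcM := hc.abs_le i (mem_range.mp hi) j hj'
    have hH := (abs_genHarmonic_le (i + 1 + q) j).trans (Nat.cast_le.mpr hj')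
    rw [abs_mul, abs_mul, Nat.abs_cast]
    have hX0 := (Nat.cast_nonneg _).trans hX
    have hM0 := (abs_nonneg _).trans hcM
    gcongr
  refine (abs_sum_le_sum_abs _ _).trans ((sum_le_sum fun i hi =>
    (abs_sum_le_sum_abs _ _).trans (sum_le_sum fun j hj => hterm i hi j hj)).trans_eq ?_)
  simp only [sum_const, card_range, nsmul_eq_mul]
  push_cast
  ring

lemma hasSum_add_mul_deriv_deriv (hc : IsPartialFractions n w M c F) (lam : ℝ)
    (h0 : ∑ j ∈ range (n + 1), c 0 j = 0)
    (hodd : ∀ i, Odd i → ∑ j ∈ range (n + 1), c i j = 0) :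
    HasSum (fun k : ℕ => F (k + 1) + lam * (deriv (deriv F) (k + 1) / 2))
      (-(∑ i ∈ range w, ∑ j ∈ range (n + 1), c i j * genHarmonic (i + 1) j)
        - lam * (∑ i ∈ range w, ∑ j ∈ range (n + 1),
          (i + 2).choose 2 * c i j * genHarmonic (i + 3) j)
        + ∑ i ∈ range w, (∑ j ∈ range (n + 1), c i j) * oddZetaPair lam (i + 1)) := by
  have hpair : ∀ i, (∑ j ∈ range (n + 1), c i j) * oddZetaPair lam (i + 1)
      = (∑ j ∈ range (n + 1), c i j) * zeta (i + 1)
        + lam * ((i + 2).choose 2 * (∑ j ∈ range (n + 1), c i j) * zeta (i + 3)) := by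
    intro i
    rw [oddZetaPair]
    split_ifs with hi
    · rw [Nat.cast_choose_two]
      push_cast
      ring
    · have hvanish : ∑ j ∈ range (n + 1), c i j = 0 := by
        rcases Nat.eq_zero_or_pos i with rfl | hpos
        · exact h0
        · refine hodd i (Nat.not_even_iff_odd.mp fun heven => hi ⟨heven.add_one, ?_⟩)
          have := Nat.le_of_dvd hpos heven.two_dvd
          lia
      simp only [hvanish, zero_mul, mul_zero, add_zero]
  convert (hc.hasSum h0).add (hc.hasSum_deriv_deriv.mul_left lam) using 1
  simp only [hpair, sum_add_distrib, ← mul_sum]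
  ring

lemma exists_int_linearForm (hc : IsPartialFractions n w M c F) (hw : 0 < w) (lam : ℝ)
    (h0 : ∑ j ∈ range (n + 1), c 0 j = 0)
    (hodd : ∀ i, Odd i → ∑ j ∈ range (n + 1), c i j = 0) :
    ∃ p : Fin 2 ⊕ Fin w → ℤ,
      (∀ i, |(p i : ℝ)| ≤ (Nat.lcmUpto n : ℝ) ^ (w + 2) * (M * (w + 2) ^ 3 * (n + 1) ^ 2)) ∧
      HasSum (fun k : ℕ => (Nat.lcmUpto n : ℝ) ^ (w + 2)
        * (F (k + 1) + lam * (deriv (deriv F) (k + 1) / 2)))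
        (∑ i, p i * zetaPairFamily lam w i) := by
  set d : ℝ := (Nat.lcmUpto n : ℝ) ^ (w + 2) with hd
  obtain ⟨A₀, hA₀⟩ := exists_int_eq_of_mem_integerSubring
    (hc.pow_mul_sum_genHarmonic_mem_integerSubring (Nat.zero_le 2) fun _ => 1)
  obtain ⟨A₁, hA₁⟩ := exists_int_eq_of_mem_integerSubring
    (hc.pow_mul_sum_genHarmonic_mem_integerSubring le_rfl fun i => (i + 2).choose 2)
  choose P hP using fun i : Fin w =>
    exists_int_eq_of_mem_integerSubring (hc.pow_mul_sum_mem_integerSubring i.2 2)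
  rw [← hd] at hA₀ hA₁
  simp only [← hd] at hP
  have hchoose : ∀ i < w, (((i + 2).choose 2 : ℕ) : ℝ) ≤ (w + 2) ^ 2 := fun i hi => by
    exact_mod_cast (Nat.choose_le_pow _ _).trans (Nat.pow_le_pow_left (by lia) 2)
  have h1 : ((1 : ℕ) : ℝ) ≤ (w + 2) ^ 2 := by
    exact_mod_cast Nat.one_le_pow _ _ (by lia)
  refine ⟨Sum.elim ![-A₀, -A₁] P, ?_, ?_⟩
  · have hM : 0 ≤ M := (abs_nonneg _).trans (hc.abs_le 0 hw 0 n.zero_le)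
    have hharm : ∀ {x : ℝ}, |x| ≤ w * (n + 1) * ((w + 2) ^ 2 * M * n) →
        |d * x| ≤ d * (M * (w + 2) ^ 3 * (n + 1) ^ 2) := fun {x} hx => by
      rw [abs_mul, abs_of_nonneg (by positivity)]
      have : (w : ℝ) * (n + 1) * ((w + 2) ^ 2 * M * n)
          ≤ (w + 2) * (n + 1) * ((w + 2) ^ 2 * M * (n + 1)) := by gcongr <;> linarith
      exact mul_le_mul_of_nonneg_left (by linarith) (by positivity)
    rintro (i | i)
    · fin_cases i
      · simpa [← hA₀] using hharm (hc.abs_sum_genHarmonic_le 0 fun i _ => h1)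
      · simpa [← hA₁] using hharm (hc.abs_sum_genHarmonic_le 2 hchoose)
    · rw [Sum.elim_inr, ← hP, abs_mul, abs_of_nonneg (by positivity)]
      refine mul_le_mul_of_nonneg_left ((hc.abs_sum_le i.2).trans ?_) (by positivity)
      calc (n + 1) * M = M * 1 ^ 3 * (n + 1) ^ 1 := by ring
        _ ≤ M * (w + 2) ^ 3 * (n + 1) ^ 2 := by gcongr <;> norm_cast <;> lia
  · convert! (hc.hasSum_add_mul_deriv_deriv lam h0 hodd).mul_left d using 1
    simp only [Nat.cast_one, one_mul, add_zero] at hA₀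
    simp only [Fintype.sum_sum_type, Fin.sum_univ_two, zetaPairFamily, Sum.elim_inl,
      Sum.elim_inr, Matrix.cons_val_zero, Matrix.cons_val_one, Int.cast_neg, ← hA₀, ← hA₁, ← hP]
    rw [Fin.sum_univ_eq_sum_range fun i => d * (∑ j ∈ range (n + 1), c i j)
      * oddZetaPair lam (i + 1)]
    simp only [mul_assoc d, ← mul_sum]
    ring

end IsPartialFractions

lemma exists_int_linearForm_of_neg_reflection {n w : ℕ} {M : ℝ} {F : ℝ → ℝ} (lam : ℝ)
    (hF : HasPartialFractions n w M F) (hw : 0 < w) (hsymm : ∀ t, F (-n - t) = -F t)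
    (h0 : Tendsto (fun k : ℕ => (k : ℝ) * F k) atTop (𝓝 0)) :
    ∃ p : Fin 2 ⊕ Fin w → ℤ,
      (∀ i, |(p i : ℝ)| ≤ (Nat.lcmUpto n : ℝ) ^ (w + 2) * (2 * M * (w + 2) ^ 3 * (n + 1) ^ 2)) ∧
      HasSum (fun k : ℕ => (Nat.lcmUpto n : ℝ) ^ (w + 2)
        * (2 * F (k + 1) + lam * deriv (deriv F) (k + 1)))
        (∑ i, p i * zetaPairFamily lam w i) := by
  obtain ⟨c, hc⟩ := hF
  have h2F : Tendsto (fun k : ℕ => (k : ℝ) * (2 * F k)) atTop (𝓝 0) := by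
    simpa [mul_left_comm] using h0.const_mul 2
  have hodd : ∀ i, Odd i → ∑ j ∈ range (n + 1), (c i j + (-1) ^ i * c i (n - j)) = 0 := by
    intro i hi
    have hreflect := sum_range_reflect (c i) (n + 1)
    rw [Nat.add_sub_cancel] at hreflect
    simp only [hi.neg_one_pow, neg_one_mul, sum_add_distrib, sum_neg_distrib, hreflect,
      add_neg_cancel]
  obtain ⟨p, hp, hsum⟩ := (hc.symmetrize hsymm).exists_int_linearForm hw lam
    ((hc.symmetrize hsymm).sum_eq_zero_of_tendsto hw h2F) hodd
  refine ⟨p, hp, hsum.congr_fun fun k => ?_⟩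
  simp only [deriv_const_mul_field']
  ring

lemma wellPoisedDen_neg_sub {n : ℕ} (hn : Even n) (t : ℝ) :
    wellPoisedDen n (-n - t) = -wellPoisedDen n t := by
  rw [wellPoisedDen, ← prod_range_reflect]
  have hfactor : ∀ j ∈ range (n + 1), -(n : ℝ) - t + ((n + 1 - 1 - j : ℕ) : ℝ) = -(t + j) := by
    intro j hj
    rw [Nat.add_sub_cancel, Nat.cast_sub (Nat.lt_succ_iff.mp (mem_range.mp hj))]
    ring
  rw [prod_congr rfl hfactor, prod_neg, card_range, hn.add_one.neg_one_pow, neg_one_mul,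
    wellPoisedDen]

lemma wellPoisedNum_neg_sub (r n : ℕ) (t : ℝ) :
    wellPoisedNum r n (-n - t) = wellPoisedNum r n t := by
  rw [wellPoisedNum, wellPoisedNum, mul_comm, ← prod_mul_distrib, ← prod_mul_distrib]
  exact prod_congr rfl fun j _ => by ring

lemma wellPoised_neg_sub {a r n : ℕ} (ha : Odd a) (hn : Even n) (t : ℝ) :
    wellPoised a r n (-n - t) = -wellPoised a r n t := by
  rw [wellPoised, wellPoised, wellPoisedDen_neg_sub hn, wellPoisedNum_neg_sub, ha.neg_pow, div_neg]

end LinearForms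

section WellPoisedSum

open Finset Filter

lemma prod_range_add_one_add_mul (x : ℝ) (m : ℕ) :
    (∏ j ∈ range m, (x + 1 + j)) * x = (∏ j ∈ range m, (x + j)) * (x + m) := by
  have h := prod_range_succ' (fun j : ℕ => x + j) m
  rw [prod_range_succ] at h
  rw [h, Nat.cast_zero, add_zero]
  exact congrArg (· * x) (prod_congr rfl fun j _ => by push_cast; ring)

lemma prod_range_sub_mul (x : ℝ) (m : ℕ) :
    (∏ j ∈ range m, (x - j)) * (x - m) = (∏ j ∈ range m, (x - 1 - j)) * x := by
  have h := prod_range_succ' (fun j : ℕ => x - j) m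
  rw [prod_range_succ] at h
  rw [h, Nat.cast_zero, sub_zero]
  exact congrArg (· * x) (prod_congr rfl fun j _ => by push_cast; ring)

lemma wellPoisedNum_add_one_mul (r n : ℕ) (t : ℝ) :
    wellPoisedNum r n (t + 1) * ((t - r * n) * (t + n + 1)) =
      wellPoisedNum r n t * (t * (t + n + 1 + r * n)) := by
  have hfalling := prod_range_sub_mul t (r * n)
  have hrising := prod_range_add_one_add_mul (t + n + 1) (r * n)
  simp only [Nat.cast_mul] at hfalling hrising
  have heq : ∀ j : ℕ, t + 1 + n + 1 + j = t + n + 1 + 1 + j := fun j => by ring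
  simp only [wellPoisedNum, add_sub_cancel_right, heq]
  linear_combination hfalling * (∏ j ∈ range (r * n), (t + n + 1 + 1 + j)) * (t + n + 1) +
    (∏ j ∈ range (r * n), (t - 1 - j)) * t * hrising

lemma wellPoisedDen_add_one_mul (n : ℕ) (t : ℝ) :
    wellPoisedDen n (t + 1) * t = wellPoisedDen n t * (t + n + 1) := by
  rw [wellPoisedDen, wellPoisedDen, prod_range_add_one_add_mul, Nat.cast_add_one, add_assoc]

lemma wellPoisedDen_pos (n : ℕ) {t : ℝ} (ht : 0 < t) : 0 < wellPoisedDen n t :=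
  prod_pos fun j _ => by positivity

lemma sub_one_sub_pos {m j : ℕ} (hj : j ∈ range m) {t : ℝ} (ht : m < t) : 0 < t - 1 - j := by
  have : (j : ℝ) + 1 ≤ m := by exact_mod_cast mem_range.mp hj
  linarith

lemma wellPoisedNum_pos {r n : ℕ} {t : ℝ} (ht : (r : ℝ) * n < t) : 0 < wellPoisedNum r n t := by
  have ht0 : 0 < t := lt_of_le_of_lt (by positivity) ht
  exact mul_pos (prod_pos fun j hj => sub_one_sub_pos hj (by exact_mod_cast ht))
    (prod_pos fun j _ => by positivity)

lemma wellPoised_pos {a r n : ℕ} {t : ℝ} (ht : (r : ℝ) * n < t) : 0 < wellPoised a r n t := by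
  have hnum := wellPoisedNum_pos ht
  have hden := wellPoisedDen_pos n (lt_of_le_of_lt (by positivity) ht)
  have := n.factorial_pos
  rw [wellPoised]
  positivity

/-- The quotient `wellPoised a r n t / wellPoised a r n (t + 1)`. -/
noncomputable def wellPoisedRatio (a r n : ℕ) (t : ℝ) : ℝ :=
  ((t - r * n) / t) ^ 3 * ((t + n + 1) / (t + n + 1 + r * n)) ^ 3 * ((t + n + 1) / t) ^ a

lemma wellPoised_eq_ratio_mul (a r n : ℕ) {t : ℝ} (ht : 0 < t) :
    wellPoised a r n t = wellPoisedRatio a r n t * wellPoised a r n (t + 1) := by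
  have hden := wellPoisedDen_pos n ht
  have := wellPoisedDen_pos n (show 0 < t + 1 by positivity)
  have hnum : wellPoisedNum r n t = wellPoisedNum r n (t + 1) * ((t - r * n) / t) *
      ((t + n + 1) / (t + n + 1 + r * n)) := by
    have hshift := wellPoisedNum_add_one_mul r n t
    field_simp
    linarith
  have hden_add : wellPoisedDen n (t + 1) = wellPoisedDen n t * ((t + n + 1) / t) := by
    have hshift := wellPoisedDen_add_one_mul n t
    field_simp
    linarith
  rw [wellPoised, wellPoised, wellPoisedRatio, hnum, hden_add, mul_pow (wellPoisedDen n t)]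
  have hratio : 0 < (t + n + 1) / t := by positivity
  generalize (t + n + 1) / t = w at *
  field_simp

lemma wellPoisedNum_le {r n : ℕ} (hr : 1 ≤ r) {t : ℝ} (ht : (r : ℝ) * n + 1 ≤ t) :
    wellPoisedNum r n t ≤ t ^ (r * n) * (3 * t) ^ (r * n) := by
  have ht0 : 0 < t := lt_of_lt_of_le (by positivity) ht
  have hn : (n : ℝ) ≤ r * n := le_mul_of_one_le_left (by positivity) (by exact_mod_cast hr)
  have hfalling : ∏ j ∈ range (r * n), (t - 1 - j) ≤ t ^ (r * n) := by
    refine (prod_le_prod (g := fun _ => t) (fun j hj => (sub_one_sub_pos hj ?_).le)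
      fun j _ => ?_).trans_eq (by simp)
    · push_cast
      linarith
    · linarith [j.cast_nonneg (α := ℝ)]
  have hrising : ∏ j ∈ range (r * n), (t + n + 1 + j) ≤ (3 * t) ^ (r * n) := by
    refine (prod_le_prod (g := fun _ => 3 * t) (fun j _ => by positivity)
      fun j hj => ?_).trans_eq (by simp)
    have : (j : ℝ) + 1 ≤ r * n := by exact_mod_cast mem_range.mp hj
    linarith
  exact mul_le_mul hfalling hrising (prod_nonneg fun j _ => by positivity) (by positivity)

lemma pow_le_wellPoisedDen (n : ℕ) {t : ℝ} (ht : 0 ≤ t) : t ^ (n + 1) ≤ wellPoisedDen n t := by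
  refine (Eq.le (by simp)).trans (prod_le_prod (f := fun _ => t) (fun _ _ => ht) fun j _ => ?_)
  exact le_add_of_nonneg_right j.cast_nonneg

lemma wellPoised_mul_pow_le {a r : ℕ} (n : ℕ) (hr : 1 ≤ r) (ha : 6 * r ≤ a) {t : ℝ}
    (ht : (r : ℝ) * n + 1 ≤ t) :
    wellPoised a r n t * (r : ℝ) ^ (n * (a - 6 * r)) * t ^ a ≤ 27 ^ (r * n) := by
  have ht0 : 0 < t := lt_of_lt_of_le (by positivity) ht
  have hfact : (n.factorial : ℝ) ≤ (n : ℝ) ^ n := by exact_mod_cast Nat.factorial_le_pow n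
  have hnum := wellPoisedNum_le hr ht
  have hnum_pos := wellPoisedNum_pos (r := r) (n := n) (t := t) (by linarith)
  have hden := pow_le_wellPoisedDen n ht0.le
  obtain ⟨m, rfl⟩ := Nat.exists_eq_add_of_le ha
  rw [wellPoised, Nat.add_sub_cancel_left]
  calc (n.factorial : ℝ) ^ m * wellPoisedNum r n t ^ 3 / wellPoisedDen n t ^ (6 * r + m) *
        (r : ℝ) ^ (n * m) * t ^ (6 * r + m)
      ≤ ((n : ℝ) ^ n) ^ m * (t ^ (r * n) * (3 * t) ^ (r * n)) ^ 3 / (t ^ (n + 1)) ^ (6 * r + m) *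
          (r : ℝ) ^ (n * m) * t ^ (6 * r + m) := by gcongr
    _ = 27 ^ (r * n) * ((r * n : ℝ) ^ (n * m) * t ^ (r * n * 6) * t ^ (6 * r + m) /
          t ^ ((n + 1) * (6 * r + m))) := by
        rw [mul_pow (3 : ℝ), mul_pow (r : ℝ), ← pow_mul, ← pow_mul,
          show (27 : ℝ) = 3 ^ 3 by norm_num, ← pow_mul, mul_comm 3 (r * n), pow_mul _ _ 3]
        ring
    _ ≤ 27 ^ (r * n) * (t ^ (n * m) * t ^ (r * n * 6) * t ^ (6 * r + m) /
          t ^ ((n + 1) * (6 * r + m))) := by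
        have : (r * n : ℝ) ≤ t := by linarith
        gcongr
    _ = 27 ^ (r * n) := by
        rw [← pow_add, ← pow_add, div_eq_one_iff_eq (by positivity) |>.mpr (by ring), mul_one]

/-- The term of `∑ k, wellPoised a r n k` at `k = r * n + 1 + m`: these are the nonzero terms,
as `wellPoised a r n` vanishes at the integers `1, …, r * n`. -/
noncomputable def wellPoisedTerm (a r n m : ℕ) : ℝ := wellPoised a r n (r * n + 1 + m)

/-- The quotient of two consecutive terms `wellPoisedTerm a r n (m - 1) / wellPoisedTerm a r n m`
for `m ≥ 1`; it vanishes for `m = 0`. -/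
noncomputable def termRatio (a r n m : ℕ) : ℝ := wellPoisedRatio a r n (r * n + m)

lemma wellPoisedTerm_pos (a r n m : ℕ) : 0 < wellPoisedTerm a r n m :=
  wellPoised_pos (by linarith [m.cast_nonneg (α := ℝ)])

lemma wellPoisedTerm_eq_ratio_mul (a r n m : ℕ) :
    wellPoisedTerm a r n m = termRatio a r n (m + 1) * wellPoisedTerm a r n (m + 1) := by
  rw [wellPoisedTerm, wellPoised_eq_ratio_mul a r n (by positivity), termRatio, wellPoisedTerm,
    Nat.cast_add_one, add_right_comm (r * n : ℝ) 1 m, add_assoc _ (m : ℝ) 1,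
    add_right_comm (r * n : ℝ) 1, add_assoc]

lemma termRatio_zero (a r n : ℕ) : termRatio a r n 0 = 0 := by
  simp [termRatio, wellPoisedRatio]

variable {a r : ℕ}

lemma wellPoisedTerm_le (n m : ℕ) (hr : 1 ≤ r) (ha : 6 * r ≤ a) :
    wellPoisedTerm a r n m ≤
      27 ^ (r * n) / (r : ℝ) ^ (n * (a - 6 * r)) * (1 / ((m : ℝ) + 1) ^ a) := by
  have hterm := wellPoisedTerm_pos a r n m
  rw [div_mul_div_comm, mul_one, le_div_iff₀ (by positivity), ← mul_assoc]
  refine le_trans ?_ (wellPoised_mul_pow_le n hr ha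
    (le_add_of_nonneg_right (m.cast_nonneg (α := ℝ))))
  have : (m : ℝ) + 1 ≤ r * n + 1 + m := by
    linarith [show (0 : ℝ) ≤ r * n by positivity]
  rw [← wellPoisedTerm]
  gcongr

lemma summable_wellPoisedTerm_mul (n : ℕ) (hr : 1 ≤ r) (ha : 6 * r + 1 ≤ a) (c : ℝ) :
    Summable fun m : ℕ => wellPoisedTerm a r n m * (c + m) := by
  have hsq : Summable fun m : ℕ => 1 / ((m : ℝ) + 1) ^ 2 := by
    simpa using (summable_nat_add_iff 1).mpr (Real.summable_one_div_nat_pow.mpr one_lt_two)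
  refine Summable.of_norm_bounded
    (hsq.mul_left (27 ^ (r * n) / (r : ℝ) ^ (n * (a - 6 * r)) * (|c| + 1))) fun m => ?_
  have hterm := (wellPoisedTerm_pos a r n m).le
  rw [Real.norm_eq_abs, abs_mul, abs_of_nonneg hterm]
  have hlin : |c + m| ≤ (|c| + 1) * (m + 1) := by
    refine (abs_add_le _ _).trans ?_
    rw [Nat.abs_cast]
    nlinarith [abs_nonneg c, m.cast_nonneg (α := ℝ)]
  have hpow : (1 : ℝ) / ((m : ℝ) + 1) ^ a * (m + 1) ≤ 1 / ((m : ℝ) + 1) ^ 2 := by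
    rw [div_mul_eq_mul_div, one_mul, div_le_div_iff₀ (by positivity) (by positivity), one_mul,
      ← pow_succ']
    exact pow_le_pow_right₀ (by simp) (by lia)
  calc wellPoisedTerm a r n m * |c + m|
      ≤ (27 ^ (r * n) / (r : ℝ) ^ (n * (a - 6 * r)) * (1 / ((m : ℝ) + 1) ^ a)) *
          ((|c| + 1) * (m + 1)) :=
        mul_le_mul (wellPoisedTerm_le n m hr (by lia)) hlin (abs_nonneg _) (by positivity)
    _ = 27 ^ (r * n) / (r : ℝ) ^ (n * (a - 6 * r)) * (|c| + 1) *
          (1 / ((m : ℝ) + 1) ^ a * (m + 1)) := by ring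
    _ ≤ _ := by gcongr

lemma summable_wellPoisedTerm (n : ℕ) (hr : 1 ≤ r) (ha : 6 * r + 1 ≤ a) :
    Summable (wellPoisedTerm a r n) :=
  ((summable_wellPoisedTerm_mul n hr ha 1).sub (summable_wellPoisedTerm_mul n hr ha 0)).congr
    fun m => by ring

lemma tsum_wellPoisedTerm_le (n : ℕ) (hr : 1 ≤ r) (ha : 6 * r + 1 ≤ a) :
    ∑' m, wellPoisedTerm a r n m ≤ 2 * (27 ^ (r * n) / (r : ℝ) ^ (n * (a - 6 * r))) := by
  have hsq : HasSum (fun m : ℕ => 1 / ((m : ℝ) + 1) ^ 2) (Real.pi ^ 2 / 6) := by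
    simpa using (hasSum_nat_add_iff' 1).mpr hasSum_zeta_two
  have hpi : Real.pi ^ 2 / 6 ≤ 2 := by nlinarith [Real.pi_lt_d2, Real.pi_pos]
  have hle := hasSum_le (fun m => ?_) (summable_wellPoisedTerm n hr ha).hasSum
    (hsq.mul_left (27 ^ (r * n) / (r : ℝ) ^ (n * (a - 6 * r))))
  · refine hle.trans ?_
    rw [mul_comm 2]
    gcongr
  · refine (wellPoisedTerm_le n m hr (by lia)).trans ?_
    gcongr
    · simp
    · lia

end WellPoisedSum

section Concentration

open Finset

section TermRatio

variable {g s : ℕ → ℝ} (hg : ∀ m, 0 ≤ g m) (hsum : Summable g)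
  (hratio : ∀ m, g m = s (m + 1) * g (m + 1)) (hs0 : s 0 = 0)
include hsum hratio hs0

-- Summation by parts: `∑ g m * s m = ∑ g m` and `∑ g m * s m ^ 2 = ∑ g m * s (m + 1)`, so the sum
-- of `g m * (1 - s m) ^ 2` is that of `g m * (s (m + 1) - s m)`.
include hg in
lemma exists_hasSum_mul_one_sub_sq_le {B ε : ℝ} (hs : ∀ m, 0 ≤ s m) (hB : ∀ m, s m ≤ B)
    (hε : ∀ m, s (m + 1) - s m ≤ ε) :
    ∃ S ≤ ε * ∑' m, g m, HasSum (fun m => g m * (1 - s m) ^ 2) S := by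
  have hsucc : Summable fun m => g m * s (m + 1) :=
    (hsum.mul_right B).of_nonneg_of_le (fun m => mul_nonneg (hg m) (hs _))
      fun m => mul_le_mul_of_nonneg_left (hB _) (hg m)
  have hone : HasSum (fun m => g m * s m) (∑' m, g m) := by
    rw [← hasSum_nat_add_iff' 1]
    simp only [range_one, sum_singleton, hs0, mul_zero, sub_zero]
    refine hsum.hasSum.congr_fun fun m => ?_
    rw [hratio m, mul_comm]
  have htwo : HasSum (fun m => g m * s m ^ 2) (∑' m, g m * s (m + 1)) := by
    rw [← hasSum_nat_add_iff' 1]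
    simp only [range_one, sum_singleton, hs0, mul_zero, sub_zero, ne_eq, OfNat.ofNat_ne_zero,
      not_false_eq_true, zero_pow]
    refine hsucc.hasSum.congr_fun fun m => ?_
    rw [hratio m]
    ring
  refine ⟨∑' m, g m * s (m + 1) - ∑' m, g m, ?_, ?_⟩
  · refine hasSum_le (fun m => ?_) (hsucc.hasSum.sub hone) (hsum.hasSum.mul_left ε)
    linarith [mul_le_mul_of_nonneg_left (hε m) (hg m)]
  · convert! ((hsum.hasSum.sub (hone.mul_left 2)).add htwo) using 1
    · ext m
      ring
    · ring

lemma hasSum_mul_ratio_sub_one {c : ℝ} (hlin : Summable fun m : ℕ => g m * (c + m)) :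
    HasSum (fun m : ℕ => g m * ((c + m) * (s m - 1))) (∑' m, g m) := by
  have hshift : HasSum (fun m : ℕ => g m * (c + m) * s m)
      (∑' m : ℕ, g m * (c + m) + ∑' m, g m) := by
    rw [← hasSum_nat_add_iff' 1]
    simp only [range_one, sum_singleton, hs0, mul_zero, sub_zero]
    refine (hlin.hasSum.add hsum.hasSum).congr_fun fun m => ?_
    rw [hratio m]
    push_cast
    ring
  have h := hshift.sub hlin.hasSum
  rw [add_sub_cancel_left] at h
  exact h.congr_fun fun m => by ring

end TermRatio

section Increment

lemma div_add_le_div_add_add_one {q x : ℝ} (hq : 0 < q) (hx : 0 ≤ x) :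
    x / (x + q) ≤ (x + 1) / (x + 1 + q) := by
  rw [div_le_div_iff₀ (by positivity) (by positivity)]
  nlinarith

lemma div_add_add_one_sub_le {q x : ℝ} (hq : 0 < q) (hx : 0 ≤ x) :
    (x + 1) / (x + 1 + q) - x / (x + q) ≤ 1 / q := by
  have hx1 : 0 < x + 1 + q := by positivity
  have hx0 : 0 < x + q := by positivity
  rw [div_sub_div _ _ hx1.ne' hx0.ne', div_le_div_iff₀ (by positivity) hq]
  nlinarith

lemma cube_sub_cube_le {x y c : ℝ} (hx : 0 ≤ x) (hxy : x ≤ y) (hy : y ≤ 1) (hc : y - x ≤ c) :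
    y ^ 3 - x ^ 3 ≤ 3 * c := by
  have hy0 : 0 ≤ y := hx.trans hxy
  have hsum : y ^ 2 + y * x + x ^ 2 ≤ 3 := by nlinarith
  calc y ^ 3 - x ^ 3 = (y - x) * (y ^ 2 + y * x + x ^ 2) := by ring
    _ ≤ c * 3 := mul_le_mul hc hsum (by positivity) (by linarith)
    _ = 3 * c := mul_comm _ _

lemma mul_mul_sub_mul_mul_le {u v w u' v' w' c d : ℝ} (hu : 0 ≤ u) (hv : 0 ≤ v) (hw' : 0 ≤ w')
    (huu' : u ≤ u') (hvv' : v ≤ v') (hw'w : w' ≤ w) (hu' : u' ≤ 1) (hv' : v' ≤ 1) (hd : w' ≤ d)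
    (huc : u' - u ≤ c) (hvc : v' - v ≤ c) :
    u' * v' * w' - u * v * w ≤ 2 * c * d := by
  have huv : u' * v' - u * v ≤ 2 * c := by nlinarith
  calc u' * v' * w' - u * v * w ≤ u' * v' * w' - u * v * w' := by gcongr
    _ = (u' * v' - u * v) * w' := by ring
    _ ≤ 2 * c * d := mul_le_mul huv hd hw' (by linarith)

end Increment

variable {a r n : ℕ}

lemma termRatio_eq (a r n m : ℕ) :
    termRatio a r n m = ((m : ℝ) / (m + r * n)) ^ 3 *
      ((m + r * n + n + 1 : ℝ) / (m + r * n + n + 1 + r * n)) ^ 3 *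
      ((m + r * n + n + 1 : ℝ) / (m + r * n)) ^ a := by
  rw [termRatio, wellPoisedRatio, add_sub_cancel_left, add_comm (r * n : ℝ) m]

lemma termRatio_nonneg (a r n m : ℕ) : 0 ≤ termRatio a r n m := by
  rw [termRatio_eq]
  positivity

lemma natCast_le_mul (n : ℕ) (hr : 1 ≤ r) : (n : ℝ) ≤ r * n :=
  le_mul_of_one_le_left (by positivity) (by exact_mod_cast hr)

lemma add_add_one_div_le_three (hr : 1 ≤ r) (hn : 1 ≤ n) {x : ℝ} (hx : 0 ≤ x) :
    (x + r * n + n + 1) / (x + r * n) ≤ 3 := by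
  have hn' : (1 : ℝ) ≤ n := by exact_mod_cast hn
  have hrn := natCast_le_mul n hr
  rw [div_le_iff₀ (by linarith)]
  linarith

lemma termRatio_le_mul_three_pow (a m : ℕ) (hr : 1 ≤ r) (hn : 1 ≤ n) :
    termRatio a r n m ≤ ((m : ℝ) / (m + r * n)) ^ 3 * 3 ^ a := by
  have hone : (m + r * n + n + 1 : ℝ) / (m + r * n + n + 1 + r * n) ≤ 1 :=
    div_le_one_of_le₀ (by linarith [show (0 : ℝ) ≤ r * n by positivity]) (by positivity)
  rw [termRatio_eq]
  have hpow := pow_le_pow_left₀ (by positivity)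
    (add_add_one_div_le_three hr hn (m.cast_nonneg (α := ℝ))) a
  exact mul_le_mul (mul_le_of_le_one_right (by positivity) (pow_le_one₀ (by positivity) hone))
    hpow (by positivity) (by positivity)

lemma div_add_natCast_le_one (m : ℕ) : (m : ℝ) / (m + r * n) ≤ 1 :=
  div_le_one_of_le₀ (by linarith [show (0 : ℝ) ≤ r * n by positivity]) (by positivity)

lemma termRatio_le_three_pow (a m : ℕ) (hr : 1 ≤ r) (hn : 1 ≤ n) : termRatio a r n m ≤ 3 ^ a :=
  (termRatio_le_mul_three_pow a m hr hn).trans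
    (mul_le_of_le_one_left (by positivity) (pow_le_one₀ (by positivity) (div_add_natCast_le_one m)))

lemma termRatio_le_mul_div (a m : ℕ) (hr : 1 ≤ r) (hn : 1 ≤ n) :
    termRatio a r n m ≤ 3 ^ a * (m / n) := by
  have : (0 : ℝ) < n := by exact_mod_cast hn
  have hrn := natCast_le_mul n hr
  refine (termRatio_le_mul_three_pow a m hr hn).trans ?_
  rw [mul_comm]
  refine mul_le_mul_of_nonneg_left ?_ (by positivity)
  calc ((m : ℝ) / (m + r * n)) ^ 3 ≤ (m / (m + r * n)) ^ 1 :=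
        pow_le_pow_of_le_one (by positivity) (div_add_natCast_le_one m) (by norm_num)
    _ ≤ m / n := by
        rw [pow_one]
        gcongr
        linarith [m.cast_nonneg (α := ℝ)]

lemma termRatio_succ_sub_le (a m : ℕ) (hr : 1 ≤ r) (hn : 1 ≤ n) :
    termRatio a r n (m + 1) - termRatio a r n m ≤ 6 * 3 ^ a / n := by
  have hn' : (0 : ℝ) < n := by exact_mod_cast hn
  have hrn := natCast_le_mul n hr
  have hq : (0 : ℝ) < r * n := by linarith
  have hstep : (1 : ℝ) / (r * n) ≤ 1 / n := one_div_le_one_div_of_le hn' hrn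
  have hy : (0 : ℝ) ≤ m + r * n + n + 1 := by positivity
  have hu := div_add_le_div_add_add_one hq (m.cast_nonneg (α := ℝ))
  have hv := div_add_le_div_add_add_one hq hy
  have hu1 : ((m : ℝ) + 1) / (m + 1 + r * n) ≤ 1 := div_le_one_of_le₀ (by linarith) (by positivity)
  have hv1 : (m + r * n + n + 1 + 1 : ℝ) / (m + r * n + n + 1 + 1 + r * n) ≤ 1 :=
    div_le_one_of_le₀ (by linarith) (by positivity)
  have hw : (m + 1 + r * n + n + 1 : ℝ) / (m + 1 + r * n) ≤
      (m + r * n + n + 1) / (m + r * n) := by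
    rw [div_le_div_iff₀ (by positivity) (by positivity)]
    nlinarith
  have heq : (m + 1 + r * n + n + 1 : ℝ) = m + r * n + n + 1 + 1 := by ring
  have hu3 := cube_sub_cube_le (by positivity) hu hu1
    ((div_add_add_one_sub_le hq (by positivity)).trans hstep)
  have hv3 := cube_sub_cube_le (by positivity) hv hv1
    ((div_add_add_one_sub_le hq hy).trans hstep)
  have hw3 := pow_le_pow_left₀ (by positivity)
    (add_add_one_div_le_three hr hn (show (0 : ℝ) ≤ m + 1 by positivity)) a
  rw [termRatio_eq, termRatio_eq, Nat.cast_add_one]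
  rw [heq] at hw3 hw ⊢
  refine (mul_mul_sub_mul_mul_le (by positivity) (by positivity) (by positivity)
    (pow_le_pow_left₀ (by positivity) hu 3) (pow_le_pow_left₀ (by positivity) hv 3)
    (pow_le_pow_left₀ (by positivity) hw a) (pow_le_one₀ (by positivity) hu1)
    (pow_le_one₀ (by positivity) hv1) hw3 hu3 hv3).trans_eq ?_
  ring

lemma exists_hasSum_wellPoisedTerm_mul_one_sub_sq_le (hr : 1 ≤ r) (hn : 1 ≤ n)
    (ha : 6 * r + 1 ≤ a) :
    ∃ S ≤ 6 * 3 ^ a / n * ∑' m, wellPoisedTerm a r n m,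
      HasSum (fun m => wellPoisedTerm a r n m * (1 - termRatio a r n m) ^ 2) S :=
  exists_hasSum_mul_one_sub_sq_le (fun m => (wellPoisedTerm_pos a r n m).le)
    (summable_wellPoisedTerm n hr ha) (wellPoisedTerm_eq_ratio_mul a r n) (termRatio_zero a r n)
    (termRatio_nonneg a r n) (fun m => termRatio_le_three_pow a m hr hn)
    fun m => termRatio_succ_sub_le a m hr hn

-- The sum is carried by the `m` with `termRatio a r n m` close to `1`, which are of order `n`.
lemma one_div_le_mul_one_sub_termRatio_sq_add (a : ℕ) {m : ℕ} (hr : 1 ≤ r) (hn : 1 ≤ n)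
    (hm : 1 ≤ m) :
    1 / (m : ℝ) ≤ 4 * (1 - termRatio a r n m) ^ 2 + 2 * 3 ^ a / n := by
  have hm' : (1 : ℝ) ≤ m := by exact_mod_cast hm
  have hn' : (0 : ℝ) < n := by exact_mod_cast hn
  rcases le_or_gt (termRatio a r n m) (1 / 2) with hle | hgt
  · have hone : 1 / (m : ℝ) ≤ 1 := div_le_one_of_le₀ hm' (by positivity)
    have : 0 ≤ 2 * (3 : ℝ) ^ a / n := by positivity
    nlinarith
  · have hlt : 1 / 2 < 3 ^ a * ((m : ℝ) / n) := hgt.trans_le (termRatio_le_mul_div a m hr hn)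
    rw [mul_div_assoc', lt_div_iff₀ hn'] at hlt
    have hinv : 1 / (m : ℝ) ≤ 2 * 3 ^ a / n := by
      rw [div_le_div_iff₀ (by linarith) hn']
      linarith
    nlinarith [sq_nonneg (1 - termRatio a r n m)]

end Concentration

section ShiftedSums

open Finset Filter Topology

variable {a r n : ℕ}

lemma one_sub_mul_one_add_le_wellPoisedRatio (a : ℕ) {t : ℝ} (ht0 : 0 < t)
    (ht : (r : ℝ) * n ≤ t) :
    (1 - 6 * (r * n / t)) * (1 + a * ((n + 1) / t)) ≤ wellPoisedRatio a r n t := by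
  have : 0 ≤ (r : ℝ) * n / t := by positivity
  have hx1 : 0 ≤ 1 - (r : ℝ) * n / t := by
    rw [sub_nonneg, div_le_one ht0]
    exact ht
  have hleft : (t - r * n) / t = 1 - r * n / t := by field_simp
  have hright : 1 - r * n / t ≤ (t + n + 1) / (t + n + 1 + r * n) := by
    rw [show t + n + 1 = t + n + 1 + r * n - r * n by ring, sub_div, sub_add_cancel,
      div_self (by positivity)]
    gcongr
    linarith [n.cast_nonneg (α := ℝ), show (0 : ℝ) ≤ r * n by positivity]
  have hbern : 1 - 6 * (r * n / t) ≤ (1 - r * n / t) ^ 6 := by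
    refine le_trans (Eq.le ?_) (one_add_mul_le_pow (a := -(r * n / t)) (by linarith) 6)
    push_cast
    ring
  have hbern' : 1 + a * ((n + 1) / t) ≤ ((t + n + 1) / t) ^ a := by
    rw [add_assoc, add_div t, div_self ht0.ne']
    exact one_add_mul_le_pow ((by norm_num : (-2 : ℝ) ≤ 0).trans (by positivity)) a
  rw [wellPoisedRatio, hleft]
  refine mul_le_mul (hbern.trans ?_) hbern' (by positivity) (by positivity)
  rw [show 6 = 3 + 3 from rfl, pow_add]
  gcongr

lemma le_mul_wellPoisedRatio_sub_one (hr : 1 ≤ r) (hn : 1 ≤ n) (ha : 6 * r + 1 ≤ a) {t : ℝ}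
    (ht : 12 * (r : ℝ) * a * n ≤ t) :
    ((n : ℝ) + 1) / 2 ≤ t * (wellPoisedRatio a r n t - 1) := by
  have hr' : (1 : ℝ) ≤ r := by exact_mod_cast hr
  have hn' : (1 : ℝ) ≤ n := by exact_mod_cast hn
  have ha' : 6 * (r : ℝ) + 1 ≤ a := by exact_mod_cast ha
  have hrn : (1 : ℝ) ≤ r * n := one_le_mul_of_one_le_of_one_le hr' hn'
  have hran : (r : ℝ) * n ≤ r * a * n := by nlinarith
  have ht0 : 0 < t := by linarith
  have hsmall : (r : ℝ) * a * n / t ≤ 1 / 12 := by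
    rw [div_le_iff₀ ht0]
    linarith
  have hle := one_sub_mul_one_add_le_wellPoisedRatio (r := r) (n := n) a ht0 (by linarith)
  calc ((n : ℝ) + 1) / 2 ≤ a * (n + 1) - 6 * (r * n) - 6 * (n + 1) * (r * a * n / t) := by
        nlinarith
    _ = t * ((1 - 6 * (r * n / t)) * (1 + a * ((n + 1) / t)) - 1) := by
        field_simp
        ring
    _ ≤ t * (wellPoisedRatio a r n t - 1) := by gcongr

lemma mul_add_mul_termRatio_sub_one_ge (hr : 1 ≤ r) (hn : 1 ≤ n) (ha : 6 * r + 1 ≤ a) (m : ℕ) :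
    ((n : ℝ) + 1) / 2 - (if m ∈ range (12 * r * a * n) then 14 * ((r : ℝ) * a * n) else 0) ≤
      (r * n + m) * (termRatio a r n m - 1) := by
  have hn' : (1 : ℝ) ≤ n := by exact_mod_cast hn
  have ha' : (1 : ℝ) ≤ a := by exact_mod_cast (by lia : 1 ≤ a)
  have hrn : (n : ℝ) ≤ r * n := natCast_le_mul n hr
  have hran : (r : ℝ) * n ≤ r * a * n := by nlinarith
  split_ifs with hm
  · have hm' : (m : ℝ) ≤ 12 * r * a * n := by exact_mod_cast (mem_range.mp hm).le
    have hpos : 0 ≤ (r * n + m) * termRatio a r n m :=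
      mul_nonneg (by positivity) (termRatio_nonneg a r n m)
    linarith
  · have hm' : 12 * (r : ℝ) * a * n ≤ m := by exact_mod_cast not_lt.mp (mem_range.not.mp hm)
    rw [sub_zero]
    exact le_mul_wellPoisedRatio_sub_one hr hn ha (by linarith)

lemma tsum_wellPoisedTerm_le_sum_range (hr : 1 ≤ r) (hn : 2 ≤ n) (ha : 6 * r + 1 ≤ a) :
    ∑' m, wellPoisedTerm a r n m ≤
      56 * r * a * ∑ m ∈ range (12 * r * a * n), wellPoisedTerm a r n m := by
  have hn' : (2 : ℝ) ≤ n := by exact_mod_cast hn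
  have hsum := summable_wellPoisedTerm n hr ha
  have hhead : HasSum (fun m : ℕ => if m ∈ range (12 * r * a * n) then wellPoisedTerm a r n m
      else 0) (∑ m ∈ range (12 * r * a * n), wellPoisedTerm a r n m) := by
    rw [← sum_congr rfl fun m hm => if_pos hm]
    exact hasSum_sum_of_ne_finset_zero fun m hm => if_neg hm
  have hle := hasSum_le (fun m => ?_)
    ((hsum.hasSum.mul_left (((n : ℝ) + 1) / 2)).sub (hhead.mul_left (14 * ((r : ℝ) * a * n))))
    (hasSum_mul_ratio_sub_one hsum (wellPoisedTerm_eq_ratio_mul a r n) (termRatio_zero a r n)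
      (summable_wellPoisedTerm_mul n hr ha (r * n)))
  · have hnonneg : 0 ≤ ∑' m, wellPoisedTerm a r n m :=
      tsum_nonneg fun m => (wellPoisedTerm_pos a r n m).le
    have hquarter : (n : ℝ) / 4 * ∑' m, wellPoisedTerm a r n m ≤
        (n - 1) / 2 * ∑' m, wellPoisedTerm a r n m :=
      mul_le_mul_of_nonneg_right (by linarith) hnonneg
    refine le_of_mul_le_mul_left ?_ (by linarith : (0 : ℝ) < n)
    linarith
  · have hterm := mul_le_mul_of_nonneg_left
      (mul_add_mul_termRatio_sub_one_ge hr (by lia : 1 ≤ n) ha m) (wellPoisedTerm_pos a r n m).le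
    split_ifs at hterm ⊢ <;> linarith

lemma pow_mul_wellPoisedNum_le (hr : 1 ≤ r) {t : ℝ} (ht : (r : ℝ) * n < t) :
    (n : ℝ) ^ (4 * r) * wellPoisedNum r n t ≤ wellPoisedNum r (n + 2) (t + 2 * r) := by
  have hrn := natCast_le_mul n hr
  have ht0 : 0 < t := by linarith
  have hsub : ∀ j ∈ range (r * n), 0 < t - 1 - j := fun j hj =>
    sub_one_sub_pos hj (by exact_mod_cast ht)
  have hfalling : ∏ j ∈ range (r * (n + 2)), (t + 2 * r - 1 - j) =
      (∏ j ∈ range (2 * r), (t + 2 * r - 1 - j)) * ∏ j ∈ range (r * n), (t - 1 - j) := by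
    rw [show r * (n + 2) = 2 * r + r * n by ring, prod_range_add]
    refine congrArg₂ _ rfl (prod_congr rfl fun j _ => ?_)
    push_cast
    ring
  have hrising : ∏ j ∈ range (r * (n + 2)), (t + 2 * r + ((n + 2 : ℕ) : ℝ) + 1 + j) =
      (∏ j ∈ range (r * n), (t + 2 * r + ((n + 2 : ℕ) : ℝ) + 1 + j)) *
        ∏ j ∈ range (2 * r), (t + 2 * r + ((n + 2 : ℕ) : ℝ) + 1 + ((r * n + j : ℕ) : ℝ)) := by
    rw [show r * (n + 2) = r * n + 2 * r by ring, prod_range_add]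
  have hfirst : (n : ℝ) ^ (2 * r) ≤ ∏ j ∈ range (2 * r), (t + 2 * r - 1 - j) := by
    refine (Eq.le (by simp)).trans
      (prod_le_prod (f := fun _ => (n : ℝ)) (fun _ _ => by positivity) fun j hj => ?_)
    have : (j : ℝ) + 1 ≤ 2 * r := by exact_mod_cast mem_range.mp hj
    linarith
  have hlast : (n : ℝ) ^ (2 * r) ≤
      ∏ j ∈ range (2 * r), (t + 2 * r + ((n + 2 : ℕ) : ℝ) + 1 + ((r * n + j : ℕ) : ℝ)) := by
    refine (Eq.le (by simp)).trans
      (prod_le_prod (f := fun _ => (n : ℝ)) (fun _ _ => by positivity) fun j _ => ?_)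
    push_cast
    linarith [show (0 : ℝ) ≤ r * n + j by positivity]
  have hmiddle : ∏ j ∈ range (r * n), (t + n + 1 + j) ≤
      ∏ j ∈ range (r * n), (t + 2 * r + ((n + 2 : ℕ) : ℝ) + 1 + j) := by
    refine prod_le_prod (fun j _ => by positivity) fun j _ => ?_
    push_cast
    linarith
  have hnonneg : 0 ≤ ∏ j ∈ range (r * n), (t - 1 - j) := prod_nonneg fun j hj => (hsub j hj).le
  rw [wellPoisedNum, wellPoisedNum, hfalling, hrising]
  calc (n : ℝ) ^ (4 * r) * ((∏ j ∈ range (r * n), (t - 1 - j)) *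
        ∏ j ∈ range (r * n), (t + n + 1 + j))
      = ((n : ℝ) ^ (2 * r) * ∏ j ∈ range (r * n), (t - 1 - j)) *
          ((∏ j ∈ range (r * n), (t + n + 1 + j)) * (n : ℝ) ^ (2 * r)) := by ring
    _ ≤ _ := mul_le_mul (mul_le_mul_of_nonneg_right hfirst hnonneg)
        (mul_le_mul hmiddle hlast (by positivity) (prod_nonneg fun j _ => by positivity))
        (by positivity)
        (mul_nonneg ((by positivity : (0 : ℝ) ≤ (n : ℝ) ^ (2 * r)).trans hfirst) hnonneg)

lemma wellPoisedDen_add_two_le (hr : 1 ≤ r) (hn : 1 ≤ n) (ha : 1 ≤ a) {t : ℝ}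
    (ht : (r : ℝ) * n ≤ t) (ht' : t ≤ 14 * r * a * n) :
    wellPoisedDen (n + 2) (t + 2 * r) ≤
      Real.exp 4 * (19 * r * a) ^ 2 * n ^ 2 * wellPoisedDen n t := by
  have hn' : (1 : ℝ) ≤ n := by exact_mod_cast hn
  have ha' : (1 : ℝ) ≤ a := by exact_mod_cast ha
  have hr' : (1 : ℝ) ≤ r := by exact_mod_cast hr
  have hrn := natCast_le_mul n hr
  have hra : (r : ℝ) ≤ r * a * n := by nlinarith
  have hran : (n : ℝ) ≤ r * a * n := by nlinarith
  have ht0 : 0 < t := by linarith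
  have hden := (wellPoisedDen_pos n ht0).le
  have hexp : (1 + 2 / (n : ℝ)) ^ (n + 1) ≤ Real.exp 4 := by
    rw [add_comm]
    refine (pow_le_pow_left₀ (by positivity) (Real.add_one_le_exp (2 / (n : ℝ))) _).trans ?_
    rw [← Real.exp_nat_mul, Real.exp_le_exp, mul_div_assoc', div_le_iff₀ (by positivity)]
    push_cast
    linarith
  have hprod : ∏ j ∈ range (n + 1), (t + 2 * r + j) ≤ Real.exp 4 * wellPoisedDen n t := by
    calc ∏ j ∈ range (n + 1), (t + 2 * r + j)
        ≤ ∏ j ∈ range (n + 1), ((1 + 2 / n) * (t + j)) := by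
          refine prod_le_prod (fun j _ => by positivity) fun j _ => ?_
          have : 2 * (r : ℝ) ≤ 2 / n * (t + j) := by
            rw [div_mul_eq_mul_div, le_div_iff₀ (by positivity)]
            linarith [j.cast_nonneg (α := ℝ)]
          linarith
      _ = (1 + 2 / n) ^ (n + 1) * wellPoisedDen n t := by
          rw [prod_mul_distrib, prod_const, card_range, wellPoisedDen]
      _ ≤ Real.exp 4 * wellPoisedDen n t := by gcongr
  rw [wellPoisedDen, prod_range_succ, prod_range_succ]
  calc (∏ j ∈ range (n + 1), (t + 2 * r + j)) * (t + 2 * r + (n + 1 : ℕ)) *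
        (t + 2 * r + (n + 1 + 1 : ℕ))
      ≤ (Real.exp 4 * wellPoisedDen n t) * (19 * r * a * n) * (19 * r * a * n) := by
        gcongr <;> · push_cast; linarith
    _ = Real.exp 4 * (19 * r * a) ^ 2 * n ^ 2 * wellPoisedDen n t := by ring

lemma sq_mul_factorial_le (n : ℕ) : (n : ℝ) ^ 2 * n.factorial ≤ ((n + 2).factorial : ℝ) := by
  have h : n ^ 2 * n.factorial ≤ (n + 2).factorial := by
    rw [Nat.factorial_succ, Nat.factorial_succ, ← mul_assoc]
    exact Nat.mul_le_mul_right _ (by nlinarith)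
  exact_mod_cast h

lemma wellPoised_le_mul_add_two (hr : 1 ≤ r) (hn : 1 ≤ n) (ha : 6 * r + 1 ≤ a) {t : ℝ}
    (ht : (r : ℝ) * n < t) (ht' : t ≤ 14 * r * a * n) :
    wellPoised a r n t ≤
      (Real.exp 4 * (19 * r * a) ^ 2) ^ a * wellPoised a r (n + 2) (t + 2 * r) := by
  have ht0 : 0 < t := lt_of_le_of_lt (by positivity) ht
  have hnum := pow_mul_wellPoisedNum_le hr ht
  have hden := wellPoisedDen_add_two_le hr hn (by lia) ht.le ht'
  have hden_pos := wellPoisedDen_pos n ht0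
  have hden_pos' := wellPoisedDen_pos (n + 2) (by positivity : 0 < t + 2 * r)
  have hnum_pos := wellPoisedNum_pos ht
  have hnum_pos' : 0 ≤ wellPoisedNum r (n + 2) (t + 2 * r) := le_trans (by positivity) hnum
  have hfact := sq_mul_factorial_le n
  have : (0 : ℝ) < n := by exact_mod_cast hn
  have : (0 : ℝ) < r := by exact_mod_cast hr
  have ha' : (0 : ℝ) < a := by exact_mod_cast (by lia : 0 < a)
  obtain ⟨b, rfl⟩ := Nat.exists_eq_add_of_le (show 6 * r ≤ a by lia)
  rw [wellPoised, wellPoised, Nat.add_sub_cancel_left]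
  have hD : 0 < Real.exp 4 * (19 * r * (6 * r + b : ℕ)) ^ 2 := by positivity
  generalize Real.exp 4 * (19 * r * (6 * r + b : ℕ)) ^ 2 = D at *
  calc (n.factorial : ℝ) ^ b * wellPoisedNum r n t ^ 3 / wellPoisedDen n t ^ (6 * r + b)
      = D ^ (6 * r + b) * (((n : ℝ) ^ 2 * n.factorial) ^ b *
          ((n : ℝ) ^ (4 * r) * wellPoisedNum r n t) ^ 3 /
            (D * n ^ 2 * wellPoisedDen n t) ^ (6 * r + b)) := by
        field_simp
        ring
    _ ≤ D ^ (6 * r + b) * (((n + 2).factorial : ℝ) ^ b *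
          wellPoisedNum r (n + 2) (t + 2 * r) ^ 3 /
            wellPoisedDen (n + 2) (t + 2 * r) ^ (6 * r + b)) := by gcongr

lemma tsum_wellPoisedTerm_le_mul_add_two (hr : 1 ≤ r) (hn : 2 ≤ n) (ha : 6 * r + 1 ≤ a) :
    ∑' m, wellPoisedTerm a r n m ≤ 56 * r * a * ((Real.exp 4 * (19 * r * a) ^ 2) ^ a *
      ∑' m, wellPoisedTerm a r (n + 2) m) := by
  refine (tsum_wellPoisedTerm_le_sum_range hr hn ha).trans ?_
  gcongr
  calc ∑ m ∈ range (12 * r * a * n), wellPoisedTerm a r n m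
      ≤ ∑ m ∈ range (12 * r * a * n),
          (Real.exp 4 * (19 * r * a) ^ 2) ^ a * wellPoisedTerm a r (n + 2) m := by
        refine sum_le_sum fun m hm => ?_
        have hm' : (m : ℝ) ≤ 12 * r * a * n := by exact_mod_cast (mem_range.mp hm).le
        have hran : 2 * (r * n : ℝ) ≤ 2 * (r * a * n) := by
          gcongr
          exact le_mul_of_one_le_right (by positivity) (by exact_mod_cast (by lia : 1 ≤ a))
        have hone : (1 : ℝ) ≤ r * n := by
          exact_mod_cast one_le_mul_of_one_le_of_one_le hr (by lia : 1 ≤ n)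
        have h := wellPoised_le_mul_add_two hr (by lia : 1 ≤ n) ha (t := r * n + 1 + m)
          (by linarith [m.cast_nonneg (α := ℝ)]) (by linarith)
        rwa [wellPoisedTerm, wellPoisedTerm, Nat.cast_add, Nat.cast_ofNat,
          show (r : ℝ) * (n + 2) + 1 + m = r * n + 1 + m + 2 * r by ring]
    _ = (Real.exp 4 * (19 * r * a) ^ 2) ^ a *
          ∑ m ∈ range (12 * r * a * n), wellPoisedTerm a r (n + 2) m := by rw [mul_sum]
    _ ≤ _ := by
        gcongr
        exact (summable_wellPoisedTerm (n + 2) hr ha).sum_le_tsum _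
          fun m _ => (wellPoisedTerm_pos a r (n + 2) m).le

lemma prod_range_natCast_sub_eq_zero {k m : ℕ} (hk : 1 ≤ k) (hkm : k ≤ m) :
    ∏ j ∈ range m, ((k : ℝ) - 1 - j) = 0 := by
  refine prod_eq_zero (i := k - 1) (mem_range.mpr (by lia)) ?_
  rw [Nat.cast_sub hk, Nat.cast_one, sub_self]

lemma wellPoised_natCast_eq_zero (a : ℕ) {k : ℕ} (hk : 1 ≤ k) (hkr : k ≤ r * n) :
    wellPoised a r n k = 0 := by
  rw [wellPoised, wellPoisedNum, prod_range_natCast_sub_eq_zero hk hkr, zero_mul,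
    zero_pow three_ne_zero, mul_zero, zero_div]

lemma hasSum_wellPoised (n : ℕ) (hr : 1 ≤ r) (ha : 6 * r + 1 ≤ a) :
    HasSum (fun k : ℕ => wellPoised a r n (k + 1)) (∑' m, wellPoisedTerm a r n m) := by
  rw [← hasSum_nat_add_iff' (r * n), sum_eq_zero fun k hk => ?_, sub_zero]
  · refine (summable_wellPoisedTerm n hr ha).hasSum.congr_fun fun m => ?_
    rw [wellPoisedTerm]
    push_cast
    exact congrArg _ (by ring)
  · exact_mod_cast wellPoised_natCast_eq_zero a k.succ_pos (mem_range.mp hk)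

lemma tendsto_natCast_mul_wellPoised (n : ℕ) (hr : 1 ≤ r) (ha : 6 * r + 1 ≤ a) :
    Tendsto (fun k : ℕ => (k : ℝ) * wellPoised a r n k) atTop (𝓝 0) := by
  rw [← tendsto_add_atTop_iff_nat (r * n + 1)]
  refine (summable_wellPoisedTerm_mul n hr ha (r * n + 1)).tendsto_atTop_zero.congr fun m => ?_
  rw [wellPoisedTerm, mul_comm]
  push_cast
  rw [add_comm (m : ℝ)]

end ShiftedSums

section ShiftedHarmonic

open Finset

/-- The shifted harmonic sum `1 / (x + 1) + ⋯ + 1 / (x + N)`, the logarithmic derivative of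
`(x + 1) ⋯ (x + N)`. -/
noncomputable def shiftedHarmonic (N : ℕ) (x : ℝ) : ℝ := ∑ j ∈ range N, 1 / (x + (j + 1))

/-- The sum `1 / (x + 1) ^ 2 + ⋯ + 1 / (x + N) ^ 2`, minus the derivative of `shiftedHarmonic`. -/
noncomputable def shiftedHarmonicSq (N : ℕ) (x : ℝ) : ℝ := ∑ j ∈ range N, 1 / (x + (j + 1)) ^ 2

lemma add_natCast_add_one_ne_zero {x : ℝ} (hx : -1 < x) (j : ℕ) : x + (j + 1) ≠ 0 := by
  have : (0 : ℝ) ≤ j := j.cast_nonneg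
  exact ne_of_gt (by linarith)

lemma hasDerivAt_prod_range_add (N : ℕ) {x : ℝ} (hx : -1 < x) :
    HasDerivAt (fun y : ℝ => ∏ j ∈ range N, (y + (j + 1)))
      ((∏ j ∈ range N, (x + (j + 1))) * shiftedHarmonic N x) x := by
  induction N with
  | zero => simpa [shiftedHarmonic] using hasDerivAt_const x (1 : ℝ)
  | succ N ih =>
    have hne := add_natCast_add_one_ne_zero hx N
    simp only [shiftedHarmonic, prod_range_succ, sum_range_succ] at ih ⊢
    refine (ih.mul ((hasDerivAt_id x).add_const _)).congr_deriv ?_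
    simp only [id_eq]
    linear_combination -(∏ j ∈ range N, (x + (j + 1))) * mul_one_div_cancel hne

lemma hasDerivAt_shiftedHarmonic (N : ℕ) {x : ℝ} (hx : -1 < x) :
    HasDerivAt (shiftedHarmonic N) (-shiftedHarmonicSq N x) x := by
  rw [shiftedHarmonicSq, ← sum_neg_distrib]
  refine HasDerivAt.fun_sum fun j _ => ?_
  simp only [one_div]
  refine (((hasDerivAt_id x).add_const _).inv (add_natCast_add_one_ne_zero hx j)).congr_deriv ?_
  rw [id_eq, neg_div, one_div]

lemma shiftedHarmonic_nonneg (N : ℕ) {x : ℝ} (hx : 0 ≤ x) : 0 ≤ shiftedHarmonic N x :=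
  sum_nonneg fun j _ => by positivity

lemma shiftedHarmonicSq_nonneg (N : ℕ) (x : ℝ) : 0 ≤ shiftedHarmonicSq N x :=
  sum_nonneg fun j _ => by positivity

lemma log_add_one_div_mem_Icc {y : ℝ} (hy : 0 < y) :
    Real.log ((y + 1) / y) ∈ Set.Icc (1 / (y + 1)) (1 / y) := by
  have hpos : 0 < (y + 1) / y := by positivity
  constructor
  · refine le_of_eq_of_le ?_ (Real.one_sub_inv_le_log_of_pos hpos)
    field_simp
    ring
  · refine (Real.log_le_sub_one_of_pos hpos).trans_eq ?_
    field_simp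
    ring

lemma log_add_natCast_succ_div {x : ℝ} (hx : 0 < x) (N : ℕ) :
    Real.log ((x + (N + 1 : ℕ)) / x) =
      Real.log ((x + N) / x) + Real.log ((x + N + 1) / (x + N)) := by
  rw [← Real.log_mul (by positivity) (by positivity), div_mul_div_cancel₀' (by positivity)]
  push_cast
  rw [add_assoc]

lemma shiftedHarmonic_le_log (N : ℕ) {x : ℝ} (hx : 0 < x) :
    shiftedHarmonic N x ≤ Real.log ((x + N) / x) := by
  rw [shiftedHarmonic]
  induction N with
  | zero => simp [hx.ne']
  | succ N ih =>
    rw [sum_range_succ, log_add_natCast_succ_div hx, ← add_assoc]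
    exact add_le_add ih (log_add_one_div_mem_Icc (by positivity)).1

lemma log_sub_one_div_le_shiftedHarmonic (N : ℕ) {x : ℝ} (hx : 0 < x) :
    Real.log ((x + N) / x) - 1 / x ≤ shiftedHarmonic N x := by
  suffices hsharp : Real.log ((x + N) / x) ≤ shiftedHarmonic N x + (1 / x - 1 / (x + N)) by
    have : 0 ≤ 1 / (x + N) := by positivity
    linarith
  rw [shiftedHarmonic]
  induction N with
  | zero => simp [hx.ne']
  | succ N ih =>
    have hlog := (log_add_one_div_mem_Icc (y := x + N) (by positivity)).2
    rw [sum_range_succ, log_add_natCast_succ_div hx, Nat.cast_add_one, ← add_assoc]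
    linarith

lemma shiftedHarmonicSq_le_one_div (N : ℕ) {x : ℝ} (hx : 0 < x) :
    shiftedHarmonicSq N x ≤ 1 / x := by
  suffices hsharp : shiftedHarmonicSq N x ≤ 1 / x - 1 / (x + N) by
    have : 0 ≤ 1 / (x + N) := by positivity
    linarith
  rw [shiftedHarmonicSq]
  induction N with
  | zero => simp
  | succ N ih =>
    have hstep : 1 / (x + N + 1) ^ 2 ≤ 1 / (x + N) - 1 / (x + N + 1) := by
      rw [div_sub_div _ _ (by positivity) (by positivity),
        div_le_div_iff₀ (by positivity) (by positivity)]
      have : 0 < x + N := by positivity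
      nlinarith
    rw [sum_range_succ, Nat.cast_add_one, ← add_assoc]
    linarith

lemma shiftedHarmonic_zero_le (N : ℕ) : shiftedHarmonic N 0 ≤ 1 + Real.log (N + 1) := by
  have hlog := shiftedHarmonic_le_log N one_pos
  have hsucc : shiftedHarmonic (N + 1) 0 = 1 + shiftedHarmonic N 1 := by
    rw [shiftedHarmonic, shiftedHarmonic, sum_range_succ', add_comm]
    simp [add_comm]
  have hmono : shiftedHarmonic N 0 ≤ shiftedHarmonic (N + 1) 0 :=
    sum_le_sum_of_subset_of_nonneg (range_subset_range.mpr N.le_succ) fun j _ _ => by positivity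
  rw [div_one, add_comm] at hlog
  linarith

lemma shiftedHarmonicSq_zero_le (N : ℕ) : shiftedHarmonicSq N 0 ≤ 2 := by
  have hone := shiftedHarmonicSq_le_one_div N one_pos
  have hsucc : shiftedHarmonicSq (N + 1) 0 = 1 + shiftedHarmonicSq N 1 := by
    rw [shiftedHarmonicSq, shiftedHarmonicSq, sum_range_succ', add_comm]
    simp [add_comm]
  have hmono : shiftedHarmonicSq N 0 ≤ shiftedHarmonicSq (N + 1) 0 :=
    sum_le_sum_of_subset_of_nonneg (range_subset_range.mpr N.le_succ) fun j _ _ => by positivity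
  linarith

end ShiftedHarmonic

section SecondDeriv

open Finset Filter Topology

variable {a r n : ℕ} {t : ℝ}

/-- The logarithmic derivative of `wellPoised`. -/
noncomputable def wellPoisedLogDeriv (a r n : ℕ) (t : ℝ) : ℝ :=
  3 * shiftedHarmonic (r * n) (t - 1 - r * n) + 3 * shiftedHarmonic (r * n) (t + n)
    - a * shiftedHarmonic (n + 1) (t - 1)

/-- The derivative of `wellPoisedLogDeriv`. -/
noncomputable def wellPoisedLogDerivDeriv (a r n : ℕ) (t : ℝ) : ℝ :=
  a * shiftedHarmonicSq (n + 1) (t - 1) - 3 * shiftedHarmonicSq (r * n) (t - 1 - r * n)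
    - 3 * shiftedHarmonicSq (r * n) (t + n)

lemma wellPoisedNum_eq_prod_mul_prod (r n : ℕ) (t : ℝ) :
    wellPoisedNum r n t = (∏ j ∈ range (r * n), (t - 1 - r * n + (j + 1))) *
      ∏ j ∈ range (r * n), (t + n + (j + 1)) := by
  rw [wellPoisedNum, ← prod_range_reflect]
  refine congrArg₂ (· * ·) (prod_congr rfl fun j hj => ?_) (prod_congr rfl fun j _ => by ring)
  have hj' : j + 1 ≤ r * n := mem_range.mp hj
  rw [Nat.sub_sub, add_comm 1 j, Nat.cast_sub hj']
  push_cast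
  ring

lemma hasDerivAt_wellPoisedNum (ht : r * n < t) :
    HasDerivAt (wellPoisedNum r n) (wellPoisedNum r n t *
      (shiftedHarmonic (r * n) (t - 1 - r * n) + shiftedHarmonic (r * n) (t + n))) t := by
  have hnonneg : (0 : ℝ) ≤ r * n := by positivity
  have hlow := (hasDerivAt_prod_range_add (r * n) (x := t - 1 - r * n) (by linarith)).comp t
    (((hasDerivAt_id t).sub_const 1).sub_const _)
  have hhigh := (hasDerivAt_prod_range_add (r * n) (x := t + n)
    (by linarith [n.cast_nonneg (α := ℝ)])).comp t ((hasDerivAt_id t).add_const (n : ℝ))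
  rw [funext (wellPoisedNum_eq_prod_mul_prod r n)]
  refine (hlow.mul hhigh).congr_deriv ?_
  simp only [Function.comp_apply, id_eq]
  ring

lemma hasDerivAt_wellPoisedDen (n : ℕ) (ht : 0 < t) :
    HasDerivAt (wellPoisedDen n) (wellPoisedDen n t * shiftedHarmonic (n + 1) (t - 1)) t := by
  have heq : wellPoisedDen n = fun y : ℝ => ∏ j ∈ range (n + 1), (y - 1 + (j + 1)) :=
    funext fun y => prod_congr rfl fun j _ => by ring
  rw [heq]
  refine ((hasDerivAt_prod_range_add (n + 1) (x := t - 1) (by linarith)).comp t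
    ((hasDerivAt_id t).sub_const 1)).congr_deriv ?_
  rw [mul_one]

lemma hasDerivAt_wellPoised (a : ℕ) (ht : r * n < t) :
    HasDerivAt (wellPoised a r n) (wellPoised a r n t * wellPoisedLogDeriv a r n t) t := by
  have ht0 : 0 < t := lt_of_le_of_lt (by positivity) ht
  have hnum := ((hasDerivAt_wellPoisedNum ht).pow 3).const_mul ((n.factorial : ℝ) ^ (a - 6 * r))
  have hden := (hasDerivAt_wellPoisedDen n ht0).pow a
  have hpos := wellPoisedDen_pos n ht0
  refine (hnum.div hden (pow_pos hpos a).ne').congr_deriv ?_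
  rw [wellPoised, wellPoisedLogDeriv]
  simp only [Pi.pow_apply]
  rcases a with - | a
  · simp
    ring
  · simp only [Nat.add_sub_cancel, Nat.reduceSub]
    field_simp
    push_cast
    ring

lemma hasDerivAt_wellPoisedLogDeriv (a : ℕ) (ht : r * n < t) :
    HasDerivAt (wellPoisedLogDeriv a r n) (wellPoisedLogDerivDeriv a r n t) t := by
  have hnonneg : (0 : ℝ) ≤ r * n := by positivity
  have hlow := (hasDerivAt_shiftedHarmonic (r * n) (x := t - 1 - r * n) (by linarith)).comp t
    (((hasDerivAt_id t).sub_const 1).sub_const _)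
  have hhigh := (hasDerivAt_shiftedHarmonic (r * n) (x := t + n)
    (by linarith [n.cast_nonneg (α := ℝ)])).comp t ((hasDerivAt_id t).add_const (n : ℝ))
  have hden := (hasDerivAt_shiftedHarmonic (n + 1) (x := t - 1) (by linarith)).comp t
    ((hasDerivAt_id t).sub_const 1)
  refine (((hlow.const_mul 3).add (hhigh.const_mul 3)).sub (hden.const_mul (a : ℝ))).congr_deriv ?_
  rw [wellPoisedLogDerivDeriv]
  ring

lemma deriv_deriv_wellPoised (a : ℕ) (ht : r * n < t) :
    deriv (deriv (wellPoised a r n)) t =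
      wellPoised a r n t * (wellPoisedLogDeriv a r n t ^ 2 + wellPoisedLogDerivDeriv a r n t) := by
  have hderiv : deriv (wellPoised a r n) =ᶠ[𝓝 t]
      fun y => wellPoised a r n y * wellPoisedLogDeriv a r n y := by
    filter_upwards [lt_mem_nhds ht] with y hy
    exact (hasDerivAt_wellPoised a hy).deriv
  rw [hderiv.deriv_eq,
    ((hasDerivAt_wellPoised a ht).fun_mul (hasDerivAt_wellPoisedLogDeriv a ht)).deriv]
  ring

lemma deriv_deriv_pow_three_mul_eq_zero {f w : ℝ → ℝ} {x : ℝ} (hf : AnalyticAt ℝ f x)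
    (hw : AnalyticAt ℝ w x) (hfx : f x = 0) : deriv (deriv fun y => f y ^ 3 * w y) x = 0 := by
  have hderiv : deriv (fun y => f y ^ 3 * w y) =ᶠ[𝓝 x]
      fun y => f y ^ 2 * (3 * deriv f y * w y + f y * deriv w y) := by
    filter_upwards [hf.eventually_analyticAt, hw.eventually_analyticAt] with y hfy hwy
    refine ((hfy.differentiableAt.hasDerivAt.pow 3).mul
      hwy.differentiableAt.hasDerivAt).congr_deriv ?_ |>.deriv
    simp only [Pi.pow_apply]
    push_cast
    ring
  have hdiff : DifferentiableAt ℝ (fun y => 3 * deriv f y * w y + f y * deriv w y) x :=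
    ((hf.deriv.differentiableAt.const_mul 3).mul hw.differentiableAt).add
      (hf.differentiableAt.mul hw.deriv.differentiableAt)
  rw [hderiv.deriv_eq]
  refine ((hf.differentiableAt.hasDerivAt.pow 2).mul hdiff.hasDerivAt).congr_deriv ?_ |>.deriv
  simp [hfx]

lemma deriv_deriv_wellPoised_natCast_eq_zero (a : ℕ) {k : ℕ} (hk : 1 ≤ k) (hkr : k ≤ r * n) :
    deriv (deriv (wellPoised a r n)) k = 0 := by
  have heq : wellPoised a r n = fun y =>
      wellPoisedNum r n y ^ 3 * ((n.factorial : ℝ) ^ (a - 6 * r) / wellPoisedDen n y ^ a) := by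
    funext y
    rw [wellPoised, mul_comm, mul_div_assoc]
  have hpos := wellPoisedDen_pos n (t := k) (by exact_mod_cast hk)
  rw [heq]
  refine deriv_deriv_pow_three_mul_eq_zero ?_ ?_ ?_
  · exact (analyticAt_fun_prod _ fun j _ => by fun_prop).mul
      (analyticAt_fun_prod _ fun j _ => by fun_prop)
  · have hden : AnalyticAt ℝ (wellPoisedDen n) k := analyticAt_fun_prod _ fun j _ => by fun_prop
    exact analyticAt_const.div (hden.pow a) (pow_pos hpos a).ne'
  · rw [wellPoisedNum, prod_range_natCast_sub_eq_zero hk hkr, zero_mul]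

end SecondDeriv

section LogDerivBound

variable {a r n m : ℕ}

lemma wellPoisedLogDeriv_add_natCast (a r n m : ℕ) :
    wellPoisedLogDeriv a r n (r * n + 1 + m) =
      3 * shiftedHarmonic (r * n) m + 3 * shiftedHarmonic (r * n) (m + r * n + n + 1)
        - a * shiftedHarmonic (n + 1) (m + r * n) := by
  rw [wellPoisedLogDeriv]
  ring_nf

lemma wellPoisedLogDerivDeriv_add_natCast (a r n m : ℕ) :
    wellPoisedLogDerivDeriv a r n (r * n + 1 + m) =
      a * shiftedHarmonicSq (n + 1) (m + r * n) - 3 * shiftedHarmonicSq (r * n) m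
        - 3 * shiftedHarmonicSq (r * n) (m + r * n + n + 1) := by
  rw [wellPoisedLogDerivDeriv]
  ring_nf

lemma log_mem_Icc_of_le_add_one {y c : ℝ} (hy : 1 ≤ y) (hyc : y ≤ c + 1) :
    Real.log y ∈ Set.Icc 0 c :=
  ⟨Real.log_nonneg hy, (Real.log_le_sub_one_of_pos (by linarith)).trans (by linarith)⟩

lemma log_add_mul_div_mem_Icc (r n m : ℕ) :
    Real.log ((m + r * n + n + 1 + r * n) / (m + r * n + n + 1)) ∈ Set.Icc 0 1 := by
  refine log_mem_Icc_of_le_add_one ?_ ?_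
  · rw [one_le_div (by positivity)]
    exact le_add_of_nonneg_right (by positivity)
  · rw [div_le_iff₀ (by positivity)]
    linarith [show (0 : ℝ) ≤ m + n by positivity]

lemma log_add_add_one_div_mem_Icc (hr : 1 ≤ r) (hn : 1 ≤ n) (m : ℕ) :
    Real.log ((m + r * n + n + 1) / (m + r * n)) ∈ Set.Icc 0 2 := by
  refine log_mem_Icc_of_le_add_one ?_ ?_
  · rw [one_le_div (by positivity)]
    linarith [n.cast_nonneg (α := ℝ)]
  · exact (add_add_one_div_le_three hr hn m.cast_nonneg).trans_eq (by norm_num)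

lemma log_add_mul_div_self_mem_Icc (r n : ℕ) (hm : 1 ≤ m) :
    Real.log ((m + r * n) / m) ∈ Set.Icc 0 (Real.log (r * n + 1)) := by
  have hm' : (1 : ℝ) ≤ m := by exact_mod_cast hm
  have hrn : (0 : ℝ) ≤ r * n := by positivity
  refine ⟨Real.log_nonneg ?_, Real.log_le_log (by positivity) ?_⟩
  · rw [one_le_div (by positivity)]
    linarith
  · rw [div_le_iff₀ (by positivity)]
    nlinarith

lemma termRatio_pos (a : ℕ) (hr : 1 ≤ r) (hn : 1 ≤ n) (hm : 1 ≤ m) : 0 < termRatio a r n m := by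
  rw [termRatio_eq]
  positivity

lemma log_termRatio (a : ℕ) (hr : 1 ≤ r) (hn : 1 ≤ n) (hm : 1 ≤ m) :
    Real.log (termRatio a r n m) = a * Real.log ((m + r * n + n + 1) / (m + r * n))
      - 3 * Real.log ((m + r * n) / m)
      - 3 * Real.log ((m + r * n + n + 1 + r * n) / (m + r * n + n + 1)) := by
  rw [termRatio_eq, Real.log_mul (by positivity) (by positivity),
    Real.log_mul (by positivity) (by positivity), Real.log_pow, Real.log_pow, Real.log_pow,
    ← inv_div, Real.log_inv, ← inv_div (m + r * n + n + 1 + r * n : ℝ), Real.log_inv]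
  push_cast
  ring

/-- A bound for the logarithm of `termRatio` at positive indices, and for the logarithmic derivative
of `wellPoised` at the first term of the sum. -/
noncomputable def logRatioBound (a r n : ℕ) : ℝ := 2 * a + 6 + 3 * Real.log (r * n + 1)

lemma log_mul_add_one_nonneg (r n : ℕ) : 0 ≤ Real.log (r * n + 1) :=
  Real.log_nonneg (le_add_of_nonneg_left (by positivity))

lemma logRatioBound_nonneg (a r n : ℕ) : 0 ≤ logRatioBound a r n := by
  have := log_mul_add_one_nonneg r n
  rw [logRatioBound]
  positivity

lemma abs_log_termRatio_le (a : ℕ) (hr : 1 ≤ r) (hn : 1 ≤ n) (hm : 1 ≤ m) :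
    |Real.log (termRatio a r n m)| ≤ logRatioBound a r n := by
  obtain ⟨hu0, hu⟩ := log_add_mul_div_self_mem_Icc r n hm
  obtain ⟨hv0, hv⟩ := log_add_mul_div_mem_Icc r n m
  obtain ⟨hw0, hw⟩ := log_add_add_one_div_mem_Icc hr hn m
  have haw := mul_le_mul_of_nonneg_left hw a.cast_nonneg
  have haw0 := mul_nonneg (a.cast_nonneg (α := ℝ)) hw0
  rw [log_termRatio a hr hn hm, logRatioBound, abs_le]
  constructor <;> linarith

lemma abs_log_le_abs_one_sub_mul {s : ℝ} (hs : 0 < s) :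
    |Real.log s| ≤ |1 - s| * (1 + |Real.log s|) := by
  have hupper := Real.log_le_sub_one_of_pos hs
  rcases le_or_gt 1 s with h | h
  · have hlog := Real.log_nonneg h
    rw [abs_of_nonneg hlog, abs_of_nonpos (by linarith)]
    nlinarith
  · have hlog := Real.log_neg hs h
    have hlower := mul_le_mul_of_nonneg_left (Real.one_sub_inv_le_log_of_pos hs) hs.le
    rw [mul_sub, mul_inv_cancel₀ hs.ne'] at hlower
    rw [abs_of_neg hlog, abs_of_pos (by linarith)]
    nlinarith

lemma log_termRatio_sq_le (a : ℕ) (hr : 1 ≤ r) (hn : 1 ≤ n) (hm : 1 ≤ m) :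
    Real.log (termRatio a r n m) ^ 2 ≤
      (1 - termRatio a r n m) ^ 2 * (1 + logRatioBound a r n) ^ 2 := by
  rw [← sq_abs, ← sq_abs (1 - _), ← mul_pow]
  refine pow_le_pow_left₀ (abs_nonneg _) ?_ 2
  refine (abs_log_le_abs_one_sub_mul (termRatio_pos a hr hn hm)).trans ?_
  gcongr
  exact abs_log_termRatio_le a hr hn hm

-- Each of the three harmonic sums differs from the corresponding logarithm by at most `1 / m`.
lemma abs_wellPoisedLogDeriv_add_log_termRatio_le (a : ℕ) (hr : 1 ≤ r) (hn : 1 ≤ n) (hm : 1 ≤ m) :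
    |wellPoisedLogDeriv a r n (r * n + 1 + m) + Real.log (termRatio a r n m)| ≤
      (6 + a) * (1 / m) := by
  have hlow := shiftedHarmonic_le_log (r * n) (x := m) (by positivity)
  have hlow' := log_sub_one_div_le_shiftedHarmonic (r * n) (x := m) (by positivity)
  have hhigh := shiftedHarmonic_le_log (r * n) (x := m + r * n + n + 1) (by positivity)
  have hhigh' :=
    log_sub_one_div_le_shiftedHarmonic (r * n) (x := m + r * n + n + 1) (by positivity)
  have hden := mul_le_mul_of_nonneg_left
    (shiftedHarmonic_le_log (n + 1) (x := m + r * n) (by positivity)) (a.cast_nonneg (α := ℝ))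
  have hden' := mul_le_mul_of_nonneg_left
    (log_sub_one_div_le_shiftedHarmonic (n + 1) (x := m + r * n) (by positivity))
    (a.cast_nonneg (α := ℝ))
  have hinv : (1 : ℝ) / (m + r * n + n + 1) ≤ 1 / m :=
    one_div_le_one_div_of_le (by positivity) (by linarith [show (0 : ℝ) ≤ r * n + n by positivity])
  have hinv' : a * ((1 : ℝ) / (m + r * n)) ≤ a * (1 / m) := by
    gcongr
    linarith [show (0 : ℝ) ≤ r * n by positivity]
  have hpos : (0 : ℝ) ≤ 1 / m := by positivity
  have hapos : (0 : ℝ) ≤ a * (1 / m) := by positivity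
  rw [wellPoisedLogDeriv_add_natCast, log_termRatio a hr hn hm, abs_le]
  push_cast at hlow hlow' hhigh hhigh' hden hden'
  simp only [← add_assoc] at hden hden'
  constructor <;> linarith

lemma abs_wellPoisedLogDerivDeriv_le (a : ℕ) (n r : ℕ) (hm : 1 ≤ m) :
    |wellPoisedLogDerivDeriv a r n (r * n + 1 + m)| ≤ (6 + a) * (1 / m) := by
  have hlow := shiftedHarmonicSq_le_one_div (r * n) (x := m) (by positivity)
  have hhigh := shiftedHarmonicSq_le_one_div (r * n) (x := m + r * n + n + 1) (by positivity)
  have hden := mul_le_mul_of_nonneg_left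
    (shiftedHarmonicSq_le_one_div (n + 1) (x := m + r * n) (by positivity))
    (a.cast_nonneg (α := ℝ))
  have hlow0 := shiftedHarmonicSq_nonneg (r * n) m
  have hhigh0 := shiftedHarmonicSq_nonneg (r * n) (m + r * n + n + 1)
  have hden0 := mul_nonneg (a.cast_nonneg (α := ℝ)) (shiftedHarmonicSq_nonneg (n + 1) (m + r * n))
  have hinv : (1 : ℝ) / (m + r * n + n + 1) ≤ 1 / m :=
    one_div_le_one_div_of_le (by positivity) (by linarith [show (0 : ℝ) ≤ r * n + n by positivity])
  have hinv' : a * ((1 : ℝ) / (m + r * n)) ≤ a * (1 / m) := by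
    gcongr
    linarith [show (0 : ℝ) ≤ r * n by positivity]
  rw [wellPoisedLogDerivDeriv_add_natCast, abs_le]
  constructor <;> linarith

lemma abs_wellPoisedLogDeriv_zero_le (a : ℕ) (hr : 1 ≤ r) (hn : 1 ≤ n) :
    |wellPoisedLogDeriv a r n (r * n + 1 + (0 : ℕ))| ≤ logRatioBound a r n := by
  have hlow := shiftedHarmonic_zero_le (r * n)
  have hlow0 := shiftedHarmonic_nonneg (r * n) le_rfl
  have hhigh := shiftedHarmonic_le_log (r * n) (x := 0 + r * n + n + 1) (by positivity)
  have hhigh0 := shiftedHarmonic_nonneg (r * n) (x := 0 + r * n + n + 1) (by positivity)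
  have hden := shiftedHarmonic_le_log (n + 1) (x := 0 + r * n) (by positivity)
  have hden0 := shiftedHarmonic_nonneg (n + 1) (x := 0 + r * n) (by positivity)
  have hv := (log_add_mul_div_mem_Icc r n 0).2
  have hw := (log_add_add_one_div_mem_Icc hr hn 0).2
  push_cast at hlow hhigh hden hv hw
  rw [← add_assoc] at hden
  have hden' := mul_le_mul_of_nonneg_left (hden.trans hw) (a.cast_nonneg (α := ℝ))
  have hden0' := mul_nonneg (a.cast_nonneg (α := ℝ)) hden0
  have := log_mul_add_one_nonneg r n
  rw [wellPoisedLogDeriv_add_natCast, logRatioBound, abs_le, Nat.cast_zero]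
  constructor <;> linarith

lemma abs_wellPoisedLogDerivDeriv_zero_le (a : ℕ) (hr : 1 ≤ r) (hn : 1 ≤ n) :
    |wellPoisedLogDerivDeriv a r n (r * n + 1 + (0 : ℕ))| ≤ 9 + a := by
  have hn' : (1 : ℝ) ≤ n := by exact_mod_cast hn
  have hrn := natCast_le_mul n hr
  have hlow := shiftedHarmonicSq_zero_le (r * n)
  have hhigh := shiftedHarmonicSq_le_one_div (r * n) (x := 0 + r * n + n + 1) (by positivity)
  have hden := shiftedHarmonicSq_le_one_div (n + 1) (x := 0 + r * n) (by positivity)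
  have hlow0 := shiftedHarmonicSq_nonneg (r * n) 0
  have hhigh0 := shiftedHarmonicSq_nonneg (r * n) (0 + r * n + n + 1)
  have hden0 := mul_nonneg (a.cast_nonneg (α := ℝ)) (shiftedHarmonicSq_nonneg (n + 1) (0 + r * n))
  have hinv : (1 : ℝ) / (0 + r * n + n + 1) ≤ 1 := (div_le_one (by linarith)).mpr (by linarith)
  have hinv' : (1 : ℝ) / (0 + r * n) ≤ 1 := (div_le_one (by linarith)).mpr (by linarith)
  have hden' := mul_le_mul_of_nonneg_left (hden.trans hinv') (a.cast_nonneg (α := ℝ))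
  rw [wellPoisedLogDerivDeriv_add_natCast, Nat.cast_zero, abs_le]
  constructor <;> linarith

lemma abs_sq_add_le_of_one_le (a : ℕ) (hr : 1 ≤ r) (hn : 1 ≤ n) (hm : 1 ≤ m) :
    |wellPoisedLogDeriv a r n (r * n + 1 + m) ^ 2
        + wellPoisedLogDerivDeriv a r n (r * n + 1 + m)| ≤
      (1 - termRatio a r n m) ^ 2 * (2 * (1 + logRatioBound a r n) ^ 2 + 12 * (6 + a) ^ 2)
        + 6 * (6 + a) ^ 2 * 3 ^ a / n := by
  set x := wellPoisedLogDeriv a r n (r * n + 1 + m)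
  set s := termRatio a r n m with hs
  have hm' : (1 : ℝ) / m ≤ 1 := (div_le_one (by positivity)).mpr (by exact_mod_cast hm)
  have hdiff : (x + Real.log s) ^ 2 ≤ (6 + a) ^ 2 * (1 / m) := by
    rw [← sq_abs]
    refine (pow_le_pow_left₀ (abs_nonneg _)
      (abs_wellPoisedLogDeriv_add_log_termRatio_le a hr hn hm) 2).trans ?_
    rw [mul_pow, sq (1 / (m : ℝ))]
    gcongr
    exact mul_le_of_le_one_left (by positivity) hm'
  have hderiv : |wellPoisedLogDerivDeriv a r n (r * n + 1 + m)| ≤ (6 + a) ^ 2 * (1 / m) :=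
    (abs_wellPoisedLogDerivDeriv_le a n r hm).trans
      (mul_le_mul_of_nonneg_right (by nlinarith [a.cast_nonneg (α := ℝ)]) (by positivity))
  have hlog := log_termRatio_sq_le a hr hn hm
  have hinv := mul_le_mul_of_nonneg_left (one_div_le_mul_one_sub_termRatio_sq_add a hr hn hm)
    (show (0 : ℝ) ≤ 3 * (6 + a) ^ 2 by positivity)
  rw [← hs] at hlog hinv
  calc _ ≤ x ^ 2 + |wellPoisedLogDerivDeriv a r n (r * n + 1 + m)| := by
        refine (abs_add_le _ _).trans_eq ?_
        rw [abs_pow, sq_abs]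
    _ ≤ 2 * Real.log s ^ 2 + 2 * (x + Real.log s) ^ 2 + (6 + a) ^ 2 * (1 / m) := by
        nlinarith [sq_nonneg (x + 2 * Real.log s)]
    _ ≤ 2 * ((1 - s) ^ 2 * (1 + logRatioBound a r n) ^ 2) + 3 * (6 + a) ^ 2 * (1 / m) := by
        linarith
    _ ≤ 2 * ((1 - s) ^ 2 * (1 + logRatioBound a r n) ^ 2)
          + 3 * (6 + a) ^ 2 * (4 * (1 - s) ^ 2 + 2 * 3 ^ a / n) := by linarith
    _ = _ := by ring

lemma abs_wellPoisedLogDeriv_sq_add_le (a m : ℕ) (hr : 1 ≤ r) (hn : 1 ≤ n) :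
    |wellPoisedLogDeriv a r n (r * n + 1 + m) ^ 2
        + wellPoisedLogDerivDeriv a r n (r * n + 1 + m)| ≤
      (1 - termRatio a r n m) ^ 2 * (2 * (1 + logRatioBound a r n) ^ 2 + 12 * (6 + a) ^ 2)
        + 6 * (6 + a) ^ 2 * 3 ^ a / n := by
  rcases Nat.eq_zero_or_pos m with rfl | hm
  · have hfirst := abs_wellPoisedLogDeriv_zero_le a hr hn
    have hsq := pow_le_pow_left₀ (abs_nonneg _) hfirst 2
    have hderiv := abs_wellPoisedLogDerivDeriv_zero_le a hr hn
    have hbound := logRatioBound_nonneg a r n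
    have herr : (0 : ℝ) ≤ 6 * (6 + a) ^ 2 * 3 ^ a / n := by positivity
    rw [termRatio_zero, sub_zero, one_pow, one_mul]
    refine (abs_add_le _ _).trans ?_
    rw [abs_pow]
    refine (add_le_add hsq hderiv).trans ?_
    nlinarith [a.cast_nonneg (α := ℝ), sq_nonneg (a : ℝ), sq_nonneg (logRatioBound a r n)]
  · exact abs_sq_add_le_of_one_le a hr hn hm

end LogDerivBound

section LinearFormSize

open Finset Filter Topology

variable {a r n : ℕ}

/-- The relative contribution of the second derivatives to the linear forms, of order
`(log n) ^ 2 / n`. -/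
noncomputable def secondDerivError (lam : ℝ) (a r n : ℕ) : ℝ :=
  |lam| * (((2 * (1 + logRatioBound a r n) ^ 2 + 12 * (6 + a) ^ 2) * (6 * 3 ^ a)
    + 6 * (6 + a) ^ 2 * 3 ^ a) / n)

lemma tendsto_log_mul_add_one_pow_div (hr : 1 ≤ r) (k : ℕ) :
    Tendsto (fun n : ℕ => Real.log (r * n + 1) ^ k / n) atTop (𝓝 0) := by
  have hr' : (r : ℝ) ≠ 0 := by positivity
  have hlin : Tendsto (fun n : ℕ => (r : ℝ) * n + 1) atTop atTop :=
    tendsto_atTop_add_const_right _ _ (tendsto_natCast_atTop_atTop.const_mul_atTop (by positivity))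
  refine ((Real.tendsto_pow_log_div_mul_add_atTop (1 / r) (-(1 / r)) k
    (one_div_ne_zero hr')).comp hlin).congr fun n => ?_
  have harg : (1 / r : ℝ) * (r * n + 1) + -(1 / r) = n := by
    field_simp
    ring
  rw [Function.comp_apply, harg]

lemma tendsto_secondDerivError (lam : ℝ) (a : ℕ) (hr : 1 ≤ r) :
    Tendsto (secondDerivError lam a r) atTop (𝓝 0) := by
  have hlog := tendsto_log_mul_add_one_pow_div hr
  have hlim := (((((hlog 0).const_mul (2 * (2 * a + 7) ^ 2 + 12 * (6 + a) ^ 2 : ℝ)).add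
    ((hlog 1).const_mul (12 * (2 * a + 7) : ℝ))).add ((hlog 2).const_mul 18)).mul_const
      (6 * 3 ^ a : ℝ)).add ((hlog 0).const_mul (6 * (6 + a) ^ 2 * 3 ^ a : ℝ))
  simpa using (hlim.const_mul |lam|).congr fun n => by
    rw [secondDerivError, logRatioBound]
    ring

lemma hasSum_deriv_deriv_wellPoisedTerm {lam T : ℝ} (hr : 1 ≤ r) (ha : 6 * r + 1 ≤ a)
    (hT : HasSum (fun k : ℕ =>
      2 * wellPoised a r n (k + 1) + lam * deriv (deriv (wellPoised a r n)) (k + 1)) T) :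
    HasSum (fun m : ℕ => lam * deriv (deriv (wellPoised a r n)) (r * n + 1 + m))
      (T - 2 * ∑' m, wellPoisedTerm a r n m) := by
  have hdiff := hT.sub ((hasSum_wellPoised n hr ha).mul_left 2)
  simp only [add_sub_cancel_left] at hdiff
  rw [← hasSum_nat_add_iff' (r * n), sum_eq_zero fun k hk => ?_, sub_zero] at hdiff
  · refine hdiff.congr_fun fun m => ?_
    push_cast
    rw [show (m : ℝ) + r * n + 1 = r * n + 1 + m by ring]
  · have hzero := deriv_deriv_wellPoised_natCast_eq_zero (r := r) (n := n) a k.succ_pos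
      (mem_range.mp hk)
    rw [Nat.succ_eq_add_one, Nat.cast_add_one] at hzero
    rw [hzero, mul_zero]

lemma abs_sub_two_mul_tsum_wellPoisedTerm_le {lam T : ℝ} (hr : 1 ≤ r) (hn : 1 ≤ n)
    (ha : 6 * r + 1 ≤ a) (hT : HasSum (fun k : ℕ =>
      2 * wellPoised a r n (k + 1) + lam * deriv (deriv (wellPoised a r n)) (k + 1)) T) :
    |T - 2 * ∑' m, wellPoisedTerm a r n m| ≤
      secondDerivError lam a r n * ∑' m, wellPoisedTerm a r n m := by
  set X := 2 * (1 + logRatioBound a r n) ^ 2 + 12 * (6 + (a : ℝ)) ^ 2 with hX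
  set Y := 6 * (6 + (a : ℝ)) ^ 2 * 3 ^ a with hY
  have : 0 ≤ X := by positivity
  obtain ⟨W, hW, hWsum⟩ := exists_hasSum_wellPoisedTerm_mul_one_sub_sq_le hr hn ha
  have hmajorant := ((hWsum.mul_right X).add
    ((summable_wellPoisedTerm n hr ha).hasSum.mul_right (Y / n))).mul_left |lam|
  have hterm : ∀ m : ℕ, ‖lam * deriv (deriv (wellPoised a r n)) (r * n + 1 + m)‖ ≤
      |lam| * (wellPoisedTerm a r n m * (1 - termRatio a r n m) ^ 2 * X
        + wellPoisedTerm a r n m * (Y / n)) := fun m => by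
    have hpos := wellPoisedTerm_pos a r n m
    have hm : (r : ℝ) * n < r * n + 1 + m := by linarith [m.cast_nonneg (α := ℝ)]
    rw [norm_mul, Real.norm_eq_abs, Real.norm_eq_abs, deriv_deriv_wellPoised a hm, ← wellPoisedTerm,
      abs_mul, abs_of_pos hpos, mul_assoc _ _ X, ← mul_add]
    gcongr
    exact abs_wellPoisedLogDeriv_sq_add_le a m hr hn
  have hsum := hasSum_deriv_deriv_wellPoisedTerm hr ha hT
  rw [← hsum.tsum_eq, ← Real.norm_eq_abs]
  calc _ ≤ |lam| * (W * X + (∑' m, wellPoisedTerm a r n m) * (Y / n)) :=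
        tsum_of_norm_bounded hmajorant hterm
    _ ≤ |lam| * (6 * 3 ^ a / n * (∑' m, wellPoisedTerm a r n m) * X
          + (∑' m, wellPoisedTerm a r n m) * (Y / n)) := by gcongr
    _ = _ := by
      rw [secondDerivError, ← hX, ← hY]
      ring

lemma tsum_wellPoisedTerm_pos (n : ℕ) (hr : 1 ≤ r) (ha : 6 * r + 1 ≤ a) :
    0 < ∑' m, wellPoisedTerm a r n m :=
  (summable_wellPoisedTerm n hr ha).tsum_pos (fun m => (wellPoisedTerm_pos a r n m).le) 0
    (wellPoisedTerm_pos a r n 0)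

lemma eventually_mem_Icc_tsum_wellPoisedTerm (lam : ℝ) (hr : 1 ≤ r) (ha : 6 * r + 1 ≤ a) :
    ∀ᶠ n in atTop, ∀ T, HasSum (fun k : ℕ =>
      2 * wellPoised a r n (k + 1) + lam * deriv (deriv (wellPoised a r n)) (k + 1)) T →
      T ∈ Set.Icc (∑' m, wellPoisedTerm a r n m) (3 * ∑' m, wellPoisedTerm a r n m) := by
  filter_upwards [(tendsto_secondDerivError lam a hr).eventually_le_const one_pos,
    eventually_ge_atTop 1] with n hsmall hn T hT
  have hpos := tsum_wellPoisedTerm_pos n hr ha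
  have hdist := (abs_sub_two_mul_tsum_wellPoisedTerm_le hr hn ha hT).trans
    (mul_le_of_le_one_left hpos.le hsmall)
  obtain ⟨hlow, hhigh⟩ := abs_le.mp hdist
  exact ⟨by linarith, by linarith⟩

end LinearFormSize

section GrowthRates

open Filter Topology

variable {a r : ℕ} {η : ℝ}

/-- Exponential growth rate in `n` of the integer coefficients of the linear forms attached to
`wellPoised a r n`, up to the loss `η`. -/
noncomputable def coeffRate (a r : ℕ) (η : ℝ) : ℝ :=
  (1 + η) * (a + 2) + (a - 6 * r) * Real.log 2 + 6 * r * Real.log (6 * (r + 1)) + η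

/-- Exponential decay rate in `n` of the linear forms attached to `wellPoised a r n`, up to the
loss `η`. -/
noncomputable def decayRate (a r : ℕ) (η : ℝ) : ℝ :=
  (a - 6 * r) * Real.log r - r * Real.log 27 - (1 + η) * (a + 2) - η

lemma coeffRate_nonneg (hη : 0 ≤ η) (ha : 6 * r ≤ a) : 0 ≤ coeffRate a r η := by
  have : (0 : ℝ) ≤ a - 6 * r := sub_nonneg.mpr (by exact_mod_cast ha)
  have : 0 ≤ Real.log (6 * (r + 1)) := Real.log_nonneg (by linarith [r.cast_nonneg (α := ℝ)])
  have : 0 ≤ Real.log 2 := Real.log_nonneg one_le_two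
  rw [coeffRate]
  positivity

lemma pow_mul_eq_exp {x : ℝ} (hx : 0 < x) (n k : ℕ) :
    x ^ (n * k) = Real.exp (k * Real.log x * n) := by
  rw [mul_assoc, mul_comm _ (n : ℝ), ← mul_assoc, mul_comm (k : ℝ), ← Nat.cast_mul,
    Real.exp_nat_mul, Real.exp_log hx]

lemma eventually_mul_add_one_pow_le_exp (C : ℝ) (k : ℕ) (hη : 0 < η) :
    ∀ᶠ n : ℕ in atTop, C * ((n : ℝ) + 1) ^ k ≤ Real.exp (η * n) := by
  have hlim := (((isLittleO_pow_exp_pos_mul_atTop k hη).tendsto_div_nhds_zero.comp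
    (tendsto_atTop_add_const_right _ 1 tendsto_natCast_atTop_atTop)).const_mul
      (C * Real.exp η))
  rw [mul_zero] at hlim
  filter_upwards [hlim.eventually_le_const one_pos] with n hn
  rw [Function.comp_apply, ← mul_div_assoc, div_le_one (Real.exp_pos _), mul_add, mul_one,
    Real.exp_add, mul_right_comm] at hn
  exact le_of_mul_le_mul_right hn (Real.exp_pos η)

lemma eventually_lcmUpto_pow_le_exp (a : ℕ) (hη : 0 < η) :
    ∀ᶠ n : ℕ in atTop, (Nat.lcmUpto n : ℝ) ^ (a + 2) ≤ Real.exp ((1 + η) * (a + 2) * n) := by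
  filter_upwards [eventually_lcmUpto_le_exp hη] with n hn
  calc (Nat.lcmUpto n : ℝ) ^ (a + 2) ≤ Real.exp ((1 + η) * n) ^ (a + 2) := by gcongr
    _ = Real.exp ((1 + η) * (a + 2) * n) := by
      rw [← Real.exp_nat_mul]
      push_cast
      ring_nf

lemma eventually_coeff_le_exp (hη : 0 < η) (ha : 6 * r ≤ a) :
    ∀ᶠ n : ℕ in atTop, (Nat.lcmUpto n : ℝ) ^ (a + 2) * (2 * ((((a : ℝ) + 1) ^ 2 * (n + 1) ^ 2) ^ a
      * ((2 ^ n) ^ (a - 6 * r) * ((6 * (r + 1)) ^ n) ^ (6 * r))) * (a + 2) ^ 3 * (n + 1) ^ 2)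
        ≤ Real.exp (coeffRate a r η * n) := by
  filter_upwards [eventually_lcmUpto_pow_le_exp a hη, eventually_mul_add_one_pow_le_exp
    (2 * (((a : ℝ) + 1) ^ 2) ^ a * (a + 2) ^ 3) (2 * a + 2) hη] with n hlcm hpoly
  rw [← pow_mul, ← pow_mul, pow_mul_eq_exp two_pos, pow_mul_eq_exp (by positivity),
    Nat.cast_sub ha]
  push_cast
  calc
    _ = (Nat.lcmUpto n : ℝ) ^ (a + 2)
        * (2 * (((a : ℝ) + 1) ^ 2) ^ a * (a + 2) ^ 3 * ((n : ℝ) + 1) ^ (2 * a + 2))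
        * (Real.exp ((a - 6 * r) * Real.log 2 * n)
          * Real.exp (6 * r * Real.log (6 * (r + 1)) * n)) := by
      rw [mul_pow, pow_add ((n : ℝ) + 1), pow_mul ((n : ℝ) + 1)]
      ring
    _ ≤ Real.exp ((1 + η) * (a + 2) * n) * Real.exp (η * n)
        * (Real.exp ((a - 6 * r) * Real.log 2 * n)
          * Real.exp (6 * r * Real.log (6 * (r + 1)) * n)) := by gcongr
    _ = Real.exp (coeffRate a r η * n) := by
      rw [coeffRate, ← Real.exp_add, ← Real.exp_add, ← Real.exp_add]
      ring_nf

lemma eventually_mul_tsum_wellPoisedTerm_le_exp (hη : 0 < η) (hr : 1 ≤ r) (ha : 6 * r + 1 ≤ a) :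
    ∀ᶠ n : ℕ in atTop, 3 * ((Nat.lcmUpto n : ℝ) ^ (a + 2) * ∑' m, wellPoisedTerm a r n m)
      ≤ Real.exp (-decayRate a r η * n) := by
  filter_upwards [eventually_lcmUpto_pow_le_exp a hη,
    eventually_mul_add_one_pow_le_exp 6 0 hη] with n hlcm hconst
  have hsum : ∑' m, wellPoisedTerm a r n m
      ≤ 2 * Real.exp (r * Real.log 27 * n - (a - 6 * r) * Real.log r * n) := by
    refine (tsum_wellPoisedTerm_le n hr ha).trans_eq ?_
    rw [mul_comm r n, pow_mul_eq_exp (by norm_num), pow_mul_eq_exp (by positivity),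
      Nat.cast_sub (by lia), ← Real.exp_sub]
    push_cast
    rfl
  calc
    _ ≤ 3 * (Real.exp ((1 + η) * (a + 2) * n)
        * (2 * Real.exp (r * Real.log 27 * n - (a - 6 * r) * Real.log r * n))) := by
      have := (tsum_wellPoisedTerm_pos n hr ha).le
      gcongr
    _ = 6 * (n + 1) ^ 0 * (Real.exp ((1 + η) * (a + 2) * n)
        * Real.exp (r * Real.log 27 * n - (a - 6 * r) * Real.log r * n)) := by ring
    _ ≤ Real.exp (η * n) * (Real.exp ((1 + η) * (a + 2) * n)
        * Real.exp (r * Real.log 27 * n - (a - 6 * r) * Real.log r * n)) := by gcongr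
    _ = Real.exp (-decayRate a r η * n) := by
      rw [decayRate, ← Real.exp_add, ← Real.exp_add]
      ring_nf

lemma monotone_lcmUpto : Monotone Nat.lcmUpto := fun _ _ h =>
  Nat.le_of_dvd (Nat.lcmUpto_pos _) <| Finset.lcm_dvd fun _ hb =>
    Finset.dvd_lcm (f := id) (Finset.Icc_subset_Icc_right h hb)

lemma lcmUpto_pow_mul_tsum_le {n : ℕ} (hr : 1 ≤ r) (hn : 2 ≤ n) (ha : 6 * r + 1 ≤ a) :
    (Nat.lcmUpto n : ℝ) ^ (a + 2) * ∑' m, wellPoisedTerm a r n m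
      ≤ 56 * r * a * (Real.exp 4 * (19 * r * a) ^ 2) ^ a
        * ((Nat.lcmUpto (n + 2) : ℝ) ^ (a + 2) * ∑' m, wellPoisedTerm a r (n + 2) m) := by
  have hlcm : (Nat.lcmUpto n : ℝ) ≤ Nat.lcmUpto (n + 2) :=
    Nat.cast_le.mpr (monotone_lcmUpto (Nat.le_add_right n 2))
  calc
    _ ≤ (Nat.lcmUpto (n + 2) : ℝ) ^ (a + 2) * (56 * r * a
        * ((Real.exp 4 * (19 * r * a) ^ 2) ^ a * ∑' m, wellPoisedTerm a r (n + 2) m)) := by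
      have := (tsum_wellPoisedTerm_pos n hr ha).le
      gcongr
      exact tsum_wellPoisedTerm_le_mul_add_two hr hn ha
    _ = _ := by ring

end GrowthRates

section Criterion

open Filter

variable {a r : ℕ} {η : ℝ}

lemma le_mul_finrank_sub_one_of_mem_Icc (V : Submodule ℚ ℝ) [FiniteDimensional ℚ V]
    {ι : Type*} [Fintype ι] {θ : ι → ℝ} (hθ : ∀ i, θ i ∈ V) {p : ℕ → ι → ℤ} {B : ℕ → ℝ}
    {α β K : ℝ} (hα : 0 < α) (hβ : 0 ≤ β) (hB : ∀ N, 0 < B N)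
    (hp : ∀ᶠ N : ℕ in atTop, ∀ i, |(p N i : ℝ)| ≤ Real.exp (β * N))
    (hmem : ∀ᶠ N in atTop, ∑ i, p N i * θ i ∈ Set.Icc (B N) (3 * B N))
    (hle : ∀ᶠ N : ℕ in atTop, 3 * B N ≤ Real.exp (-α * N))
    (hratio : ∀ᶠ N in atTop, B N ≤ K * B (N + 1)) :
    α ≤ β * (Module.finrank ℚ V - 1) := by
  obtain ⟨N₀, hN₀⟩ := hratio.exists
  have hK : 0 < K := pos_of_mul_pos_left ((hB N₀).trans_le hN₀) (hB (N₀ + 1)).le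
  have habs : ∀ᶠ N in atTop, |∑ i, p N i * θ i| = ∑ i, p N i * θ i :=
    hmem.mono fun N hN => abs_of_pos ((hB N).trans_le hN.1)
  refine le_mul_finrank_sub_one_of_forms V hθ hα hβ (c := 1 / (3 * K)) (by positivity)
    (fun N => rfl) hp (hmem.mono fun N hN => ((hB N).trans_le hN.1).ne') ?_ ?_
  · filter_upwards [hmem, hle, habs] with N hmem hle habs
    rw [habs]
    exact hmem.2.trans hle
  · filter_upwards [hmem, (tendsto_add_atTop_nat 1).eventually hmem, habs,
      (tendsto_add_atTop_nat 1).eventually habs, hratio] with N hmem hmem' habs habs' hratio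
    rw [habs, habs', one_div_mul_eq_div, div_le_iff₀' (by positivity)]
    calc ∑ i, p N i * θ i ≤ 3 * B N := hmem.2
      _ ≤ 3 * (K * ∑ i, p (N + 1) i * θ i) := by
        gcongr
        exact hratio.trans (mul_le_mul_of_nonneg_left hmem'.1 hK.le)
      _ = 3 * K * ∑ i, p (N + 1) i * θ i := by ring

lemma eventually_mem_Icc_of_hasSum_lcmUpto_pow_mul (lam : ℝ) (hr : 1 ≤ r) (ha : 6 * r + 1 ≤ a) :
    ∀ᶠ n : ℕ in atTop, ∀ T, HasSum (fun k : ℕ => (Nat.lcmUpto n : ℝ) ^ (a + 2)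
        * (2 * wellPoised a r n (k + 1) + lam * deriv (deriv (wellPoised a r n)) (k + 1))) T →
      T ∈ Set.Icc ((Nat.lcmUpto n : ℝ) ^ (a + 2) * ∑' m, wellPoisedTerm a r n m)
        (3 * ((Nat.lcmUpto n : ℝ) ^ (a + 2) * ∑' m, wellPoisedTerm a r n m)) := by
  filter_upwards [eventually_mem_Icc_tsum_wellPoisedTerm lam hr ha] with n hn T hT
  set d := (Nat.lcmUpto n : ℝ) ^ (a + 2)
  have hd₀ : 0 < d := pow_pos (Nat.cast_pos.mpr (Nat.lcmUpto_pos n)) _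
  obtain ⟨hlow, hupp⟩ := hn (d⁻¹ * T) <| (hT.mul_left d⁻¹).congr_fun fun k =>
    (inv_mul_cancel_left₀ hd₀.ne' _).symm
  rw [inv_mul_eq_div] at hlow hupp
  rw [le_div_iff₀' hd₀] at hlow
  rw [div_le_iff₀' hd₀, mul_left_comm] at hupp
  exact ⟨hlow, hupp⟩

lemma exists_int_linearForm_wellPoised (lam : ℝ) (ha : Odd a) (hr : 1 ≤ r) (har : 6 * r + 1 ≤ a)
    {n : ℕ} (hn : Even n) :
    ∃ p : Fin 2 ⊕ Fin a → ℤ,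
      (∀ i, |(p i : ℝ)| ≤ (Nat.lcmUpto n : ℝ) ^ (a + 2)
        * (2 * ((((a : ℝ) + 1) ^ 2 * (n + 1) ^ 2) ^ a
          * ((2 ^ n) ^ (a - 6 * r) * ((6 * (r + 1)) ^ n) ^ (6 * r))) * (a + 2) ^ 3 * (n + 1) ^ 2)) ∧
      HasSum (fun k : ℕ => (Nat.lcmUpto n : ℝ) ^ (a + 2)
        * (2 * wellPoised a r n (k + 1) + lam * deriv (deriv (wellPoised a r n)) (k + 1)))
        (∑ i, p i * zetaPairFamily lam a i) :=
  exists_int_linearForm_of_neg_reflection lam (hasPartialFractions_wellPoised n har) ha.pos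
    (wellPoised_neg_sub ha hn) (tendsto_natCast_mul_wellPoised n hr har)

lemma decayRate_le_coeffRate_mul (lam : ℝ) (ha : Odd a) (hr : 1 ≤ r) (har : 6 * r + 1 ≤ a)
    (hη : 0 < η) (hdecay : 0 < decayRate a r η) (V : Submodule ℚ ℝ) [FiniteDimensional ℚ V]
    (hV : ∀ i, zetaPairFamily lam a i ∈ V) :
    decayRate a r η ≤ coeffRate a r η * (Module.finrank ℚ V - 1) := by
  choose p hp hsum using fun N : ℕ =>
    exists_int_linearForm_wellPoised lam ha hr har (even_two_mul N)
  have htwo : Tendsto (fun N : ℕ => 2 * N) atTop atTop := tendsto_id.const_mul_atTop' two_pos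
  have hcast (x : ℝ) (N : ℕ) : x * (2 * N : ℕ) = 2 * x * N := by push_cast; ring
  have hcrit : 2 * decayRate a r η ≤ 2 * coeffRate a r η * (Module.finrank ℚ V - 1) := by
    refine le_mul_finrank_sub_one_of_mem_Icc V hV (p := p) (by positivity)
      (mul_nonneg zero_le_two (coeffRate_nonneg hη.le (by lia)))
      (K := 56 * r * a * (Real.exp 4 * (19 * r * a) ^ 2) ^ a)
      (B := fun N => (Nat.lcmUpto (2 * N) : ℝ) ^ (a + 2) * ∑' m, wellPoisedTerm a r (2 * N) m)
      (fun N => mul_pos (pow_pos (Nat.cast_pos.mpr (Nat.lcmUpto_pos _)) _)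
        (tsum_wellPoisedTerm_pos _ hr har)) ?_ ?_ ?_ ?_
    · filter_upwards [htwo.eventually (eventually_coeff_le_exp hη (a := a) (r := r) (by lia))]
        with N hN i
      exact hcast (coeffRate a r η) N ▸ (hp N i).trans hN
    · filter_upwards [htwo.eventually
        (eventually_mem_Icc_of_hasSum_lcmUpto_pow_mul lam hr har)] with N hN
      exact hN _ (hsum N)
    · filter_upwards [htwo.eventually (eventually_mul_tsum_wellPoisedTerm_le_exp hη hr har)]
        with N hN
      rwa [← mul_neg, ← hcast]
    · filter_upwards [eventually_ge_atTop 1] with N hN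
      exact lcmUpto_pow_mul_tsum_le hr (by lia) har
  linarith

end Criterion

section ParameterChoice

open Filter

variable {a r : ℕ} {δ : ℝ}

lemma six_mul_le_six_mul_log (r : ℕ) : 6 * (r : ℝ) ≤ 6 * r * Real.log (6 * (r + 1)) := by
  refine le_mul_of_one_le_right (by positivity) ?_
  rw [Real.le_log_iff_exp_le (by positivity)]
  linarith [Real.exp_one_lt_three, r.cast_nonneg (α := ℝ)]

lemma eventually_log_twelve_mul_le_rpow (hδ : 0 < δ) :
    ∀ᶠ a : ℕ in atTop, 6 * Real.log (12 * a) ≤ δ * (a : ℝ) ^ δ := by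
  have hlim : Tendsto (fun a : ℕ => 12 * (a : ℝ)) atTop atTop :=
    tendsto_natCast_atTop_atTop.const_mul_atTop (by norm_num)
  filter_upwards [hlim.eventually ((isLittleO_log_rpow_atTop hδ).bound
    (c := δ / (6 * 12 ^ δ)) (by positivity))] with a ha
  rw [Real.norm_of_nonneg (by positivity : (0 : ℝ) ≤ (12 * a) ^ δ),
    Real.mul_rpow (by norm_num) a.cast_nonneg] at ha
  calc 6 * Real.log (12 * a) ≤ 6 * (δ / (6 * 12 ^ δ) * (12 ^ δ * (a : ℝ) ^ δ)) := by
        gcongr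
        exact (Real.le_norm_self _).trans ha
    _ = δ * (a : ℝ) ^ δ := by field_simp

-- The witness is `r = ⌊a ^ (1 - δ)⌋`.
lemma eventually_exists_mul_log_le (hδ : 0 < δ) (hδ₁ : δ ≤ 1) :
    ∀ᶠ a : ℕ in atTop, ∃ r : ℕ, 1 ≤ r ∧ 6 * r * Real.log (6 * (r + 1)) ≤ δ * a ∧
      (1 - 2 * δ) * Real.log a ≤ Real.log r := by
  have hlog := (Real.tendsto_log_atTop.comp tendsto_natCast_atTop_atTop).eventually_ge_atTop
    (Real.log 2 / δ)
  filter_upwards [eventually_log_twelve_mul_le_rpow hδ, hlog, eventually_ge_atTop 1]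
    with a hpow hlog ha
  rw [Function.comp_apply, div_le_iff₀' hδ] at hlog
  have ha₁ : (1 : ℝ) ≤ a := Nat.one_le_cast.mpr ha
  set y : ℝ := (a : ℝ) ^ (1 - δ) with hy
  have hy₁ : 1 ≤ y := Real.one_le_rpow ha₁ (by linarith)
  have hya : y ≤ a := Real.rpow_le_self_of_one_le ha₁ (by linarith)
  have hfloor : (⌊y⌋₊ : ℝ) ≤ y := Nat.floor_le (by positivity)
  have : 0 ≤ Real.log (6 * (⌊y⌋₊ + 1)) :=
    Real.log_nonneg (by linarith [⌊y⌋₊.cast_nonneg (α := ℝ)])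
  refine ⟨⌊y⌋₊, (Nat.one_le_floor_iff y).mpr hy₁, ?_, ?_⟩
  · calc 6 * ⌊y⌋₊ * Real.log (6 * (⌊y⌋₊ + 1)) ≤ y * (6 * Real.log (12 * a)) := by
          rw [mul_comm 6, mul_assoc]
          gcongr ?_ * (6 * Real.log ?_)
          linarith
      _ ≤ y * (δ * (a : ℝ) ^ δ) := by gcongr
      _ = δ * a := by
          rw [mul_left_comm, hy, ← Real.rpow_add (by positivity), sub_add_cancel, Real.rpow_one]
  · calc (1 - 2 * δ) * Real.log a ≤ (1 - δ) * Real.log a - Real.log 2 := by linarith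
      _ = Real.log (y / 2) := by
          rw [Real.log_div (by positivity) two_ne_zero, hy, Real.log_rpow (by positivity)]
      _ ≤ Real.log ⌊y⌋₊ := Real.log_le_log (by positivity) (Nat.div_two_lt_floor hy₁).le

lemma coeffRate_le (hδ : 0 ≤ δ) (ha : 2 + 3 * δ ≤ δ * a)
    (hr : 6 * r * Real.log (6 * (r + 1)) ≤ δ * a) :
    coeffRate a r δ ≤ a * ((1 + Real.log 2) * (1 + 3 * δ)) := by
  have : 0 ≤ Real.log 2 := Real.log_nonneg one_le_two
  have : 0 ≤ 6 * r * Real.log 2 := by positivity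
  have : 0 ≤ a * Real.log 2 * δ := by positivity
  rw [coeffRate]
  linarith

lemma le_decayRate (hδ : 0 ≤ δ) (hδ₁ : δ ≤ 1 / 2) (ha : 2 + 3 * δ ≤ δ * a)
    (hlog : 5 ≤ δ * Real.log a) (hr : 6 * r ≤ δ * a)
    (hlogr : (1 - 2 * δ) * Real.log a ≤ Real.log r) :
    (1 - 4 * δ) * (a * Real.log a) ≤ decayRate a r δ := by
  have hlog₀ : 0 ≤ Real.log a := by nlinarith
  have hlead : (1 - δ) * a * ((1 - 2 * δ) * Real.log a) ≤ (a - 6 * r) * Real.log r :=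
    mul_le_mul (by linarith) hlogr (mul_nonneg (by linarith) hlog₀) (by nlinarith)
  have hsmall : r * Real.log 27 + (1 + δ) * (a + 2) + δ ≤ δ * (a * Real.log a) := by
    have : r * Real.log 27 ≤ r * (27 - 1) := by
      gcongr
      exact Real.log_le_sub_one_of_pos (by norm_num)
    have : a * 5 ≤ a * (δ * Real.log a) := by gcongr
    have : δ * a ≤ 1 / 2 * a := by gcongr
    linarith
  have : 0 ≤ δ ^ 2 * (a * Real.log a) := by positivity
  rw [decayRate]
  linarith

end ParameterChoice

section Dimension

open Filter

/-- The set of the numbers whose `ℚ`-span is studied: `1`, `λ` and `ζ(i) + i(i+1)/2 · λ · ζ(i+2)`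
for `i` odd, `3 ≤ i ≤ a`. -/
def zetaPairSet (lam : ℝ) (a : ℕ) : Set ℝ :=
  {1, lam} ∪ {x | ∃ i : ℕ, Odd i ∧ 3 ≤ i ∧ i ≤ a ∧
    x = zeta i + ((i : ℝ) * (i + 1) / 2) * lam * zeta (i + 2)}

lemma finite_zetaPairSet (lam : ℝ) (a : ℕ) : (zetaPairSet lam a).Finite := by
  refine (Set.toFinite _).union (((Set.finite_Iic a).image fun i : ℕ =>
    zeta i + ((i : ℝ) * (i + 1) / 2) * lam * zeta (i + 2)).subset ?_)
  rintro x ⟨i, -, -, hi, rfl⟩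
  exact ⟨i, hi, rfl⟩

lemma zetaPairFamily_mem_span (lam : ℝ) (a : ℕ) (i : Fin 2 ⊕ Fin a) :
    zetaPairFamily lam a i ∈ Submodule.span ℚ (zetaPairSet lam a) := by
  rcases i with i | i
  · refine Submodule.subset_span (Or.inl ?_)
    fin_cases i <;> simp [zetaPairFamily]
  · rw [zetaPairFamily, Sum.elim_inr, oddZetaPair]
    split_ifs with h
    · exact Submodule.subset_span (Or.inr ⟨i + 1, h.1, h.2, i.isLt, rfl⟩)
    · exact Submodule.zero_mem _

lemma one_sub_mul_log_le_finrank {lam δ : ℝ} {a r : ℕ} (hδ : 0 < δ) (hδ₁ : 7 * δ ≤ 1)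
    (hodd : Odd a) (hlarge : 2 + 3 * δ ≤ δ * a) (hlog : 5 ≤ δ * Real.log a) (hr : 1 ≤ r)
    (hrδ : 6 * r * Real.log (6 * (r + 1)) ≤ δ * a) (hlogr : (1 - 2 * δ) * Real.log a ≤ Real.log r)
    (V : Submodule ℚ ℝ) [FiniteDimensional ℚ V] (hV : ∀ i, zetaPairFamily lam a i ∈ V) :
    (1 - 7 * δ) * Real.log a / (1 + Real.log 2) ≤ Module.finrank ℚ V := by
  have hr6 : 6 * (r : ℝ) ≤ δ * a := (six_mul_le_six_mul_log r).trans hrδ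
  have har : 6 * r + 1 ≤ a := by
    have : 6 * (r : ℝ) + 1 ≤ a := by nlinarith
    exact_mod_cast this
  have : 0 ≤ Real.log 2 := Real.log_nonneg one_le_two
  have hlog₀ : 0 < Real.log a := by nlinarith
  have ha : (0 : ℝ) < a := Nat.cast_pos.mpr hodd.pos
  have hdecay := le_decayRate hδ.le (by linarith) hlarge hlog hr6 hlogr
  have hpos : 0 < (1 - 4 * δ) * (a * Real.log a) := mul_pos (by linarith) (by positivity)
  let D : ℝ := Module.finrank ℚ V
  change _ ≤ D
  have hD : (1 - 4 * δ) * (a * Real.log a) ≤ a * ((1 + Real.log 2) * (1 + 3 * δ)) * D := calc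
    _ ≤ coeffRate a r δ * (D - 1) :=
      hdecay.trans (decayRate_le_coeffRate_mul lam hodd hr har hδ (hpos.trans_le hdecay) V hV)
    _ ≤ coeffRate a r δ * D := by
      have := coeffRate_nonneg hδ.le (show 6 * r ≤ a by lia)
      gcongr
      exact sub_le_self D zero_le_one
    _ ≤ a * ((1 + Real.log 2) * (1 + 3 * δ)) * D := by
      gcongr
      exact coeffRate_le hδ.le hlarge hrδ
  rw [div_le_iff₀ (by positivity)]
  refine le_of_mul_le_mul_left ?_ (by positivity : 0 < 1 + 3 * δ)
  calc (1 + 3 * δ) * ((1 - 7 * δ) * Real.log a)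
      = (1 - 4 * δ) * Real.log a - 21 * δ ^ 2 * Real.log a := by ring
    _ ≤ (1 - 4 * δ) * Real.log a := sub_le_self _ (by positivity)
    _ ≤ (1 + 3 * δ) * (D * (1 + Real.log 2)) := le_of_mul_le_mul_left (by linarith) ha

lemma eventually_one_sub_mul_log_le_finrank (lam : ℝ) {ε : ℝ} (hε : 0 < ε) (hε₁ : ε ≤ 1) :
    ∀ᶠ a : ℕ in atTop, Odd a → ∀ (V : Submodule ℚ ℝ) [FiniteDimensional ℚ V],
      (∀ i, zetaPairFamily lam a i ∈ V) →
        (1 - ε) * Real.log a / (1 + Real.log 2) ≤ Module.finrank ℚ V := by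
  obtain ⟨δ, hδ, rfl⟩ : ∃ δ, 0 < δ ∧ ε = 7 * δ := ⟨ε / 7, by positivity, by ring⟩
  have hlarge := tendsto_natCast_atTop_atTop.eventually_ge_atTop ((2 + 3 * δ) / δ)
  have hlog := (Real.tendsto_log_atTop.comp tendsto_natCast_atTop_atTop).eventually_ge_atTop (5 / δ)
  filter_upwards [eventually_exists_mul_log_le hδ (by linarith), hlarge, hlog]
    with a ⟨r, hr, hrδ, hlogr⟩ hlarge hlog hodd V _ hV
  exact one_sub_mul_log_le_finrank hδ hε₁ hodd ((div_le_iff₀' hδ).mp hlarge)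
    ((div_le_iff₀' hδ).mp hlog) hr hrδ hlogr V hV

end Dimension

/-- For every real λ and every ε > 0 there exists A such that for every odd a ≥ A, the
ℚ-dimension of the span of 1, λ, and ζ(i) + (i(i+1)/2)·λ·ζ(i+2) for odd 3 ≤ i ≤ a, is at
least (1−ε)·(log a)/(1+log 2). -/
theorem stmt2 (lam : ℝ) :
    ∀ ε : ℝ, 0 < ε → ∃ A : ℕ, ∀ a : ℕ, Odd a → A ≤ a →
      (1 - ε) * Real.log a / (1 + Real.log 2) ≤
        (Module.finrank ℚ (Submodule.span ℚ
          (({1, lam} : Set ℝ) ∪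
            {x : ℝ | ∃ i : ℕ, Odd i ∧ 3 ≤ i ∧ i ≤ a ∧
              x = zeta i + ((i : ℝ) * (i + 1) / 2) * lam * zeta (i + 2)})) : ℝ) := by
  intro ε hε
  obtain ⟨A, hA⟩ := Filter.eventually_atTop.mp
    (eventually_one_sub_mul_log_le_finrank lam (lt_min hε one_pos) (min_le_right ε 1))
  refine ⟨A, fun a hodd ha => ?_⟩
  have : FiniteDimensional ℚ (Submodule.span ℚ (zetaPairSet lam a)) :=
    FiniteDimensional.span_of_finite ℚ (finite_zetaPairSet lam a)
  have : 0 ≤ Real.log 2 := Real.log_nonneg one_le_two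
  calc (1 - ε) * Real.log a / (1 + Real.log 2)
      ≤ (1 - min ε 1) * Real.log a / (1 + Real.log 2) := by
        have : 0 ≤ Real.log a := Real.log_natCast_nonneg a
        gcongr
        exact min_le_left ε 1
    _ ≤ _ := hA a ha hodd _ (zetaPairFamily_mem_span lam a)
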